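/- arXiv:1603.06712 — 2 statements merged into one kernel-verified Lean document; each statement's English description precedes it below -/
import Mathlib

section
/- There exists a connected graph G of bounded degree (i.e., all vertex degrees are at most some fixed D ∈ ℕ) such that: (1) G is Gromov-hyperbolic; (2) any two geodesic rays of G eventually coincide (in particular, for every vertex there is exactly one geodesic ray starting at it); (3) G is transient; (4) every subtree of G is recurrent; and (5) G is Liouville. -/
/-!
The graph is a horoball over a half-line, thickened by words. A vertex `(k, x, z)` has a height
`k`, a position `x` on a grid of mesh `2 ^ k`, and a word `z` of length `Nat.size x` over an alphabet
of `256` letters. It is joined to its parent `(k + 1, x / 2, z)` with the last letter of `z` deleted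
and to its horizontal neighbours at `x ± 1`, the word gaining or losing its first letter when `x`
crosses a power of two. The shell of a vertex is `k + Nat.size x`; parents stay in the same shell
until they reach the spine `x = 0`. In the narrow shells, namely those in
`[1024 ^ i, 1024 ^ i + 2 * 32 ^ i]` with `i ≥ 1`, only vertices of depth `Nat.size x ≤ i` are kept.

* Hyperbolicity and rays: the parent map contracts horizontal chains (`HW.contract`), so that up to
  bounded error `d(u, v) = 2 * meet u v - lev u - lev v`, where `meet` is the first height at which the
  ancestors of `u` and `v` are close, and `meet` is almost ultrametric. A geodesic ray makes boundedly
  many horizontal steps, hence is eventually a sequence of parents (`ray_eventually_par`).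
* Transience (`sou_transient`): the flow sweeps the positions from left to right with uniformly
  random words, at height `0` outside the narrow regions and at depth `i` inside. At positions of
  size `s` it spreads over `256 ^ s` words and is active at `O(64 ^ s)` heights, so its energy there
  is `O(4 ^ (-s))`, which is summable over `x` because `2 ^ s > x`.
* Subtrees (`tree_recurrent`): a flow in a tree is carried, in each of the first `m` generations, by
  at most as many vertices as the shell `m` has. The shell `1024 ^ i` has at most `512 ^ i` vertices,
  so the energy is at least of order `2 ^ i` for every `i`.
* Liouville (`liouville_bound`): if `h` is bounded harmonic and not constant, the maximum principle
  yields a definite gradient in each narrow shell, since these have depth `i`. Caccioppoli's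
  inequality over the narrow region of width `32 ^ i` bounds this gradient by
  `O(i * 512 ^ i / 1024 ^ i)`, a contradiction for large `i`.
-/

/-!
STATEMENT 0: There exists a connected graph G of bounded degree such that:
(1) G is Gromov-hyperbolic; (2) any two geodesic rays of G eventually coincide
(in particular, for every vertex there is exactly one geodesic ray starting at it);
(3) G is transient; (4) every subtree of G is recurrent; and (5) G is Liouville.
-/

namespace Paper

variable {V : Type*}

/-- A flow on a graph: antisymmetric and supported on edges. -/
def IsFlow (G : SimpleGraph V) (θ : V → V → ℝ) : Prop :=
  (∀ u v, θ u v = -θ v u) ∧ ∀ u v, θ u v ≠ 0 → G.Adj u v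

/-- The net outflow (divergence) of `θ` at a vertex. -/
noncomputable def divg (θ : V → V → ℝ) (v : V) : ℝ := ∑' w, θ v w

/-- Transience via Lyons' criterion: there is a unit flow from some vertex to
infinity of finite energy. -/
def Transient (G : SimpleGraph V) : Prop :=
  ∃ (o : V) (θ : V → V → ℝ), IsFlow G θ ∧ divg θ o = 1 ∧
    (∀ v, v ≠ o → divg θ v = 0) ∧
    Summable (fun p : V × V => θ p.1 p.2 ^ 2)

/-- All vertex degrees are bounded by some fixed `D`. -/
def BoundedDegree (G : SimpleGraph V) : Prop :=
  ∃ D : ℕ, ∀ v, (G.neighborSet v).Finite ∧ (G.neighborSet v).ncard ≤ D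

/-- The Gromov product `(x|y)_w` with respect to the graph distance. -/
noncomputable def GromovProduct (G : SimpleGraph V) (w x y : V) : ℝ :=
  ((G.dist x w : ℝ) + (G.dist y w : ℝ) - (G.dist x y : ℝ)) / 2

/-- Gromov-hyperbolicity of the vertex set with the graph metric. -/
def GromovHyperbolic (G : SimpleGraph V) : Prop :=
  ∃ δ : ℝ, 0 ≤ δ ∧ ∀ w x y z : V,
    min (GromovProduct G w x z) (GromovProduct G w y z) - δ ≤ GromovProduct G w x y

/-- `h` is harmonic: at each vertex, `deg v · h v` equals the sum of `h` over
the neighbours of `v`. -/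
def Harmonic (G : SimpleGraph V) (h : V → ℝ) : Prop :=
  ∀ v, ((G.neighborSet v).ncard : ℝ) * h v = ∑ᶠ w ∈ G.neighborSet v, h w

/-- Every bounded harmonic function is constant. -/
def Liouville (G : SimpleGraph V) : Prop :=
  ∀ h : V → ℝ, Harmonic G h → (∃ M : ℝ, ∀ v, |h v| ≤ M) → ∀ u v, h u = h v

/-- A geodesic ray: an infinite path along edges with `d(x 0, x n) = n`. -/
def IsGeodesicRay (G : SimpleGraph V) (x : ℕ → V) : Prop :=
  (∀ i, G.Adj (x i) (x (i + 1))) ∧ ∀ n, G.dist (x 0) (x n) = n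

/-! ### The graph -/

/-- The index `i` of the block `[1024 ^ i, 1024 ^ (i + 1))` of shells containing the shell `m`. -/
def stage (m : ℕ) : ℕ := Nat.log 1024 m

/-- The narrow shells: an initial segment of length `2 * 32 ^ i` of each block
`[1024 ^ i, 1024 ^ (i + 1))`, `i ≥ 1`. -/
def Narrow (m : ℕ) : Prop := 1 ≤ stage m ∧ m ≤ 1024 ^ stage m + 2 * 32 ^ stage m

instance (m : ℕ) : Decidable (Narrow m) := by unfold Narrow; infer_instance

/-- The depth of the shell `m`: only `i` in a narrow shell of stage `i`, and maximal otherwise. -/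
def cap (m : ℕ) : ℕ := if Narrow m then stage m else m

/-- The triples `(k, x, z)` which are vertices of the graph: `k` is the height, `x` is a position
on the half-line, measured in units of `2 ^ k`, and `z` encodes a word of length `Nat.size x` over
an alphabet of `256` letters. Such a triple lies in the shell `k + Nat.size x`, at depth
`Nat.size x`, and the depth has to respect `cap`. -/
def Valid (q : ℕ × ℕ × ℕ) : Prop :=
  q.2.2 < 256 ^ Nat.size q.2.1 ∧ Nat.size q.2.1 ≤ cap (q.1 + Nat.size q.2.1)

/-- The vertex set of the graph. -/
def Vx : Type := {q : ℕ × ℕ × ℕ // Valid q}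

namespace Vx

/-- The height of a vertex. -/
def lev (v : Vx) : ℕ := v.1.1
/-- The horizontal position of a vertex. -/
def pos (v : Vx) : ℕ := v.1.2.1
/-- The code of the word of a vertex. -/
def word (v : Vx) : ℕ := v.1.2.2
/-- The shell of a vertex. -/
def shell (v : Vx) : ℕ := v.lev + Nat.size v.pos

theorem word_lt (v : Vx) : v.word < 256 ^ Nat.size v.pos := v.2.1
theorem size_le_cap (v : Vx) : Nat.size v.pos ≤ cap v.shell := v.2.2

theorem ext' {u v : Vx} (h1 : u.lev = v.lev) (h2 : u.pos = v.pos) (h3 : u.word = v.word) :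
    u = v := Subtype.ext (Prod.ext h1 (Prod.ext h2 h3))

end Vx

theorem size_half (x : ℕ) : Nat.size (x / 2) = Nat.size x - 1 := by
  apply le_antisymm
  · rw [Nat.size_le]
    have h := Nat.lt_size_self x
    rcases Nat.eq_zero_or_pos (Nat.size x) with h0 | h0
    · rw [h0] at h ⊢
      simp at h
      simp [h]
    · obtain ⟨s, hs⟩ : ∃ s, Nat.size x = s + 1 := ⟨Nat.size x - 1, by omega⟩
      rw [hs, pow_succ] at h
      rw [hs]
      simp only [Nat.add_sub_cancel]
      omega
  · have h : Nat.size x ≤ Nat.size (x / 2) + 1 := by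
      rw [Nat.size_le, pow_succ]
      have := Nat.lt_size_self (x / 2)
      omega
    omega

theorem size_two_mul {y : ℕ} (h : 0 < y) : Nat.size (2 * y) = Nat.size y + 1 := by
  have h1 := size_half (2 * y)
  have h2 : 0 < Nat.size (2 * y) := Nat.size_pos.2 (by omega)
  have h3 : 2 * y / 2 = y := by omega
  rw [h3] at h1
  omega

theorem size_two_mul_add_one (y : ℕ) : Nat.size (2 * y + 1) = Nat.size y + 1 := by
  have h1 := size_half (2 * y + 1)
  have h2 : 0 < Nat.size (2 * y + 1) := Nat.size_pos.2 (by omega)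
  have h3 : (2 * y + 1) / 2 = y := by omega
  rw [h3] at h1
  omega

theorem size_succ_le (x : ℕ) : Nat.size (x + 1) ≤ Nat.size x + 1 := by
  rw [Nat.size_le, pow_succ]
  have := Nat.lt_size_self x
  omega

/-- `Nat.size` only jumps at powers of two. -/
theorem size_succ_cases (x : ℕ) :
    (Nat.size (x + 1) = Nat.size x ∧ x + 1 ≠ 2 ^ Nat.size x) ∨
      (Nat.size (x + 1) = Nat.size x + 1 ∧ x + 1 = 2 ^ Nat.size x) := by
  have h1 := size_succ_le x
  have h2 := Nat.size_le_size (Nat.le_succ x)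
  have h3 := Nat.lt_size_self x
  by_cases h : x + 1 = 2 ^ Nat.size x
  · right
    have h4 : Nat.size x < Nat.size (x + 1) := by
      rw [Nat.lt_size]; omega
    exact ⟨by omega, h⟩
  · left
    have h4 : Nat.size (x + 1) ≤ Nat.size x := by
      rw [Nat.size_le]; omega
    simp only [Nat.succ_eq_add_one] at h2
    exact ⟨by omega, h⟩

namespace Vx

theorem word_eq_zero_of_pos {v : Vx} (h : v.pos = 0) : v.word = 0 := by
  have := v.word_lt
  rw [h] at this
  simpa using this

theorem parent_valid (v : Vx) : Valid (v.lev + 1, v.pos / 2, v.word / 256) := by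
  have h1 := v.word_lt
  have h2 := v.size_le_cap
  unfold Valid
  simp only [size_half]
  unfold shell at h2
  rcases Nat.eq_zero_or_pos (Nat.size v.pos) with h0 | h0
  · rw [h0] at h1 ⊢
    have : v.word = 0 := by simpa using h1
    rw [this]
    simp
  · obtain ⟨s, hs⟩ : ∃ s, Nat.size v.pos = s + 1 := ⟨Nat.size v.pos - 1, by omega⟩
    rw [hs] at h1 h2 ⊢
    rw [pow_succ] at h1
    refine ⟨Nat.div_lt_of_lt_mul (by simpa [mul_comm] using h1), ?_⟩
    have e : v.lev + 1 + (s + 1 - 1) = v.lev + (s + 1) := by omega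
    rw [e]
    omega

/-- The parent of a vertex: one level up, on the grid which is coarser by a factor two, and with
the last letter of the word removed. -/
def par (v : Vx) : Vx := ⟨(v.lev + 1, v.pos / 2, v.word / 256), v.parent_valid⟩

@[simp] theorem lev_par (v : Vx) : v.par.lev = v.lev + 1 := rfl
@[simp] theorem pos_par (v : Vx) : v.par.pos = v.pos / 2 := rfl
@[simp] theorem word_par (v : Vx) : v.par.word = v.word / 256 := rfl

/-- `u` is the left neighbour of `v`: same height, position one smaller; the word loses its first
letter exactly when the position drops below a power of two. -/
def Left (u v : Vx) : Prop :=
  u.lev = v.lev ∧ v.pos = u.pos + 1 ∧ u.word = v.word % 256 ^ Nat.size u.pos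

theorem Left.unique {u u' v : Vx} (h : Left u v) (h' : Left u' v) : u = u' := by
  obtain ⟨a, b, c⟩ := h
  obtain ⟨a', b', c'⟩ := h'
  have e : u.pos = u'.pos := by omega
  refine ext' (by omega) e ?_
  rw [c, c', e]

/-- Horizontal adjacency. -/
def Hor (u v : Vx) : Prop := Left u v ∨ Left v u

theorem Hor.symm {u v : Vx} (h : Hor u v) : Hor v u := Or.symm h
theorem Hor.lev_eq {u v : Vx} (h : Hor u v) : u.lev = v.lev := by
  rcases h with h | h
  · exact h.1
  · exact h.1.symm

theorem Left.par_eq {u v : Vx} (h : Left u v) (he : u.pos % 2 = 0) : u.par = v.par := by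
  obtain ⟨a, b, c⟩ := h
  refine ext' (by simp [a]) (by simp only [pos_par]; omega) ?_
  simp only [word_par]
  rcases Nat.eq_zero_or_pos u.pos with h0 | h0
  · have h1 := v.word_lt
    rw [b, h0] at h1
    have : Nat.size (0 + 1) = 1 := by simp
    rw [this] at h1
    rw [word_eq_zero_of_pos h0]
    omega
  · obtain ⟨y, hy⟩ : ∃ y, u.pos = 2 * y := ⟨u.pos / 2, by omega⟩
    have h1 := v.word_lt
    rw [b, hy, size_two_mul_add_one] at h1
    rw [hy, size_two_mul (by omega), Nat.mod_eq_of_lt h1] at c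
    rw [c]

theorem Left.par_left {u v : Vx} (h : Left u v) (he : u.pos % 2 = 1) : Left u.par v.par := by
  obtain ⟨a, b, c⟩ := h
  obtain ⟨y, hy⟩ : ∃ y, u.pos = 2 * y + 1 := ⟨u.pos / 2, by omega⟩
  refine ⟨by simp [a], by simp only [pos_par]; omega, ?_⟩
  have e : (2 * y + 1) / 2 = y := by omega
  simp only [word_par, pos_par]
  rw [hy, size_two_mul_add_one, pow_succ'] at c
  rw [c, hy, e, Nat.mod_mul_right_div_self]

/-- The parent map sends horizontal edges to horizontal edges or to points. -/
theorem Hor.par {u v : Vx} (h : Hor u v) : u.par = v.par ∨ Hor u.par v.par := by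
  rcases h with h | h
  · rcases Nat.mod_two_eq_zero_or_one u.pos with e | e
    · exact Or.inl (h.par_eq e)
    · exact Or.inr (Or.inl (h.par_left e))
  · rcases Nat.mod_two_eq_zero_or_one v.pos with e | e
    · exact Or.inl (h.par_eq e).symm
    · exact Or.inr (Or.inr (h.par_left e))

end Vx
open Vx

/-- The graph: every vertex is joined to its parent and to its horizontal neighbours. -/
def Sou : SimpleGraph Vx where
  Adj u v := Hor u v ∨ v = u.par ∨ u = v.par
  symm := ⟨fun u v h => by
    rcases h with h | h | h
    · exact Or.inl h.symm
    · exact Or.inr (Or.inr h)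
    · exact Or.inr (Or.inl h)⟩
  loopless := ⟨fun u h => by
    rcases h with (h | h) | h | h
    · have := h.2.1; omega
    · have := h.2.1; omega
    · have := congrArg lev h; simp at this
    · have := congrArg lev h; simp at this⟩

theorem adj_par (v : Vx) : Sou.Adj v v.par := Or.inr (Or.inl rfl)
theorem Vx.Hor.adj {u v : Vx} (h : Hor u v) : Sou.Adj u v := Or.inl h

theorem lev_iter (v : Vx) (n : ℕ) : (par^[n] v).lev = v.lev + n := by
  induction n with
  | zero => rfl
  | succ n ih => rw [Function.iterate_succ_apply', lev_par, ih]; omega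

theorem pos_iter (v : Vx) (n : ℕ) : (par^[n] v).pos = v.pos / 2 ^ n := by
  induction n with
  | zero => simp
  | succ n ih => rw [Function.iterate_succ_apply', pos_par, ih, Nat.div_div_eq_div_mul, pow_succ]

theorem eq_of_pos_zero {u v : Vx} (h : u.lev = v.lev) (hu : u.pos = 0) (hv : v.pos = 0) : u = v :=
  ext' h (hu.trans hv.symm) ((word_eq_zero_of_pos hu).trans (word_eq_zero_of_pos hv).symm)

/-- Any two vertices have a common ancestor. -/
theorem exists_common_anc (u v : Vx) :
    ∃ i j, lev u + i = lev v + j ∧ par^[i] u = par^[j] v := by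
  refine ⟨v.lev + u.pos + v.pos, u.lev + u.pos + v.pos, by omega, ?_⟩
  have key : ∀ w : Vx, ∀ n, w.pos ≤ n → (par^[n] w).pos = 0 := by
    intro w n h
    rw [pos_iter]
    exact Nat.div_eq_of_lt (lt_of_le_of_lt h Nat.lt_two_pow_self)
  exact eq_of_pos_zero (by rw [lev_iter, lev_iter]; omega) (key _ _ (by omega)) (key _ _ (by omega))

theorem reachable_iter (v : Vx) (n : ℕ) : Sou.Reachable v (par^[n] v) := by
  induction n with
  | zero => exact SimpleGraph.Reachable.refl _
  | succ n ih =>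
    rw [Function.iterate_succ_apply']
    exact ih.trans (adj_par _).reachable

/-- The vertex of height zero at the origin. -/
def origin : Vx := ⟨(0, 0, 0), by simp [Valid]⟩

theorem sou_connected : Sou.Connected := by
  refine (SimpleGraph.connected_iff _).2 ⟨fun u v => ?_, ⟨origin⟩⟩
  obtain ⟨i, j, -, h⟩ := exists_common_anc u v
  have h1 := reachable_iter u i
  rw [h] at h1
  exact h1.trans (reachable_iter v j).symm

theorem dist_iter_le (v : Vx) (n : ℕ) : Sou.dist v (par^[n] v) ≤ n := by
  induction n with
  | zero => simp
  | succ n ih =>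
    rw [Function.iterate_succ_apply']
    have h1 := sou_connected.dist_triangle (u := v) (v := par^[n] v) (w := (par^[n] v).par)
    have h2 := SimpleGraph.dist_eq_one_iff_adj.2 (adj_par (par^[n] v))
    omega

/-- A function on vertices which changes by at most one along edges is 1-Lipschitz. -/
theorem lipschitz_of_adj {V : Type*} {G : SimpleGraph V} (hG : G.Connected) (f : V → ℕ)
    (hf : ∀ u v, G.Adj u v → f v ≤ f u + 1) (u v : V) : f v ≤ f u + G.dist u v := by
  obtain ⟨p, hp⟩ := hG.exists_walk_length_eq_dist u v
  rw [← hp]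
  clear hp
  induction p with
  | nil => simp
  | cons h p ih =>
    have := hf _ _ h
    rw [SimpleGraph.Walk.length_cons]
    omega

theorem lev_adj {u v : Vx} (h : Sou.Adj u v) : v.lev ≤ u.lev + 1 := by
  rcases h with h | h | h
  · have := h.lev_eq; omega
  · rw [h]; simp
  · rw [h]; simp; omega

theorem lev_le_dist (u v : Vx) : v.lev ≤ u.lev + Sou.dist u v :=
  lipschitz_of_adj sou_connected lev (fun _ _ h => lev_adj h) u v

theorem shell_par_cases (v : Vx) :
    v.par.shell = v.shell ∧ 0 < v.pos ∨ v.par.shell = v.shell + 1 ∧ v.pos = 0 := by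
  unfold shell
  rw [lev_par, pos_par, size_half]
  rcases Nat.eq_zero_or_pos v.pos with h | h
  · right; rw [h]; simp
  · left
    have := Nat.size_pos.2 h
    omega

theorem shell_left {u v : Vx} (h : Left u v) : u.shell ≤ v.shell ∧ v.shell ≤ u.shell + 1 := by
  obtain ⟨a, b, -⟩ := h
  unfold shell
  rw [a, b]
  have h1 := size_succ_le u.pos
  have h2 := Nat.size_le_size (Nat.le_succ u.pos)
  simp only [Nat.succ_eq_add_one] at h2
  omega

theorem shell_adj {u v : Vx} (h : Sou.Adj u v) : v.shell ≤ u.shell + 1 := by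
  rcases h with (h | h) | h | h
  · exact (shell_left h).2
  · have := (shell_left h).1; omega
  · rw [h]; rcases shell_par_cases u with h | h <;> omega
  · rw [h]; rcases shell_par_cases v with h | h <;> omega

/-! ### Bounded degree -/

/-- The triple of natural numbers underlying a vertex. -/
def Vx.code (v : Vx) : ℕ × ℕ × ℕ := (v.lev, v.pos, v.word)

theorem Vx.code_injective : Function.Injective Vx.code := fun u v h => by
  simp only [code, Prod.mk.injEq] at h
  exact ext' h.1 h.2.1 h.2.2

theorem exists_nbr_finset (v : Vx) :
    ∃ s : Finset Vx, (∀ w, Sou.Adj v w → w ∈ s) ∧ s.card ≤ 2000 := by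
  classical
  -- Codes of all possible neighbours, as triples of natural numbers.
  let t : Finset (ℕ × ℕ × ℕ) :=
    {(v.lev + 1, v.pos / 2, v.word / 256)} ∪
    {(v.lev, v.pos - 1, v.word % 256 ^ Nat.size (v.pos - 1))} ∪
    (Finset.range 256).image (fun c => (v.lev, v.pos + 1, v.word + 256 ^ Nat.size v.pos * c)) ∪
    (Finset.range 2 ×ˢ Finset.range 256).image
      (fun c => (v.lev - 1, 2 * v.pos + c.1, 256 * v.word + c.2))
  have ht : t.card ≤ 2000 := by
    refine (Finset.card_union_le _ _).trans ?_
    have h1 := Finset.card_union_le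
      (({(v.lev + 1, v.pos / 2, v.word / 256)} : Finset (ℕ × ℕ × ℕ)) ∪
      {(v.lev, v.pos - 1, v.word % 256 ^ Nat.size (v.pos - 1))})
      ((Finset.range 256).image (fun c => (v.lev, v.pos + 1, v.word + 256 ^ Nat.size v.pos * c)))
    have h2 := Finset.card_union_le
      ({(v.lev + 1, v.pos / 2, v.word / 256)} : Finset (ℕ × ℕ × ℕ))
      {(v.lev, v.pos - 1, v.word % 256 ^ Nat.size (v.pos - 1))}
    have h3 := Finset.card_image_le (s := Finset.range 256)
      (f := fun c => (v.lev, v.pos + 1, v.word + 256 ^ Nat.size v.pos * c))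
    have h4 := Finset.card_image_le (s := Finset.range 2 ×ˢ Finset.range 256)
      (f := fun c : ℕ × ℕ => (v.lev - 1, 2 * v.pos + c.1, 256 * v.word + c.2))
    simp only [Finset.card_singleton, Finset.card_product, Finset.card_range] at h2 h3 h4
    omega
  refine ⟨t.preimage code code_injective.injOn, ?_, ?_⟩
  · intro w hw
    rw [Finset.mem_preimage]
    simp only [t, Finset.mem_union, Finset.mem_singleton, Finset.mem_image, Finset.mem_range,
      Finset.mem_product]
    rw [code]
    rcases hw with (⟨a, b, c⟩ | ⟨a, b, c⟩) | h | h
    · left; right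
      refine ⟨w.word / 256 ^ Nat.size v.pos, ?_, ?_⟩
      · have h1 := w.word_lt
        rw [b] at h1
        apply Nat.div_lt_of_lt_mul
        rw [← pow_succ]
        exact lt_of_lt_of_le h1 (Nat.pow_le_pow_right (by norm_num) (size_succ_le _))
      · rw [a, b, c, Nat.mod_add_div]
    · left; left; right
      have : v.pos - 1 = w.pos := by omega
      rw [this, a, c]
    · left; left; left
      rw [h]; simp
    · right
      have h1 := congrArg lev h
      have h2 := congrArg pos h
      have h3 := congrArg word h
      simp only [lev_par, pos_par, word_par] at h1 h2 h3
      refine ⟨(w.pos % 2, w.word % 256), ⟨by dsimp only; omega, by dsimp only; omega⟩, ?_⟩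
      refine Prod.ext ?_ (Prod.ext ?_ ?_) <;> dsimp only <;> omega
  · exact (Finset.card_preimage _ _ _).trans_le ((Finset.card_filter_le _ _).trans ht)

theorem nbr_finite (v : Vx) : (Sou.neighborSet v).Finite := by
  obtain ⟨s, hs, -⟩ := exists_nbr_finset v
  exact s.finite_toSet.subset fun w hw => hs w hw

theorem nbr_ncard (v : Vx) : (Sou.neighborSet v).ncard ≤ 2000 := by
  obtain ⟨s, hs, hc⟩ := exists_nbr_finset v
  have := Set.ncard_le_ncard (s := Sou.neighborSet v) (t := (s : Set Vx))
    (fun w hw => hs w hw) s.finite_toSet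
  rw [Set.ncard_coe_finset] at this
  omega

theorem sou_boundedDegree : BoundedDegree Sou := ⟨2000, fun v => ⟨nbr_finite v, nbr_ncard v⟩⟩

/-! ### Horizontal chains contract under the parent map -/

/-- `HW n u v`: there is a chain of at most `n` horizontal edges from `u` to `v`. -/
def HW : ℕ → Vx → Vx → Prop
  | 0, u, v => u = v
  | n + 1, u, v => ∃ w, HW n u w ∧ (w = v ∨ Hor w v)

theorem HW.refl (u : Vx) : ∀ n, HW n u u
  | 0 => rfl
  | n + 1 => ⟨u, HW.refl u n, Or.inl rfl⟩

theorem HW.succ {n : ℕ} {u v : Vx} (h : HW n u v) : HW (n + 1) u v := ⟨v, h, Or.inl rfl⟩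

theorem HW.mono {n m : ℕ} {u v : Vx} (h : HW n u v) (hnm : n ≤ m) : HW m u v := by
  induction m, hnm using Nat.le_induction with
  | base => exact h
  | succ m _ ih => exact ih.succ

theorem HW.trans {n m : ℕ} {u v w : Vx} (h : HW n u v) (h' : HW m v w) : HW (n + m) u w := by
  induction m generalizing w with
  | zero => cases h'; exact h
  | succ m ih =>
    obtain ⟨a, ha, hw⟩ := h'
    exact ⟨a, ih ha, hw⟩

theorem HW.one {u v : Vx} (h : u = v ∨ Hor u v) : HW 1 u v := ⟨u, rfl, h⟩

theorem HW.symm {n : ℕ} {u v : Vx} (h : HW n u v) : HW n v u := by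
  induction n generalizing v with
  | zero => exact Eq.symm h
  | succ n ih =>
    obtain ⟨a, ha, hw⟩ := h
    have h1 : HW 1 v a := HW.one (hw.imp Eq.symm Hor.symm)
    have := h1.trans (ih ha)
    rwa [add_comm] at this

theorem HW.par {n : ℕ} {u v : Vx} (h : HW n u v) : HW n u.par v.par := by
  induction n generalizing v with
  | zero => exact congrArg Vx.par h
  | succ n ih =>
    obtain ⟨a, ha, hw⟩ := h
    refine ⟨a.par, ih ha, ?_⟩
    rcases hw with rfl | hw
    · exact Or.inl rfl
    · exact hw.par

theorem HW.lev_eq {n : ℕ} {u v : Vx} (h : HW n u v) : u.lev = v.lev := by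
  induction n generalizing v with
  | zero => exact congrArg lev h
  | succ n ih =>
    obtain ⟨a, ha, hw⟩ := h
    rw [ih ha]
    rcases hw with rfl | hw
    · rfl
    · exact hw.lev_eq

/-- Among three consecutive horizontal edges, one is collapsed by the parent map, or two of them
form a backtracking: two edges sharing their right end coincide, and of two consecutive edges
pointing in the same direction one starts at an even position. -/
theorem Vx.Hor.contract {a b c d : Vx} (h1 : Hor a b) (h2 : Hor b c) (h3 : Hor c d) :
    HW 2 a.par d.par := by
  have e1 := HW.one h1.par
  have e2 := HW.one h2.par
  have e3 := HW.one h3.par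
  have c1 : a.par = b.par → HW 2 a.par d.par := fun h => by rw [h]; exact e2.trans e3
  have c2 : b.par = c.par → HW 2 a.par d.par := fun h => by rw [← h] at e3; exact e1.trans e3
  have c3 : c.par = d.par → HW 2 a.par d.par := fun h => by rw [← h]; exact e1.trans e2
  have k1 : a = c → HW 2 a.par d.par := fun h => by rw [h]; exact e3.mono (by omega)
  have k2 : b = d → HW 2 a.par d.par := fun h => by rw [← h]; exact e1.mono (by omega)
  rcases Nat.mod_two_eq_zero_or_one b.pos with eb | eb <;>
  rcases Nat.mod_two_eq_zero_or_one c.pos with ec | ec <;>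
  rcases h1 with h1 | h1 <;> rcases h2 with h2 | h2 <;> rcases h3 with h3 | h3 <;>
  first
  | exact k1 (h1.unique h2)
  | exact k2 (h2.unique h3)
  | exact c2 (h2.par_eq eb)
  | exact c2 (h2.par_eq ec).symm
  | exact c1 (h1.par_eq (by have := h1.2.1; omega))
  | exact c1 (h1.par_eq eb).symm
  | exact c3 (h3.par_eq ec)
  | exact c3 (h3.par_eq (by have := h3.2.1; omega)).symm
  | (exfalso; have := h1.2.1; have := h2.2.1; have := h3.2.1; omega)

theorem HW.contract_three {u v : Vx} (h : HW 3 u v) : HW 2 u.par v.par := by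
  obtain ⟨c, ⟨b, ⟨a, rfl, h1⟩, h2⟩, h3⟩ := h
  rcases h1 with rfl | h1
  · exact HW.par (n := 2) ⟨c, HW.one h2, h3⟩
  rcases h2 with rfl | h2
  · exact HW.par (n := 2) ⟨b, HW.one (Or.inr h1), h3⟩
  rcases h3 with rfl | h3
  · exact HW.par (n := 2) ⟨b, HW.one (Or.inr h1), Or.inr h2⟩
  exact h1.contract h2 h3

theorem HW.contract {n : ℕ} : ∀ {u v : Vx}, HW n u v → HW (n - n / 3) u.par v.par := by
  induction n using Nat.strong_induction_on with
  | _ n ih =>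
    intro u v h
    by_cases hn : n < 3
    · have : n - n / 3 = n := by omega
      rw [this]; exact h.par
    · obtain ⟨m, rfl⟩ : ∃ m, n = m + 3 := ⟨n - 3, by omega⟩
      obtain ⟨c, ⟨b, ⟨a, h0, h1⟩, h2⟩, h3⟩ := h
      have := (ih m (by omega) h0).trans
        (HW.contract_three ⟨c, ⟨b, HW.one h1, h2⟩, h3⟩)
      exact this.mono (by omega)

/-- A horizontal chain of length `n` becomes one of length at most two after at most `n / 4 + 5` steps up. -/
theorem HW.shrink {n : ℕ} : ∀ {u v : Vx}, HW n u v →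
    ∃ t, t ≤ n / 4 + 5 ∧ HW 2 (Vx.par^[t] u) (Vx.par^[t] v) := by
  induction n using Nat.strong_induction_on with
  | _ n ih =>
    intro u v h
    by_cases hn : 12 ≤ n
    · obtain ⟨t, ht, h'⟩ := ih (n - n / 3) (by omega) h.contract
      exact ⟨t + 1, by omega, h'⟩
    · refine ⟨5, by omega, ?_⟩
      have h1 := (h.mono (m := 11) (by omega)).contract.contract.contract.contract.contract
      exact h1

/-! ### Hyperbolicity -/

/-- The ancestors of `u` and `v` at height `K` are joined by at most two horizontal edges. -/
def Nr (K : ℕ) (u v : Vx) : Prop :=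
  ∃ i j, u.lev + i = K ∧ v.lev + j = K ∧ HW 2 (par^[i] u) (par^[j] v)

theorem Nr.symm {K : ℕ} {u v : Vx} (h : Nr K u v) : Nr K v u := by
  obtain ⟨i, j, a, b, h⟩ := h
  exact ⟨j, i, b, a, h.symm⟩

theorem Nr.succ {K : ℕ} {u v : Vx} (h : Nr K u v) : Nr (K + 1) u v := by
  obtain ⟨i, j, a, b, h⟩ := h
  refine ⟨i + 1, j + 1, by omega, by omega, ?_⟩
  rw [Function.iterate_succ_apply', Function.iterate_succ_apply']
  exact h.par

theorem Nr.mono {K L : ℕ} {u v : Vx} (h : Nr K u v) (hKL : K ≤ L) : Nr L u v := by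
  induction L, hKL using Nat.le_induction with
  | base => exact h
  | succ m _ ih => exact ih.succ

theorem Nr.trans {K : ℕ} {u v w : Vx} (h : Nr K u v) (h' : Nr K v w) : Nr (K + 2) u w := by
  obtain ⟨i, j, a, b, h⟩ := h
  obtain ⟨j', l, b', c, h'⟩ := h'
  obtain rfl : j = j' := by omega
  refine ⟨i + 2, l + 2, by omega, by omega, ?_⟩
  rw [Function.iterate_succ_apply', Function.iterate_succ_apply', Function.iterate_succ_apply',
    Function.iterate_succ_apply']
  exact (h.trans h').contract.contract

theorem exists_nr (u v : Vx) : ∃ K, Nr K u v := by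
  obtain ⟨i, j, h, h'⟩ := exists_common_anc u v
  exact ⟨u.lev + i, i, j, rfl, by omega, by rw [h']; exact HW.refl _ _⟩

theorem HW.dist_le {n : ℕ} {u v : Vx} (h : HW n u v) : Sou.dist u v ≤ n := by
  induction n generalizing v with
  | zero => cases h; simp
  | succ n ih =>
    obtain ⟨a, ha, hw⟩ := h
    have h1 := ih ha
    rcases hw with rfl | hw
    · omega
    · have h2 := sou_connected.dist_triangle (u := u) (v := a) (w := v)
      have h3 := SimpleGraph.dist_eq_one_iff_adj.2 hw.adj
      omega

theorem Nr.dist_le {K : ℕ} {u v : Vx} (h : Nr K u v) :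
    Sou.dist u v + u.lev + v.lev ≤ 2 * K + 2 := by
  obtain ⟨i, j, a, b, h⟩ := h
  have h1 := dist_iter_le u i
  have h2 := dist_iter_le v j
  have h3 := h.dist_le
  have h4 := sou_connected.dist_triangle (u := u) (v := par^[i] u) (w := par^[j] v)
  have h5 := sou_connected.dist_triangle (u := u) (v := par^[j] v) (w := v)
  rw [SimpleGraph.dist_comm (u := par^[j] v)] at h5
  omega

/-- The number of horizontal steps among the first `n` steps of a sequence of vertices. -/
def hcount (x : ℕ → Vx) : ℕ → ℕ
  | 0 => 0
  | n + 1 => hcount x n + if (x n).lev = (x (n + 1)).lev then 1 else 0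

/-- A path with `U` steps up, `D` steps down and `h` horizontal steps projects to a chain of
length at most `h` at its final height plus `D`. -/
theorem path_project (x : ℕ → Vx) (n : ℕ) (hx : ∀ i < n, Sou.Adj (x i) (x (i + 1))) :
    ∃ U D, n = U + hcount x n + D ∧ (x 0).lev + U = (x n).lev + D ∧
      HW (hcount x n) (par^[U] (x 0)) (par^[D] (x n)) := by
  induction n with
  | zero => exact ⟨0, 0, rfl, rfl, rfl⟩
  | succ n ih =>
    obtain ⟨U, D, h1, h2, h3⟩ := ih (fun i hi => hx i (by omega))
    have hit : ∀ (m : ℕ) {a b : Vx}, Hor a b → (par^[m] a = par^[m] b ∨ Hor (par^[m] a) (par^[m] b)) := by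
      intro m
      induction m with
      | zero => intro a b h; exact Or.inr h
      | succ m ihm =>
        intro a b h
        rw [Function.iterate_succ_apply', Function.iterate_succ_apply']
        rcases ihm h with e | e
        · exact Or.inl (by rw [e])
        · exact e.par
    rcases hx n (by omega) with h | h | h
    · have e : hcount x (n + 1) = hcount x n + 1 := by simp [hcount, h.lev_eq]
      refine ⟨U, D, by omega, by have := h.lev_eq; omega, ?_⟩
      rw [e]
      exact ⟨_, h3, hit D h⟩
    · have hl := congrArg lev h
      rw [lev_par] at hl
      have e : hcount x (n + 1) = hcount x n := by
        simp only [hcount]; rw [if_neg (by omega)]; rfl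
      rw [e]
      cases D with
      | zero =>
        refine ⟨U + 1, 0, by omega, by omega, ?_⟩
        rw [Function.iterate_succ_apply', h]
        exact h3.par
      | succ D =>
        refine ⟨U + 1, D + 1, by omega, by omega, ?_⟩
        rw [Function.iterate_succ_apply', h, ← Function.iterate_succ_apply,
          Function.iterate_succ_apply']
        exact h3.par
    · have hl := congrArg lev h
      rw [lev_par] at hl
      have e : hcount x (n + 1) = hcount x n := by
        simp only [hcount]; rw [if_neg (by omega)]; rfl
      rw [e]
      refine ⟨U, D + 1, by omega, by omega, ?_⟩
      rw [Function.iterate_succ_apply, ← h]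
      exact h3

theorem path_nr (x : ℕ → Vx) (n : ℕ) (hx : ∀ i < n, Sou.Adj (x i) (x (i + 1))) :
    ∃ K t, Nr K (x 0) (x n) ∧ t ≤ hcount x n / 4 + 5 ∧
      2 * K + hcount x n = n + (x 0).lev + (x n).lev + 2 * t := by
  obtain ⟨U, D, h1, h2, h3⟩ := path_project x n hx
  obtain ⟨t, ht, h4⟩ := h3.shrink
  refine ⟨(x 0).lev + U + t, t, ⟨U + t, D + t, by omega, by omega, ?_⟩, ht, by omega⟩
  rw [add_comm U t, add_comm D t, Function.iterate_add_apply, Function.iterate_add_apply]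
  exact h4

theorem exists_nr_le (u v : Vx) :
    ∃ K, Nr K u v ∧ 2 * K ≤ Sou.dist u v + u.lev + v.lev + 10 := by
  obtain ⟨p, hp⟩ := sou_connected.exists_walk_length_eq_dist u v
  obtain ⟨K, t, h1, h2, h3⟩ := path_nr p.getVert p.length (fun i hi => p.adj_getVert_succ hi)
  rw [p.getVert_zero, p.getVert_length] at h1 h3
  exact ⟨K, h1, by omega⟩

open Classical in
/-- The least height at which the ancestors of `u` and `v` are close. -/
noncomputable def meet (u v : Vx) : ℕ := Nat.find (exists_nr u v)

theorem meet_spec (u v : Vx) : Nr (meet u v) u v := by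
  classical exact Nat.find_spec (exists_nr u v)

theorem meet_le {K : ℕ} {u v : Vx} (h : Nr K u v) : meet u v ≤ K := by
  classical exact Nat.find_min' (exists_nr u v) h

theorem meet_comm (u v : Vx) : meet u v = meet v u :=
  le_antisymm (meet_le (meet_spec v u).symm) (meet_le (meet_spec u v).symm)

theorem meet_triangle (u v w : Vx) : meet u w ≤ max (meet u v) (meet v w) + 2 :=
  meet_le (((meet_spec u v).mono (le_max_left _ _)).trans ((meet_spec v w).mono (le_max_right _ _)))

theorem dist_meet (u v : Vx) : Sou.dist u v + u.lev + v.lev ≤ 2 * meet u v + 2 ∧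
    2 * meet u v ≤ Sou.dist u v + u.lev + v.lev + 10 := by
  refine ⟨(meet_spec u v).dist_le, ?_⟩
  obtain ⟨K, h1, h2⟩ := exists_nr_le u v
  have := meet_le h1
  omega

/-- Up to bounded error the distance is `2 * meet u v - lev u - lev v`, where `meet` satisfies
the ultrametric inequality up to a bounded error; this gives the four point condition. -/
theorem sou_hyperbolic : GromovHyperbolic Sou := by
  refine ⟨50, by norm_num, fun w x y z => ?_⟩
  have key : ∀ w x y z : Vx,
      Sou.dist x y + Sou.dist z w ≤ Sou.dist x z + Sou.dist y w + 100 ∨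
      Sou.dist x y + Sou.dist z w ≤ Sou.dist y z + Sou.dist x w + 100 := by
    intro w x y z
    have h1 := dist_meet x y
    have h2 := dist_meet z w
    have h3 := dist_meet x z
    have h4 := dist_meet y w
    have h5 := dist_meet y z
    have h6 := dist_meet x w
    have t1 := meet_triangle x z y
    have t2 := meet_triangle x w y
    have t3 := meet_triangle z x w
    have t4 := meet_triangle z y w
    rw [meet_comm z y] at t1 t4
    rw [meet_comm w y] at t2
    rw [meet_comm z x] at t3
    omega
  have hk := key w x y z
  unfold GromovProduct
  rw [sub_le_iff_le_add, min_le_iff]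
  rcases hk with h | h
  · have h' : ((Sou.dist x y : ℝ) + Sou.dist z w ≤ Sou.dist x z + Sou.dist y w + 100) := by
      exact_mod_cast h
    left; linarith
  · have h' : ((Sou.dist x y : ℝ) + Sou.dist z w ≤ Sou.dist y z + Sou.dist x w + 100) := by
      exact_mod_cast h
    right; linarith

/-! ### Geodesic rays -/

theorem hcount_mono (x : ℕ → Vx) : Monotone (hcount x) :=
  monotone_nat_of_le_succ fun n => by simp [hcount]

theorem ray_hcount_le {x : ℕ → Vx} (hx : IsGeodesicRay Sou x) (n : ℕ) : hcount x n ≤ 24 := by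
  obtain ⟨K, t, h1, h2, h3⟩ := path_nr x n (fun i _ => hx.1 i)
  have h4 := h1.dist_le
  rw [hx.2 n] at h4
  omega

/-- A geodesic ray eventually moves from each vertex to its parent. -/
theorem ray_eventually_par {x : ℕ → Vx} (hx : IsGeodesicRay Sou x) :
    ∃ m, ∀ i, m ≤ i → x (i + 1) = (x i).par := by
  -- There are only finitely many horizontal steps.
  obtain ⟨m, hm⟩ : ∃ m, ∀ i, m ≤ i → hcount x i = hcount x m := by
    obtain ⟨b, hb⟩ : ∃ b, IsGreatest (Set.range (hcount x)) b :=
      BddAbove.exists_isGreatest_of_nonempty ⟨24, by rintro _ ⟨n, rfl⟩; exact ray_hcount_le hx n⟩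
        ⟨_, 0, rfl⟩
    obtain ⟨⟨m, rfl⟩, h2⟩ := hb
    exact ⟨m, fun i hi => le_antisymm (h2 ⟨i, rfl⟩) (hcount_mono x hi)⟩
  have hstep : ∀ i, m ≤ i → x (i + 1) = (x i).par ∨ x i = (x (i + 1)).par := by
    intro i hi
    rcases hx.1 i with h | h | h
    · have h1 := hm i hi
      have h2 := hm (i + 1) (by omega)
      simp only [hcount, if_pos h.lev_eq] at h2
      omega
    · exact Or.inl h
    · exact Or.inr h
  refine ⟨m, fun i hi => ?_⟩
  rcases hstep i hi with h | h
  · exact h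
  · -- A step down would be followed by steps down forever.
    exfalso
    have hdown : ∀ j, x (i + j) = (x (i + j + 1)).par := by
      intro j
      induction j with
      | zero => exact h
      | succ j ih =>
        rcases hstep (i + j + 1) (by omega) with h' | h'
        · rw [← ih] at h'
          have h1 := hx.2 (i + j + 1 + 1)
          rw [h', hx.2] at h1
          omega
        · exact h'
    have hlev : ∀ j, (x (i + j)).lev + j = (x i).lev := by
      intro j
      induction j with
      | zero => rfl
      | succ j ih =>
        have := congrArg lev (hdown j)
        rw [lev_par] at this
        change (x (i + j + 1)).lev + (j + 1) = (x i).lev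
        omega
    have := hlev ((x i).lev + 1)
    omega

theorem iter_of_eventually {x : ℕ → Vx} {m : ℕ} (h : ∀ i, m ≤ i → x (i + 1) = (x i).par) (i : ℕ) :
    x (m + i) = par^[i] (x m) := by
  induction i with
  | zero => rfl
  | succ i ih =>
    rw [← add_assoc, h _ (by omega), ih, Function.iterate_succ_apply']

theorem rays_coincide (x y : ℕ → Vx) (hx : IsGeodesicRay Sou x) (hy : IsGeodesicRay Sou y) :
    ∃ m m' : ℕ, ∀ i : ℕ, x (m + i) = y (m' + i) := by
  obtain ⟨m, hm⟩ := ray_eventually_par hx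
  obtain ⟨n, hn⟩ := ray_eventually_par hy
  obtain ⟨a, b, -, hab⟩ := exists_common_anc (x m) (y n)
  refine ⟨m + a, n + b, fun i => ?_⟩
  rw [add_assoc, add_assoc, iter_of_eventually hm, iter_of_eventually hn, add_comm a, add_comm b,
    Function.iterate_add_apply, Function.iterate_add_apply, hab]

theorem isGeodesicRay_iter (v : Vx) : IsGeodesicRay Sou (fun n => par^[n] v) := by
  refine ⟨fun i => ?_, fun n => ?_⟩
  · simp only [Function.iterate_succ_apply']
    exact adj_par _
  · have h1 := dist_iter_le v n
    have h2 := lev_le_dist v (par^[n] v)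
    rw [lev_iter] at h2
    simp only [Function.iterate_zero, id_eq]
    omega

theorem par_of_adj_lev {u v : Vx} (h : Sou.Adj u v) (hl : v.lev = u.lev + 1) : v = u.par := by
  rcases h with h | h | h
  · have := h.lev_eq; omega
  · exact h
  · have := congrArg lev h
    rw [lev_par] at this; omega

theorem ray_unique (v : Vx) : ∃! x : ℕ → Vx, IsGeodesicRay Sou x ∧ x 0 = v := by
  refine ⟨fun n => par^[n] v, ⟨isGeodesicRay_iter v, rfl⟩, ?_⟩
  rintro x ⟨hx, rfl⟩
  obtain ⟨m, hm⟩ := ray_eventually_par hx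
  obtain ⟨i, j, hl, hij⟩ := exists_common_anc (x 0) (x m)
  rw [← iter_of_eventually hm] at hij
  have hlev : (x (m + j)).lev = (x 0).lev + (m + j) := by
    have h1 := dist_iter_le (x 0) i
    rw [hij, hx.2] at h1
    have h2 := lev_iter (x 0) i
    rw [hij] at h2
    have h3 := lev_le_dist (x 0) (x (m + j))
    rw [hx.2] at h3
    omega
  -- The height has increased by the number of steps, hence every step went up.
  have hub : ∀ a b, a ≤ b → (x b).lev ≤ (x a).lev + (b - a) := by
    intro a b hab
    induction b, hab using Nat.le_induction with
    | base => simp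
    | succ b hb ih => have := lev_adj (hx.1 b); omega
  have hall : ∀ n, x (n + 1) = (x n).par := by
    intro n
    by_cases hn : m ≤ n
    · exact hm n hn
    · apply par_of_adj_lev (hx.1 n)
      have h1 := hub 0 n (by omega)
      have h2 := hub (n + 1) (m + j) (by omega)
      have h3 := lev_adj (hx.1 n)
      omega
  funext n
  have := iter_of_eventually (x := x) (m := 0) (fun i _ => hall i) n
  rwa [zero_add] at this

/-! ### Transience -/

/-- The height at which the flow travels through the shell `m`: it runs at depth `stage m` in
the narrow shells (and in the first shell after these), and at height zero in all other shells. -/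
def kap (m : ℕ) : ℕ :=
  if 1 ≤ stage m ∧ m ≤ 1024 ^ stage m + 2 * 32 ^ stage m + 1 then m - stage m else 0

theorem pow_le_of_stage {m : ℕ} (h : 1 ≤ stage m) : 1024 ^ stage m ≤ m := by
  apply Nat.pow_log_le_self
  rintro rfl
  simp [stage] at h

theorem kap_lt {m : ℕ} (h : 1 ≤ m) : kap m < m := by
  unfold kap
  split_ifs with h1
  · omega
  · omega

theorem sub_cap_le_kap (m : ℕ) : m ≤ kap m + cap m := by
  by_cases h : Narrow m
  · have h2 : kap m = m - stage m := by
      unfold kap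
      rw [if_pos ⟨h.1, by have := h.2; omega⟩]
    rw [h2, cap, if_pos h]
    omega
  · rw [cap, if_neg h]; omega

theorem stage_succ_of_narrow {m : ℕ} (h : Narrow m) : stage (m + 1) = stage m := by
  have h1 := pow_le_of_stage h.1
  have h2 := h.2
  have h3 := h.1
  unfold stage at *
  rw [Nat.log_eq_iff (Or.inl (by omega))]
  refine ⟨by omega, ?_⟩
  rw [pow_succ]
  have h4 : 32 ^ Nat.log 1024 m ≤ 1024 ^ Nat.log 1024 m := Nat.pow_le_pow_left (by norm_num) _
  have h5 : 1 ≤ 32 ^ Nat.log 1024 m := Nat.one_le_pow _ _ (by norm_num)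
  omega

theorem sub_cap_le_kap_succ (m : ℕ) : m ≤ kap (m + 1) + cap m := by
  by_cases h : Narrow m
  · have h1 := stage_succ_of_narrow h
    have h2 : kap (m + 1) = m + 1 - stage m := by
      unfold kap
      rw [h1, if_pos ⟨h.1, by have := h.2; omega⟩]
    rw [h2, cap, if_pos h]
    omega
  · rw [cap, if_neg h]; omega

/-- The vertex with given coordinates. -/
def Vx.mk (k x z : ℕ) (h : Valid (k, x, z)) : Vx := ⟨(k, x, z), h⟩

open Classical in
/-- The amount of flow along the edge from the left neighbour of `v` to `v`. -/
noncomputable def fa (v : Vx) : ℝ :=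
  if 0 < v.pos ∧ v.lev = kap v.shell then ((256 : ℝ) ^ Nat.size v.pos)⁻¹ else 0

/-- The difference of the indicators of `k < kap (m + 1)` and `k < kap m`. -/
noncomputable def dl (k m : ℕ) : ℝ :=
  (if k < kap (m + 1) then 1 else 0) - (if k < kap m then 1 else 0)

open Classical in
/-- The amount of flow along the edge from `v` to its parent: just before the position reaches a
power of two the flow moves vertically from height `kap v.shell` to height `kap (v.shell + 1)`. -/
noncomputable def fb (v : Vx) : ℝ :=
  if 0 < v.pos ∧ v.pos + 1 = 2 ^ Nat.size v.pos then
    dl v.lev v.shell * ((256 : ℝ) ^ Nat.size v.pos)⁻¹ else 0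

/-- Sum of a function which is constant on an injectively parametrised support. -/
theorem tsum_param {n : ℕ} {f : Vx → ℝ} (c : ℝ) (g : Fin n → Vx) (hg : Function.Injective g)
    (h1 : ∀ i, f (g i) = c) (h2 : ∀ w, f w ≠ 0 → ∃ i, g i = w) :
    Summable f ∧ ∑' w, f w = n * c := by
  have hs : Function.support f ⊆ Set.range g := fun w hw => h2 w hw
  constructor
  · exact summable_of_hasFiniteSupport ((Set.finite_range g).subset hs)
  · rw [← hg.tsum_eq hs, tsum_fintype]
    simp [h1]

open Classical in
/-- Outflow of `v` towards its right neighbours. The flow is only positive if `kap` allows the height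
of `v`, and then all candidates for right neighbours respect `cap`. -/
theorem tsum_right (v : Vx) :
    Summable (fun w => if Left v w then fa w else 0) ∧
    ∑' w, (if Left v w then fa w else 0) =
      if v.lev = kap (v.lev + Nat.size (v.pos + 1)) then ((256 : ℝ) ^ Nat.size v.pos)⁻¹ else 0 := by
  by_cases hk : v.lev = kap (v.lev + Nat.size (v.pos + 1))
  · rw [if_pos hk]
    have hle : Nat.size v.pos ≤ Nat.size (v.pos + 1) := Nat.size_le_size (Nat.le_succ _)
    have hcap : Nat.size (v.pos + 1) ≤ cap (v.lev + Nat.size (v.pos + 1)) := by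
      have := sub_cap_le_kap (v.lev + Nat.size (v.pos + 1))
      omega
    have hpow : 256 ^ Nat.size (v.pos + 1) =
        256 ^ Nat.size v.pos * 256 ^ (Nat.size (v.pos + 1) - Nat.size v.pos) := by
      rw [← pow_add]; congr 1; omega
    have hz := v.word_lt
    have hval : ∀ i : Fin (256 ^ (Nat.size (v.pos + 1) - Nat.size v.pos)),
        Valid (v.lev, v.pos + 1, v.word + 256 ^ Nat.size v.pos * i) := by
      intro i
      refine ⟨?_, hcap⟩
      dsimp only
      rw [hpow]
      calc v.word + 256 ^ Nat.size v.pos * i < 256 ^ Nat.size v.pos * (i + 1) := by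
            rw [mul_add]; omega
        _ ≤ _ := Nat.mul_le_mul_left _ i.2
    have key := tsum_param (f := fun w => if Left v w then fa w else 0)
      ((256 : ℝ) ^ Nat.size (v.pos + 1))⁻¹ (fun i => Vx.mk _ _ _ (hval i)) ?_ ?_ ?_
    · refine ⟨key.1, key.2.trans ?_⟩
      have : (256 : ℝ) ^ Nat.size (v.pos + 1) =
        256 ^ Nat.size v.pos * 256 ^ (Nat.size (v.pos + 1) - Nat.size v.pos) := by
        exact_mod_cast hpow
      rw [this]
      push_cast
      field_simp
    · intro i j hij
      have := congrArg word hij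
      change v.word + 256 ^ Nat.size v.pos * i = v.word + 256 ^ Nat.size v.pos * j at this
      have h2 : 256 ^ Nat.size v.pos * (i : ℕ) = 256 ^ Nat.size v.pos * j := by omega
      exact Fin.ext (Nat.eq_of_mul_eq_mul_left (by positivity) h2)
    · intro i
      have hL : Left v (Vx.mk _ _ _ (hval i)) := by
        refine ⟨rfl, rfl, ?_⟩
        change v.word = (v.word + 256 ^ Nat.size v.pos * i) % _
        rw [Nat.add_mul_mod_self_left, Nat.mod_eq_of_lt hz]
      rw [if_pos hL, fa]
      exact if_pos ⟨Nat.succ_pos _, hk⟩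
    · intro w hw
      have hL : Left v w := by
        by_contra h
        exact hw (if_neg h)
      obtain ⟨a, b, c⟩ := hL
      have h1 := w.word_lt
      rw [b, hpow] at h1
      refine ⟨⟨w.word / 256 ^ Nat.size v.pos, Nat.div_lt_of_lt_mul h1⟩, ?_⟩
      refine ext' a b.symm ?_
      change v.word + 256 ^ Nat.size v.pos * (w.word / 256 ^ Nat.size v.pos) = w.word
      rw [c, Nat.mod_add_div]
  · rw [if_neg hk]
    have : (fun w => if Left v w then fa w else 0) = fun _ => (0 : ℝ) := by
      funext w
      split_ifs with h
      · rw [fa, if_neg]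
        rintro ⟨-, h2⟩
        obtain ⟨a, b, -⟩ := h
        rw [shell, b, ← a] at h2
        exact hk h2
      · rfl
    rw [this]
    exact ⟨summable_zero, tsum_zero⟩

open Classical in
/-- Inflow of `v` from the left; if it is nonzero then the left neighbour respects `cap`. -/
theorem tsum_left (v : Vx) :
    Summable (fun w => if Left w v then fa v else 0) ∧
    ∑' w, (if Left w v then fa v else 0) = fa v := by
  by_cases hv : fa v = 0
  · rw [hv]; simp
  have ⟨hp, hk⟩ : 0 < v.pos ∧ v.lev = kap v.shell := by
    by_contra h
    exact hv (by rw [fa, if_neg h])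
  obtain ⟨x, hx⟩ : ∃ x, v.pos = x + 1 := ⟨v.pos - 1, by omega⟩
  have hcap := v.size_le_cap
  unfold shell at hk hcap
  rw [hx] at hk hcap
  have hval : Valid (v.lev, x, v.word % 256 ^ Nat.size x) := by
    refine ⟨Nat.mod_lt _ (by positivity), ?_⟩
    dsimp only
    rcases size_succ_cases x with ⟨h, -⟩ | ⟨h, -⟩
    · rwa [h] at hcap
    · rw [h, ← add_assoc] at hk
      have := sub_cap_le_kap_succ (v.lev + Nat.size x)
      omega
  have hL : Left (Vx.mk _ _ _ hval) v := ⟨rfl, hx, rfl⟩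
  have key := tsum_param (f := fun w => if Left w v then fa v else 0) (n := 1)
      (fa v) (fun _ => Vx.mk _ _ _ hval) (Function.injective_of_subsingleton _) (fun _ => if_pos hL)
      (fun w hw => ⟨0, hL.unique (by
        by_contra h
        exact hw (if_neg h))⟩)
  exact ⟨key.1, by simpa using key.2⟩

open Classical in
theorem tsum_up (v : Vx) :
    Summable (fun w => if w = v.par then fb v else 0) ∧
    ∑' w, (if w = v.par then fb v else 0) = fb v := by
  have key := tsum_param (f := fun w => if w = v.par then fb v else 0) (n := 1)
      (fb v) (fun _ => v.par) (Function.injective_of_subsingleton _) (fun _ => if_pos rfl)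
      (fun w hw => ⟨0, by
        by_contra h
        exact hw (if_neg (Ne.symm h))⟩)
  exact ⟨key.1, by simp⟩

open Classical in
/-- Inflow of `v` from its children. -/
theorem tsum_down (v : Vx) :
    Summable (fun w => if v = par w then fb w else 0) ∧
    ∑' w, (if v = par w then fb w else 0) =
      if 1 ≤ v.lev ∧ v.pos + 1 = 2 ^ Nat.size v.pos then
        dl (v.lev - 1) v.shell * ((256 : ℝ) ^ Nat.size v.pos)⁻¹ else 0 := by
  -- A child carrying flow has position `2 * v.pos + 1`.
  have hchild : ∀ w : Vx, v = par w → 0 < w.pos → w.pos + 1 = 2 ^ Nat.size w.pos →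
      w.pos = 2 * v.pos + 1 ∧ v.lev = w.lev + 1 ∧ w.shell = v.shell ∧
        v.pos + 1 = 2 ^ Nat.size v.pos ∧ v.word = w.word / 256 := by
    intro w hw h1 h2
    have e1 := congrArg lev hw
    have e2 := congrArg pos hw
    have e3 := congrArg word hw
    rw [lev_par] at e1
    rw [pos_par] at e2
    rw [word_par] at e3
    have hs : 0 < Nat.size w.pos := Nat.size_pos.2 h1
    obtain ⟨s, hs⟩ : ∃ s, Nat.size w.pos = s + 1 := ⟨Nat.size w.pos - 1, by omega⟩
    have hh : Nat.size v.pos = s := by rw [e2, size_half, hs]; rfl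
    rw [hs, pow_succ] at h2
    refine ⟨by omega, e1, ?_, ?_, e3⟩
    · rw [shell, shell, e1, hh, hs]; omega
    · rw [hh]; omega
  by_cases hc : 1 ≤ v.lev ∧ v.pos + 1 = 2 ^ Nat.size v.pos
  · rw [if_pos hc]
    obtain ⟨k, hk⟩ : ∃ k, v.lev = k + 1 := ⟨v.lev - 1, by omega⟩
    rw [hk, Nat.add_sub_cancel]
    have hfb : ∀ w : Vx, v = par w → w.pos = 2 * v.pos + 1 →
        fb w = dl k v.shell * ((256 : ℝ) ^ (Nat.size v.pos + 1))⁻¹ := by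
      intro w hw hp
      have hp2 : w.pos + 1 = 2 ^ Nat.size w.pos := by
        rw [hp, size_two_mul_add_one, pow_succ, ← hc.2]; ring
      obtain ⟨-, h2, h3, -, -⟩ := hchild w hw (by omega) hp2
      have hl : w.lev = k := by omega
      rw [fb, if_pos ⟨by omega, hp2⟩, h3, hp, size_two_mul_add_one, hl]
    by_cases hd : dl k v.shell = 0
    · rw [hd]
      have : (fun w => if v = par w then fb w else 0) = fun _ => (0 : ℝ) := by
        funext w
        split_ifs with h
        · by_contra hne
          have ⟨h1, h2⟩ : 0 < w.pos ∧ w.pos + 1 = 2 ^ Nat.size w.pos := by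
            by_contra h'
            exact hne (by rw [fb, if_neg h'])
          apply hne
          rw [hfb w h (hchild w h h1 h2).1, hd, zero_mul]
        · rfl
      rw [this]
      exact ⟨summable_zero, by simp⟩
    have hcap : Nat.size (2 * v.pos + 1) ≤ cap (k + Nat.size (2 * v.pos + 1)) := by
      rw [size_two_mul_add_one]
      have e : k + (Nat.size v.pos + 1) = v.shell := by rw [shell, hk]; omega
      rw [e]
      have h1 := sub_cap_le_kap v.shell
      have h2 := sub_cap_le_kap_succ v.shell
      by_contra hlt
      apply hd
      rw [dl, if_pos (by omega), if_pos (by omega), sub_self]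
    have hz := v.word_lt
    have hval : ∀ i : Fin 256, Valid (k, 2 * v.pos + 1, 256 * v.word + i) := by
      intro i
      refine ⟨?_, hcap⟩
      dsimp only
      rw [size_two_mul_add_one, pow_succ]
      have := i.2
      omega
    have hpar : ∀ i, v = par (Vx.mk _ _ _ (hval i)) := by
      intro i
      refine ext' hk ?_ ?_
      · change v.pos = (2 * v.pos + 1) / 2
        omega
      · change v.word = (256 * v.word + i) / 256
        have := i.2
        omega
    have key := tsum_param (f := fun w => if v = par w then fb w else 0)
      (dl k v.shell * ((256 : ℝ) ^ (Nat.size v.pos + 1))⁻¹) (fun i => Vx.mk _ _ _ (hval i)) ?_ ?_ ?_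
    · refine ⟨key.1, key.2.trans ?_⟩
      rw [pow_succ]
      push_cast
      field_simp
    · intro i j hij
      have := congrArg word hij
      change 256 * v.word + (i : ℕ) = 256 * v.word + j at this
      exact Fin.ext (by omega)
    · intro i
      rw [if_pos (hpar i)]
      exact hfb _ (hpar i) rfl
    · intro w hw
      have hL : v = par w := by
        by_contra h
        exact hw (if_neg h)
      have hne : fb w ≠ 0 := by
        intro h
        exact hw ((if_pos hL).trans h)
      have ⟨h1, h2⟩ : 0 < w.pos ∧ w.pos + 1 = 2 ^ Nat.size w.pos := by
        by_contra h'
        exact hne (by rw [fb, if_neg h'])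
      obtain ⟨g1, g2, -, -, g3⟩ := hchild w hL h1 h2
      refine ⟨⟨w.word % 256, Nat.mod_lt _ (by norm_num)⟩, ?_⟩
      refine ext' (by change k = w.lev; omega) g1.symm ?_
      change 256 * v.word + w.word % 256 = w.word
      omega
  · rw [if_neg hc]
    have : (fun w => if v = par w then fb w else 0) = fun _ => (0 : ℝ) := by
      funext w
      split_ifs with h
      · by_contra hne
        have ⟨h1, h2⟩ : 0 < w.pos ∧ w.pos + 1 = 2 ^ Nat.size w.pos := by
          by_contra h'
          exact hne (by rw [fb, if_neg h'])
        obtain ⟨-, g2, -, g4, -⟩ := hchild w h h1 h2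
        exact hc ⟨by omega, g4⟩
      · rfl
    rw [this]
    exact ⟨summable_zero, tsum_zero⟩

open Classical in
/-- The flow. Words are chosen uniformly at random; the positions are swept once from left to
right, at the heights prescribed by `kap`. -/
noncomputable def flow (u v : Vx) : ℝ :=
  (if Left u v then fa v else 0) - (if Left v u then fa u else 0) +
    (if v = u.par then fb u else 0) - (if u = v.par then fb v else 0)

theorem flow_isFlow : IsFlow Sou flow := by
  refine ⟨fun u v => by unfold flow; ring, fun u v h => ?_⟩
  by_contra hn
  apply h
  have h1 : ¬ Left u v := fun h => hn (Or.inl (Or.inl h))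
  have h2 : ¬ Left v u := fun h => hn (Or.inl (Or.inr h))
  have h3 : ¬ v = u.par := fun h => hn (Or.inr (Or.inl h))
  have h4 : ¬ u = v.par := fun h => hn (Or.inr (Or.inr h))
  simp [flow, h1, h2, h3, h4]

/-- At position `2 ^ s - 1` the horizontal contributions telescope with the vertical ones, elsewhere
they cancel among themselves. -/
theorem divg_flow (v : Vx) : divg flow v = if v.lev = 0 ∧ v.pos = 0 then 1 else 0 := by
  classical
  have e : divg flow v =
      (if v.lev = kap (v.lev + Nat.size (v.pos + 1)) then ((256 : ℝ) ^ Nat.size v.pos)⁻¹ else 0)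
        - fa v + fb v -
      (if 1 ≤ v.lev ∧ v.pos + 1 = 2 ^ Nat.size v.pos then
        dl (v.lev - 1) v.shell * ((256 : ℝ) ^ Nat.size v.pos)⁻¹ else 0) := by
    have h := (((tsum_right v).1.hasSum.sub (tsum_left v).1.hasSum).add
      (tsum_up v).1.hasSum).sub (tsum_down v).1.hasSum
    rw [(tsum_right v).2, (tsum_left v).2, (tsum_up v).2, (tsum_down v).2] at h
    exact h.tsum_eq
  rw [e]
  unfold fa fb dl
  generalize hq : ((256 : ℝ) ^ Nat.size v.pos)⁻¹ = q
  rcases Nat.eq_zero_or_pos v.pos with h0 | h0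
  · have hq1 : q = 1 := by rw [← hq, h0]; simp
    have hsh : v.shell = v.lev := by rw [shell, h0]; simp
    rw [hsh, h0, hq1]
    simp only [zero_add, Nat.size_one, Nat.size_zero, pow_zero, lt_irrefl, false_and, if_false,
      and_true, mul_one]
    rcases Nat.eq_zero_or_pos v.lev with hk | hk
    · have : kap (0 + 1) = 0 := by have := kap_lt (m := 0 + 1) (by omega); omega
      rw [hk, this]
      simp
    · have h1 := kap_lt hk
      have h2 := kap_lt (m := v.lev + 1) (by omega)
      have h3 : ¬ (v.lev - 1 < kap v.lev) := by omega
      have h4 : v.lev - 1 < kap (v.lev + 1) ↔ v.lev = kap (v.lev + 1) := by omega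
      have h5 : 1 ≤ v.lev := hk
      have h6 : v.lev ≠ 0 := by omega
      simp only [h3, h4, h5, h6, if_true, if_false]
      ring
  · have h6 : ¬ (v.lev = 0 ∧ v.pos = 0) := by omega
    rw [if_neg h6]
    have hsh : v.shell = v.lev + Nat.size v.pos := rfl
    rcases size_succ_cases v.pos with ⟨h1, h2⟩ | ⟨h1, h2⟩
    · rw [h1]
      simp [h2, h0, hsh]
    · rw [h1, ← add_assoc, ← hsh]
      simp only [h0, h2, and_true, true_and, if_true]
      generalize kap (v.shell + 1) = A
      generalize kap v.shell = B
      generalize v.lev = k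
      rcases lt_trichotomy k A with hA | hA | hA <;> rcases lt_trichotomy k B with hB | hB | hB <;>
        rcases Nat.eq_zero_or_pos k with hk | hk <;> (try omega) <;>
        split_ifs <;> first | (exfalso; omega) | ring

theorem size_bound (x : ℕ) : ((x : ℝ) + 1) ^ 2 ≤ 4 ^ Nat.size x := by
  have h := Nat.lt_size_self x
  have h1 : ((x : ℝ) + 1) ≤ 2 ^ Nat.size x := by exact_mod_cast h
  calc ((x : ℝ) + 1) ^ 2 ≤ (2 ^ Nat.size x) ^ 2 := by gcongr
    _ = 4 ^ Nat.size x := by rw [← pow_mul, mul_comm, pow_mul]; norm_num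

/-- The heights at which the flow may be nonzero at depth `s`. -/
def act (s : ℕ) : Finset ℕ :=
  insert 0 ((Finset.range (s + 1) ×ˢ Finset.range (2 * 32 ^ s + 3)).image
    fun p => 1024 ^ p.1 - 1 + p.2 - s)

theorem card_act (s : ℕ) : (act s).card ≤ 6 * 64 ^ s := by
  have h1 := Finset.card_insert_le 0 ((Finset.range (s + 1) ×ˢ Finset.range (2 * 32 ^ s + 3)).image
    fun p => 1024 ^ p.1 - 1 + p.2 - s)
  have h2 := Finset.card_image_le (s := Finset.range (s + 1) ×ˢ Finset.range (2 * 32 ^ s + 3))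
    (f := fun p => 1024 ^ p.1 - 1 + p.2 - s)
  rw [Finset.card_product, Finset.card_range, Finset.card_range] at h2
  have h3 : s + 1 ≤ 2 ^ s := Nat.lt_two_pow_self
  have h4 : 1 ≤ 32 ^ s := Nat.one_le_pow _ _ (by norm_num)
  have h5 : (s + 1) * (2 * 32 ^ s + 3) ≤ 2 ^ s * (5 * 32 ^ s) := Nat.mul_le_mul h3 (by omega)
  have h6 : 2 ^ s * (5 * 32 ^ s) = 5 * 64 ^ s := by
    rw [show 64 = 2 * 32 by norm_num, mul_pow]; ring
  have h7 : 1 ≤ 64 ^ s := Nat.one_le_pow _ _ (by norm_num)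
  unfold act
  omega

/-- A height between `0` and a positive value of `kap` in the same or in the next shell lies in a
narrow region (up to one shell) of stage at most `s`. -/
theorem mem_act {k s m : ℕ} (hm : m = k + s ∨ m = k + s + 1) (hk : k ≤ kap m)
    (h : kap m ≠ 0) (hs : m = k + s ∨ k < kap m) : k ∈ act s := by
  unfold kap at h hk hs
  split_ifs at h hk hs with hc
  · obtain ⟨h1, h2⟩ := hc
    have h3 := pow_le_of_stage h1
    have h5 : stage m < 1024 ^ stage m := Nat.lt_pow_self (by norm_num)
    have h4 : stage m ≤ s := by omega
    have h6 : 32 ^ stage m ≤ 32 ^ s := Nat.pow_le_pow_right (by norm_num) h4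
    unfold act
    rw [Finset.mem_insert, Finset.mem_image]
    right
    refine ⟨(stage m, k + s - (1024 ^ stage m - 1)), ?_, ?_⟩
    · rw [Finset.mem_product, Finset.mem_range, Finset.mem_range]
      dsimp only
      omega
    · dsimp only
      omega
  · omega

theorem mem_act_of_fa {v : Vx} (h : fa v ≠ 0) : v.lev ∈ act (Nat.size v.pos) := by
  have ⟨hp, hk⟩ : 0 < v.pos ∧ v.lev = kap v.shell := by
    by_contra h'
    exact h (by rw [fa, if_neg h'])
  by_cases h0 : v.lev = 0
  · rw [h0]; exact Finset.mem_insert_self _ _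
  · exact mem_act (m := v.shell) (Or.inl rfl) hk.le (by omega) (Or.inl rfl)

theorem mem_act_of_fb {v : Vx} (h : fb v ≠ 0) : v.lev ∈ act (Nat.size v.pos) := by
  have hd : dl v.lev v.shell ≠ 0 := by
    intro hd
    apply h
    rw [fb, hd]; simp
  by_cases h1 : v.lev < kap (v.shell + 1)
  · exact mem_act (m := v.shell + 1) (Or.inr rfl) h1.le (by omega) (Or.inr h1)
  · by_cases h2 : v.lev < kap v.shell
    · exact mem_act (m := v.shell) (Or.inl rfl) h2.le (by omega) (Or.inl rfl)
    · exact absurd (by rw [dl, if_neg h1, if_neg h2, sub_self]) hd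

open Classical in
/-- A bound for the energy of the flow near `v`. -/
noncomputable def fg (v : Vx) : ℝ :=
  if v.lev ∈ act (Nat.size v.pos) then (((256 : ℝ) ^ Nat.size v.pos)⁻¹) ^ 2 else 0

theorem fg_nonneg (v : Vx) : 0 ≤ fg v := by
  unfold fg; split_ifs <;> positivity

theorem fa_sq_le (v : Vx) : fa v ^ 2 ≤ fg v := by
  by_cases h : fa v = 0
  · rw [h]; simpa using fg_nonneg v
  · rw [fg, if_pos (mem_act_of_fa h), fa]
    split_ifs
    · exact le_rfl
    · simp

theorem dl_sq_le (k m : ℕ) : dl k m ^ 2 ≤ 1 := by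
  unfold dl; split_ifs <;> norm_num

theorem fb_sq_le (v : Vx) : fb v ^ 2 ≤ fg v := by
  by_cases h : fb v = 0
  · rw [h]; simpa using fg_nonneg v
  · rw [fg, if_pos (mem_act_of_fb h), fb]
    split_ifs
    · rw [mul_pow]
      exact mul_le_of_le_one_left (by positivity) (dl_sq_le _ _)
    · simp

/-- There are at most `6 * 64 ^ s * 256 ^ s` active vertices at each position `x` of size `s`, each
contributing `256 ^ (-2 s)`, in total at most `6 / 4 ^ s ≤ 6 / (x + 1) ^ 2`. -/
theorem summable_fg : Summable fg := by
  classical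
  let I : ℕ → Type := fun x => {p : ℕ × ℕ // p ∈ act (Nat.size x) ×ˢ Finset.range (256 ^ Nat.size x)}
  let F : (Σ x, I x) → ℝ := fun q => (((256 : ℝ) ^ Nat.size q.1)⁻¹) ^ 2
  have hF : Summable F := by
    rw [summable_sigma_of_nonneg (fun q => by positivity)]
    refine ⟨fun x => (hasSum_fintype _).summable, ?_⟩
    have hb : Summable (fun x : ℕ => 6 * (1 / ((x : ℝ) + 1) ^ 2)) := by
      apply Summable.mul_left
      have := (summable_nat_add_iff 1).2 (Real.summable_one_div_nat_pow.2 (one_lt_two))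
      simpa using this
    refine Summable.of_nonneg_of_le (fun x => tsum_nonneg fun _ => by positivity) (fun x => ?_) hb
    rw [tsum_fintype]
    simp only [F, Finset.sum_const, nsmul_eq_mul]
    have hcard : (Finset.univ : Finset (I x)).card ≤ 6 * 64 ^ Nat.size x * 256 ^ Nat.size x := by
      rw [Finset.card_univ, Fintype.card_coe, Finset.card_product, Finset.card_range]
      exact Nat.mul_le_mul_right _ (card_act _)
    have hcard' : ((Finset.univ : Finset (I x)).card : ℝ) ≤
        6 * 64 ^ Nat.size x * 256 ^ Nat.size x := by exact_mod_cast hcard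
    have h4 : (256 : ℝ) ^ Nat.size x = 4 ^ Nat.size x * 64 ^ Nat.size x := by
      rw [← mul_pow]; norm_num
    calc _ ≤ 6 * 64 ^ Nat.size x * 256 ^ Nat.size x * (((256 : ℝ) ^ Nat.size x)⁻¹) ^ 2 := by gcongr
      _ = 6 * (1 / 4 ^ Nat.size x) := by rw [h4]; field_simp
      _ ≤ _ := by
        gcongr
        exact size_bound x
  have hset : Summable (fun v : {v : Vx // v.lev ∈ act (Nat.size v.pos)} => fg v) := by
    let g : {v : Vx // v.lev ∈ act (Nat.size v.pos)} → Σ x, I x := fun v =>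
      ⟨v.1.pos, ⟨(v.1.lev, v.1.word), Finset.mem_product.2 ⟨v.2, Finset.mem_range.2 v.1.word_lt⟩⟩⟩
    have hg : Function.Injective g := by
      rintro ⟨u, hu⟩ ⟨v, hv⟩ h
      have h1 : u.pos = v.pos := congrArg Sigma.fst h
      have h2 : u.lev = v.lev := congrArg (fun q : Σ x, I x => q.2.1.1) h
      have h3 : u.word = v.word := congrArg (fun q : Σ x, I x => q.2.1.2) h
      exact Subtype.ext (ext' h2 h1 h3)
    refine (hF.comp_injective hg).congr fun v => ?_
    rw [fg, if_pos v.2]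
    rfl
  have := (summable_subtype_iff_indicator (f := fg) (s := {v : Vx | v.lev ∈ act (Nat.size v.pos)})).1 hset
  refine this.congr fun v => ?_
  rw [Set.indicator_apply]
  split_ifs with h
  · rfl
  · exact (if_neg h).symm

open Classical in
/-- `fg` summed over the pairs of a relation which determines its first entry from the second. -/
theorem summable_rel {P : Vx → Vx → Prop} (hP : ∀ u u' v, P u v → P u' v → u = u')  :
    Summable (fun p : Vx × Vx => if P p.1 p.2 then fg p.2 else 0) := by
  have h1 : Summable (fun p : {p : Vx × Vx // P p.1 p.2} => fg p.1.2) := by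
    refine summable_fg.comp_injective (i := fun p : {p : Vx × Vx // P p.1 p.2} => p.1.2) ?_
    rintro ⟨⟨u, v⟩, h⟩ ⟨⟨u', v'⟩, h'⟩ e
    dsimp only at e h h'
    subst e
    simpa using hP _ _ _ h h'
  have := (summable_subtype_iff_indicator (f := fun p : Vx × Vx => fg p.2)
    (s := {p : Vx × Vx | P p.1 p.2})).1 h1
  refine this.congr fun p => ?_
  rw [Set.indicator_apply]
  rfl

theorem sou_transient : Transient Sou := by
  classical
  refine ⟨origin, flow, flow_isFlow, ?_, ?_, ?_⟩
  · rw [divg_flow]; exact if_pos ⟨rfl, rfl⟩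
  · intro v hv
    rw [divg_flow, if_neg]
    rintro ⟨h1, h2⟩
    exact hv (eq_of_pos_zero h1 h2 rfl)
  · have s1 := summable_rel (P := Left) (fun _ _ _ h h' => h.unique h')
    have s2 := summable_rel (P := fun u v => u = v.par) (fun _ _ _ h h' => h.trans h'.symm)
    have s1' := s1.comp_injective (i := Prod.swap) Prod.swap_injective
    have s2' := s2.comp_injective (i := Prod.swap) Prod.swap_injective
    refine Summable.of_nonneg_of_le (fun _ => sq_nonneg _) ?_
      ((((s1.add s1').add s2).add s2').mul_left 4)
    rintro ⟨u, v⟩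
    have q : ∀ a b c d : ℝ, (a - b + c - d) ^ 2 ≤ 4 * (a ^ 2 + b ^ 2 + d ^ 2 + c ^ 2) := by
      intro a b c d
      nlinarith [sq_nonneg (a + b), sq_nonneg (a - c), sq_nonneg (a + d), sq_nonneg (b + c),
        sq_nonneg (b - d), sq_nonneg (c + d)]
    refine (q _ _ _ _).trans ?_
    have r : ∀ (p : Prop) (a b : ℝ), a ^ 2 ≤ b → (if p then a else 0) ^ 2 ≤ if p then b else 0 := by
      intro p a b h
      split_ifs
      · exact h
      · norm_num
    dsimp only [Function.comp, Prod.swap]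
    have r1 := r (Left u v) _ _ (fa_sq_le v)
    have r2 := r (Left v u) _ _ (fa_sq_le u)
    have r3 := r (v = u.par) _ _ (fb_sq_le u)
    have r4 := r (u = v.par) _ _ (fb_sq_le v)
    linarith

/-! ### Trees with small level sets are recurrent -/

/-- The parent function of a tree rooted at `o`. -/
theorem tree_parent {W : Type*} {T : SimpleGraph W} (hT : T.IsTree) (o : W) :
    ∃ p : W → W, (∀ v, v ≠ o → T.Adj (p v) v ∧ T.dist o v = T.dist o (p v) + 1) ∧
      ∀ u v, T.Adj u v → (v ≠ o ∧ u = p v) ∨ (u ≠ o ∧ v = p u) := by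
  classical
  have hex : ∀ v, v ≠ o → ∃ u, T.Adj u v ∧ T.dist o v = T.dist o u + 1 := by
    intro v hv
    obtain ⟨q, hq⟩ := hT.connected.exists_walk_length_eq_dist v o
    cases q with
    | nil => exact absurd rfl hv
    | cons h q =>
      rename_i u
      refine ⟨u, h.symm, ?_⟩
      rw [SimpleGraph.Walk.length_cons] at hq
      have h1 := SimpleGraph.dist_le q
      have h2 := hT.connected.dist_triangle (u := v) (v := u) (w := o)
      have h3 := SimpleGraph.dist_eq_one_iff_adj.2 h
      rw [SimpleGraph.dist_comm (u := o), SimpleGraph.dist_comm (u := o)]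
      omega
  have huniq : ∀ u u' v, T.Adj u v → T.Adj u' v → T.dist o v = T.dist o u + 1 →
      T.dist o v = T.dist o u' + 1 → u = u' := by
    have hwalk : ∀ u v, T.Adj u v → T.dist o v = T.dist o u + 1 →
        ∃ q : T.Walk o v, q.IsPath ∧ q.penultimate = u := by
      intro u v h hd
      obtain ⟨q, hq⟩ := hT.connected.exists_walk_length_eq_dist o u
      refine ⟨q.concat h, ?_, by simp⟩
      apply SimpleGraph.Walk.isPath_of_length_eq_dist
      rw [SimpleGraph.Walk.length_concat, hq, hd]
    intro u u' v h h' hd hd'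
    obtain ⟨q, hq, e⟩ := hwalk u v h hd
    obtain ⟨q', hq', e'⟩ := hwalk u' v h' hd'
    have : q = q' := congrArg Subtype.val ((hT.isAcyclic.subsingleton_path o v).elim ⟨q, hq⟩ ⟨q', hq'⟩)
    rw [← e, ← e', this]
  refine ⟨fun v => if h : v ≠ o then (hex v h).choose else o, ?_, ?_⟩
  · intro v hv
    simp only [dif_pos hv]
    exact (hex v hv).choose_spec
  · intro u v h
    have key : ∀ u v, T.Adj u v → T.dist o v = T.dist o u + 1 →
        v ≠ o ∧ u = if h : v ≠ o then (hex v h).choose else o := by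
      intro u v h hd
      have hv : v ≠ o := by
        rintro rfl
        simp at hd
      refine ⟨hv, ?_⟩
      rw [dif_pos hv]
      exact huniq _ _ _ h (hex v hv).choose_spec.1 hd (hex v hv).choose_spec.2
    rcases hT.dist_eq_dist_add_one_of_adj o h with h1 | h1
    · exact Or.inr (key v u h.symm h1)
    · exact Or.inl (key u v h h1)

/-- A tree with a 1-Lipschitz function `μ` whose sublevel sets are finite and whose level sets
`{μ = m}` are, along a subsequence, of cardinality `o(m)` is recurrent. Indeed a unit flow is carried
by the vertices having descendants in `{μ = m}`, hence by at most `#{μ = m}` vertices in each of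
about `m` generations, and each generation needs energy at least `1 / #{μ = m}`. -/
theorem tree_recurrent {W : Type*} {T : SimpleGraph W} (hT : T.IsTree) (μ : W → ℕ)
    (hμ : ∀ u v, T.Adj u v → μ v ≤ μ u + 1) (hfin : ∀ m, {v | μ v ≤ m}.Finite)
    (hsmall : ∀ C : ℕ, ∃ m, C * {v | μ v = m}.ncard + C < m) : ¬ Transient T := by
  classical
  rintro ⟨o, θ, ⟨hanti, hsupp⟩, hdo, hd, hsum⟩
  obtain ⟨p, hp, hadj⟩ := tree_parent hT o
  have hLip : ∀ v, μ v ≤ μ o + T.dist o v := lipschitz_of_adj hT.connected μ hμ o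
  have hLfin : ∀ n, {v | T.dist o v = n}.Finite := fun n =>
    (hfin (μ o + n)).subset fun v hv => by
      have := hLip v
      simp only [Set.mem_ofPred_eq] at hv ⊢
      omega
  -- The generations, and the flow `φ` into a vertex from its parent.
  let L : ℕ → Finset W := fun n => (hLfin n).toFinset
  have hL : ∀ n v, v ∈ L n ↔ T.dist o v = n := fun n v => by simp [L]
  let φ : W → ℝ := fun v => θ (p v) v
  have hne : ∀ n v, T.dist o v = n + 1 → v ≠ o := by
    rintro n v h rfl
    simp at h
  -- Kirchhoff's law in terms of `φ`.
  have hkirch : ∀ n v, v ∈ L n → ∑ w ∈ L (n + 1) with p w = v, φ w = if v = o then 1 else φ v := by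
    intro n v hv
    rw [hL] at hv
    have hchild : ∀ w, w ≠ o → p w = v → w ∈ L (n + 1) := by
      intro w hw hpw
      rw [hL, (hp w hw).2, hpw, hv]
    by_cases hvo : v = o
    · rw [if_pos hvo, ← hdo, divg, tsum_eq_sum (s := {w ∈ L (n + 1) | p w = v})]
      · refine Finset.sum_congr rfl fun w hw => ?_
        rw [Finset.mem_filter] at hw
        simp only [φ, hw.2, hvo]
      · intro w hw
        by_contra hθ
        rcases hadj _ _ (hsupp _ _ hθ) with ⟨h1, h2⟩ | ⟨h1, -⟩
        · exact hw (Finset.mem_filter.2 ⟨hchild w h1 (by rw [hvo, h2]), by rw [hvo, h2]⟩)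
        · exact h1 rfl
    · rw [if_neg hvo]
      have h0 := hd v hvo
      have hpv := (hp v hvo).2
      have hnot : p v ∉ {w ∈ L (n + 1) | p w = v} := by
        rw [Finset.mem_filter, hL]
        omega
      rw [divg, tsum_eq_sum (s := insert (p v) {w ∈ L (n + 1) | p w = v}),
        Finset.sum_insert hnot] at h0
      · have h1 : ∑ w ∈ L (n + 1) with p w = v, θ v w = ∑ w ∈ L (n + 1) with p w = v, φ w := by
          refine Finset.sum_congr rfl fun w hw => ?_
          rw [Finset.mem_filter] at hw
          simp only [φ, hw.2]
        rw [h1, hanti] at h0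
        simp only [φ] at h0 ⊢
        linarith
      · intro w hw
        by_contra hθ
        rw [Finset.mem_insert, not_or] at hw
        rcases hadj _ _ (hsupp _ _ hθ) with ⟨h1, h2⟩ | ⟨-, h2⟩
        · exact hw.2 (Finset.mem_filter.2 ⟨hchild w h1 h2.symm, h2.symm⟩)
        · exact hw.1 h2
  have hone : ∀ n, ∑ w ∈ L (n + 1), φ w = 1 := by
    have hstep : ∀ n, ∑ w ∈ L (n + 1), φ w = ∑ v ∈ L n, if v = o then 1 else φ v := by
      intro n
      rw [← Finset.sum_fiberwise_of_maps_to (s := L (n + 1)) (t := L n) (g := p)]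
      · exact Finset.sum_congr rfl fun v hv => hkirch n v hv
      · intro w hw
        rw [hL] at hw ⊢
        have := (hp w (hne _ _ hw)).2
        omega
    intro n
    induction n with
    | zero =>
      rw [hstep]
      have : L 0 = {o} := by
        ext v
        rw [hL, Finset.mem_singleton, hT.connected.dist_eq_zero_iff, eq_comm]
      rw [this]; simp
    | succ n ih =>
      rw [hstep, ← ih]
      refine Finset.sum_congr rfl fun v hv => if_neg ?_
      rw [hL] at hv
      exact hne _ _ hv
  -- A vertex carrying flow has a descendant in each later level set of `μ`.
  have hdesc : ∀ m v, v ≠ o → φ v ≠ 0 → μ v ≤ m →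
      ∃ w j, μ w = m ∧ p^[j] w = v ∧ T.dist o w = T.dist o v + j := by
    intro m v hv hφ hm
    by_contra hcon
    push Not at hcon
    have hseq : ∀ j, ∃ w, w ≠ o ∧ φ w ≠ 0 ∧ p^[j] w = v ∧ T.dist o w = T.dist o v + j ∧ μ w ≤ m := by
      intro j
      induction j with
      | zero => exact ⟨v, hv, hφ, rfl, rfl, hm⟩
      | succ j ih =>
        obtain ⟨w, h1, h2, h3, h4, h5⟩ := ih
        have hk := hkirch _ w ((hL _ w).2 rfl)
        rw [if_neg h1] at hk
        obtain ⟨w', hw', hφ'⟩ := Finset.exists_ne_zero_of_sum_ne_zero (hk.trans_ne h2)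
        rw [Finset.mem_filter, hL] at hw'
        have hwo := hne _ _ hw'.1
        refine ⟨w', hwo, hφ', by rw [Function.iterate_succ_apply, hw'.2, h3], by omega, ?_⟩
        have h6 := hμ _ _ (hp w' hwo).1
        rw [hw'.2] at h6
        have h7 : μ w ≠ m := fun h => hcon w j h h3 h4
        omega
    choose w hw using hseq
    have hinj : Function.Injective w := by
      intro i j hij
      have h1 := (hw i).2.2.2.1
      have h2 := (hw j).2.2.2.1
      rw [hij] at h1
      omega
    exact Set.infinite_of_injective_forall_mem hinj (fun j => (hw j).2.2.2.2) (hfin m)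
  have hcard : ∀ m n, μ o + n + 1 ≤ m →
      {w ∈ L (n + 1) | φ w ≠ 0}.card ≤ {v | μ v = m}.ncard := by
    intro m n hmn
    have hSfin : {v | μ v = m}.Finite := (hfin m).subset fun v hv => le_of_eq hv
    rw [← Set.ncard_coe_finset]
    refine (Set.ncard_le_ncard (t := (fun w => p^[T.dist o w - (n + 1)] w) '' {v | μ v = m}) ?_
      (hSfin.image _)).trans (Set.ncard_image_le hSfin)
    intro v hv
    rw [Finset.mem_coe, Finset.mem_filter, hL] at hv
    have h1 := hLip v
    obtain ⟨w, j, h2, h3, h4⟩ := hdesc m v (hne _ _ hv.1) hv.2 (by omega)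
    refine ⟨w, h2, ?_⟩
    have : T.dist o w - (n + 1) = j := by omega
    simp only [this, h3]
  -- Energy estimate in each generation.
  have henergy : ∀ m n, μ o + n + 1 ≤ m →
      1 ≤ ({v | μ v = m}.ncard : ℝ) * ∑ w ∈ L (n + 1), φ w ^ 2 := by
    intro m n hmn
    have h1 : ∑ w ∈ L (n + 1) with φ w ≠ 0, φ w = 1 := by rw [Finset.sum_filter_ne_zero, hone]
    have h2 := sq_sum_le_card_mul_sum_sq (s := {w ∈ L (n + 1) | φ w ≠ 0}) (f := φ)
    rw [h1, one_pow] at h2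
    have h3 : ∑ w ∈ L (n + 1) with φ w ≠ 0, φ w ^ 2 ≤ ∑ w ∈ L (n + 1), φ w ^ 2 :=
      Finset.sum_le_sum_of_subset_of_nonneg (Finset.filter_subset _ _) fun _ _ _ => sq_nonneg _
    refine h2.trans ?_
    have h4 : (({w ∈ L (n + 1) | φ w ≠ 0}.card : ℕ) : ℝ) ≤ ({v | μ v = m}.ncard : ℝ) := by
      exact_mod_cast hcard m n hmn
    have h5 : 0 ≤ ∑ w ∈ L (n + 1) with φ w ≠ 0, φ w ^ 2 := Finset.sum_nonneg fun _ _ => sq_nonneg _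
    exact mul_le_mul h4 h3 h5 (by positivity)
  have hφsum : Summable (fun v => φ v ^ 2) :=
    hsum.comp_injective (i := fun v => (p v, v)) fun u v h => congrArg Prod.snd h
  have htot : ∀ N : ℕ, ∑ n ∈ Finset.range N, ∑ w ∈ L (n + 1), φ w ^ 2 ≤ ∑' v, φ v ^ 2 := by
    intro N
    rw [← Finset.sum_biUnion]
    · exact hφsum.sum_le_tsum _ fun _ _ => sq_nonneg _
    · intro i _ j _ hij
      rw [Function.onFun, Finset.disjoint_left]
      intro v h1 h2
      rw [hL] at h1 h2
      omega
  obtain ⟨C, hC⟩ := exists_nat_ge (∑' v, φ v ^ 2)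
  obtain ⟨m, hm⟩ := hsmall (C + μ o)
  have h1 : ((m - μ o : ℕ) : ℝ) ≤ ({v | μ v = m}.ncard : ℝ) * C := by
    calc ((m - μ o : ℕ) : ℝ) = ∑ n ∈ Finset.range (m - μ o), (1 : ℝ) := by simp
      _ ≤ ∑ n ∈ Finset.range (m - μ o),
          ({v | μ v = m}.ncard : ℝ) * ∑ w ∈ L (n + 1), φ w ^ 2 := by
        refine Finset.sum_le_sum fun n hn => henergy m n ?_
        rw [Finset.mem_range] at hn
        omega
      _ = ({v | μ v = m}.ncard : ℝ) *
          ∑ n ∈ Finset.range (m - μ o), ∑ w ∈ L (n + 1), φ w ^ 2 := by rw [Finset.mul_sum]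
      _ ≤ _ := by
        gcongr
        exact (htot _).trans hC
  have h2 : m - μ o ≤ {v | μ v = m}.ncard * C := by exact_mod_cast h1
  have h3 : {v | μ v = m}.ncard * C ≤ (C + μ o) * {v | μ v = m}.ncard := by
    rw [mul_comm]; exact Nat.mul_le_mul_right _ (by omega)
  omega

/-! ### Subtrees are recurrent -/

theorem shell_le_finite (m : ℕ) : {v : Vx | v.shell ≤ m}.Finite := by
  have h : ((Finset.range (m + 1) ×ˢ (Finset.range (2 ^ m) ×ˢ Finset.range (256 ^ m)) :
    Finset (ℕ × ℕ × ℕ)) : Set (ℕ × ℕ × ℕ)).Finite := Finset.finite_toSet _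
  refine (h.preimage (f := code) code_injective.injOn).subset fun v hv => ?_
  simp only [Set.mem_ofPred_eq, shell] at hv
  have h1 := v.word_lt
  have h2 := Nat.lt_size_self v.pos
  have h3 : 256 ^ Nat.size v.pos ≤ 256 ^ m := Nat.pow_le_pow_right (by norm_num) (by omega)
  have h4 : 2 ^ Nat.size v.pos ≤ 2 ^ m := Nat.pow_le_pow_right (by norm_num) (by omega)
  simp only [Set.mem_preimage, Finset.mem_coe, Finset.mem_product, Finset.mem_range, code]
  omega

/-- The narrow shells of stage `i` have at most `512 ^ i` vertices. -/
theorem shell_ncard {m : ℕ} (hm : Narrow m) : {v : Vx | v.shell = m}.ncard ≤ 512 ^ stage m := by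
  have hc : (Finset.range (2 ^ stage m) ×ˢ Finset.range (256 ^ stage m)).card = 512 ^ stage m := by
    rw [Finset.card_product, Finset.card_range, Finset.card_range, ← mul_pow]
    norm_num
  rw [← hc, ← Set.ncard_coe_finset]
  refine Set.ncard_le_ncard_of_injOn (fun v : Vx => (v.pos, v.word)) ?_ ?_ (Finset.finite_toSet _)
  · intro v hv
    have hv' : v.shell = m := hv
    have h0 := v.size_le_cap
    rw [hv', cap, if_pos hm] at h0
    have h1 := v.word_lt
    have h2 := Nat.lt_size_self v.pos
    have h3 : 256 ^ Nat.size v.pos ≤ 256 ^ stage m := Nat.pow_le_pow_right (by norm_num) h0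
    have h4 : 2 ^ Nat.size v.pos ≤ 2 ^ stage m := Nat.pow_le_pow_right (by norm_num) h0
    simp only [Finset.mem_coe, Finset.mem_product, Finset.mem_range]
    omega
  · intro u hu v hv h
    have hu' : u.shell = m := hu
    have hv' : v.shell = m := hv
    simp only [Prod.mk.injEq] at h
    unfold shell at hu' hv'
    rw [h.1] at hu'
    exact ext' (by omega) h.1 h.2

theorem stage_eq {i m : ℕ} (h1 : 1 ≤ i) (h2 : 1024 ^ i ≤ m) (h3 : m ≤ 1024 ^ i + 2 * 32 ^ i) :
    stage m = i := by
  unfold stage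
  rw [Nat.log_eq_iff (Or.inl (by omega))]
  refine ⟨h2, ?_⟩
  have h4 : 32 ^ i ≤ 1024 ^ i := Nat.pow_le_pow_left (by norm_num) _
  have h5 : 1 ≤ 1024 ^ i := Nat.one_le_pow _ _ (by norm_num)
  rw [pow_succ]
  omega

theorem narrow_of {i m : ℕ} (h1 : 1 ≤ i) (h2 : 1024 ^ i ≤ m) (h3 : m ≤ 1024 ^ i + 2 * 32 ^ i) :
    Narrow m := by
  have := stage_eq h1 h2 h3
  exact ⟨by omega, by rw [this]; exact h3⟩

theorem subtree_recurrent (H : Sou.Subgraph) (hH : H.coe.IsTree) : ¬ Transient H.coe := by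
  refine tree_recurrent hH (fun v => v.1.shell) (fun u v h => shell_adj (H.adj_sub h)) ?_ ?_
  · intro m
    exact (shell_le_finite m).preimage (f := Subtype.val) Subtype.val_injective.injOn
  · intro C
    refine ⟨1024 ^ (2 * C + 1), ?_⟩
    have hn := narrow_of (i := 2 * C + 1) (by omega) le_rfl (Nat.le_add_right _ _)
    have hs := stage_eq (i := 2 * C + 1) (by omega) le_rfl (Nat.le_add_right _ _)
    have h1 := shell_ncard hn
    rw [hs] at h1
    have h2 : {v : H.verts | v.1.shell = 1024 ^ (2 * C + 1)}.ncard ≤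
        {v : Vx | v.shell = 1024 ^ (2 * C + 1)}.ncard :=
      Set.ncard_le_ncard_of_injOn Subtype.val (fun v hv => hv) Subtype.val_injective.injOn
        ((shell_le_finite _).subset fun v hv => le_of_eq hv)
    have h3 : 2 * C + 1 < 2 ^ (2 * C + 1) := Nat.lt_two_pow_self
    have h4 : 1024 ^ (2 * C + 1) = 512 ^ (2 * C + 1) * 2 ^ (2 * C + 1) := by
      rw [← mul_pow]; norm_num
    have h5 : 1 ≤ 512 ^ (2 * C + 1) := Nat.one_le_pow _ _ (by norm_num)
    have h6 := h2.trans h1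
    generalize {v : H.verts | v.1.shell = 1024 ^ (2 * C + 1)}.ncard = N at *
    rw [h4]
    generalize 512 ^ (2 * C + 1) = Q at *
    generalize 2 ^ (2 * C + 1) = R at *
    nlinarith

/-! ### The Liouville property -/

theorem harmonic_sum {h : Vx → ℝ} (hh : Harmonic Sou h) (v : Vx) :
    ∑ w ∈ (nbr_finite v).toFinset, (h v - h w) = 0 := by
  have h1 := hh v
  rw [finsum_mem_eq_finite_toFinset_sum _ (nbr_finite v),
    Set.ncard_eq_toFinset_card _ (nbr_finite v)] at h1
  rw [Finset.sum_sub_distrib, Finset.sum_const, nsmul_eq_mul, h1, sub_self]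

/-- Maximum principle for the balls `{shell ≤ m}`. A maximiser of largest height lies in the shell
`m`, as otherwise its parent would be a maximiser as well. -/
theorem max_principle {h : Vx → ℝ} (hh : Harmonic Sou h) {u : Vx} {m : ℕ} (hu : u.shell ≤ m) :
    ∃ v : Vx, v.shell = m ∧ h u ≤ h v := by
  classical
  let F : Finset Vx := (shell_le_finite m).toFinset
  have hF : ∀ v, v ∈ F ↔ v.shell ≤ m := fun v => by simp [F]
  obtain ⟨a, haF, ha⟩ := Finset.exists_max_image F h ⟨u, (hF u).2 hu⟩
  obtain ⟨v, hv, hmax⟩ := Finset.exists_max_image {v ∈ F | h v = h a} lev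
    ⟨a, Finset.mem_filter.2 ⟨haF, rfl⟩⟩
  rw [Finset.mem_filter] at hv
  refine ⟨v, ?_, by rw [hv.2]; exact ha u ((hF u).2 hu)⟩
  by_contra hne
  have hlt : v.shell < m := lt_of_le_of_ne ((hF v).1 hv.1) hne
  have hw : ∀ w ∈ (nbr_finite v).toFinset, 0 ≤ h v - h w := by
    intro w hw
    rw [Set.Finite.mem_toFinset] at hw
    have := ha w ((hF w).2 (by have := shell_adj hw; omega))
    rw [hv.2]; linarith
  have h0 := (Finset.sum_eq_zero_iff_of_nonneg hw).1 (harmonic_sum hh v) v.par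
    (by rw [Set.Finite.mem_toFinset]; exact adj_par v)
  have h1 := hmax v.par (Finset.mem_filter.2 ⟨(hF _).2 (by have := shell_adj (adj_par v); omega),
    by linarith [hv.2]⟩)
  rw [lev_par] at h1
  omega

/-- The vertex of the shell `m` at position zero. -/
def spine (m : ℕ) : Vx := ⟨(m, 0, 0), by simp [Valid]⟩

/-- The oscillation of `h` on a shell, measured from the spine. -/
theorem exists_far {h : Vx → ℝ} (hh : Harmonic Sou h) {u₁ u₂ : Vx} {m : ℕ}
    (h1 : u₁.shell ≤ m) (h2 : u₂.shell ≤ m) :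
    ∃ v : Vx, v.shell = m ∧ h u₁ - h u₂ ≤ 2 * |h v - h (spine m)| := by
  obtain ⟨v, hv, hv'⟩ := max_principle hh h1
  have hh' : Harmonic Sou (fun v => - h v) := by
    intro v
    have := hh v
    rw [finsum_mem_eq_finite_toFinset_sum _ (nbr_finite v)] at this ⊢
    rw [Finset.sum_neg_distrib, ← this]
    ring
  obtain ⟨w, hw, hw'⟩ := max_principle hh' h2
  have a1 := le_abs_self (h v - h (spine m))
  have a2 := neg_le_abs (h w - h (spine m))
  by_cases hc : |h v - h (spine m)| ≤ |h w - h (spine m)|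
  · exact ⟨w, hw, by linarith⟩
  · exact ⟨v, hv, by linarith⟩

/-- In a narrow shell of stage `i` every vertex is joined to the spine by at most `i` vertical
edges inside the shell, which forces a gradient in each narrow shell. -/
theorem gradient_lower {h : Vx → ℝ} (hh : Harmonic Sou h) {u₁ u₂ : Vx} {m : ℕ} (hm : Narrow m)
    (hpos : 0 ≤ h u₁ - h u₂) (h1 : u₁.shell ≤ m) (h2 : u₂.shell ≤ m) (S : Finset Vx)
    (hS : ∀ v, v ∈ S ↔ v.shell = m) :
    (h u₁ - h u₂) ^ 2 ≤ 4 * stage m * ∑ v ∈ S, (h v - h v.par) ^ 2 := by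
  classical
  obtain ⟨v, hv, hfar⟩ := exists_far hh h1 h2
  have hsz := v.size_le_cap
  rw [hv, cap, if_pos hm] at hsz
  set n := Nat.size v.pos with hn
  have hspine : par^[n] v = spine m := by
    refine eq_of_pos_zero ?_ ?_ rfl
    · rw [lev_iter]; exact hv
    · rw [pos_iter]; exact Nat.div_eq_of_lt (Nat.lt_size_self _)
  have hshell : ∀ j, j ≤ n → (par^[j] v).shell = m := by
    intro j
    induction j with
    | zero => intro _; exact hv
    | succ j ih =>
      intro hj
      rw [Function.iterate_succ_apply', ← ih (by omega)]
      rcases shell_par_cases (par^[j] v) with h | h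
      · exact h.1
      · exfalso
        have h3 := h.2
        rw [pos_iter] at h3
        have h4 : v.pos < 2 ^ j := by
          rcases (Nat.div_eq_zero_iff).1 h3 with h5 | h5
          · have : 0 < 2 ^ j := by positivity
            omega
          · exact h5
        have := Nat.size_le.2 h4
        omega
  have htel : h v - h (spine m) = ∑ j ∈ Finset.range n, (h (par^[j] v) - h (par^[j] v).par) := by
    rw [← hspine]
    have := Finset.sum_range_sub' (fun j => h (par^[j] v)) n
    simp only [Function.iterate_succ_apply', Function.iterate_zero, id] at this
    exact this.symm
  have hcs := sq_sum_le_card_mul_sum_sq (s := Finset.range n)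
    (f := fun j => h (par^[j] v) - h (par^[j] v).par)
  rw [← htel, Finset.card_range] at hcs
  have hsub : ∑ j ∈ Finset.range n, (h (par^[j] v) - h (par^[j] v).par) ^ 2 ≤
      ∑ v ∈ S, (h v - h v.par) ^ 2 := by
    have hinj : Set.InjOn (fun j => par^[j] v) (Finset.range n : Set ℕ) := by
      intro i _ j _ hij
      have := congrArg lev hij
      simp only [lev_iter] at this
      omega
    rw [← Finset.sum_image (f := fun v : Vx => (h v - h v.par) ^ 2) (g := fun j => par^[j] v) hinj]
    refine Finset.sum_le_sum_of_subset_of_nonneg ?_ fun _ _ _ => sq_nonneg _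
    intro w hw
    rw [Finset.mem_image] at hw
    obtain ⟨j, hj, rfl⟩ := hw
    rw [Finset.mem_range] at hj
    exact (hS _).2 (hshell j hj.le)
  have hle : (n : ℝ) ≤ stage m := by exact_mod_cast hsz
  have h0 : 0 ≤ ∑ v ∈ S, (h v - h v.par) ^ 2 := Finset.sum_nonneg fun _ _ => sq_nonneg _
  calc (h u₁ - h u₂) ^ 2 ≤ (2 * |h v - h (spine m)|) ^ 2 := by gcongr
    _ = 4 * (h v - h (spine m)) ^ 2 := by rw [mul_pow, sq_abs]; norm_num
    _ ≤ 4 * (n * ∑ j ∈ Finset.range n, (h (par^[j] v) - h (par^[j] v).par) ^ 2) := by gcongr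
    _ ≤ 4 * (stage m * ∑ v ∈ S, (h v - h v.par) ^ 2) := by gcongr
    _ = _ := by ring

/-- The pointwise inequality behind the Caccioppoli inequality: write `a² x - b² y` as
`(a² + b²) (x - y) / 2 + (a² - b²) (x + y) / 2` and absorb the second term. -/
theorem pair_ineq {a b x y M : ℝ} (hx : |x| ≤ M) (hy : |y| ≤ M) :
    (a ^ 2 + b ^ 2) * (x - y) ^ 2 ≤
      4 * ((a ^ 2 * x - b ^ 2 * y) * (x - y)) + 8 * M ^ 2 * (a - b) ^ 2 := by
  have hM : 0 ≤ M := (abs_nonneg x).trans hx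
  have hs : (x + y) ^ 2 ≤ (2 * M) ^ 2 := by
    rw [abs_le] at hx hy
    apply sq_le_sq'
    · linarith [hx.1, hy.1]
    · linarith [hx.2, hy.2]
  have h1 : 0 ≤ ((a + b) * (x - y) + 2 * (a - b) * (x + y)) ^ 2 := sq_nonneg _
  have h2 : 0 ≤ (a - b) ^ 2 * (x - y) ^ 2 := by positivity
  have h3 : (a - b) ^ 2 * (x + y) ^ 2 ≤ (a - b) ^ 2 * (2 * M) ^ 2 :=
    mul_le_mul_of_nonneg_left hs (sq_nonneg _)
  nlinarith

open Classical in
/-- Caccioppoli's inequality, for a cutoff function `f` supported in the interior of `F`. -/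
theorem caccioppoli {h f : Vx → ℝ} {M : ℝ} (hh : Harmonic Sou h) (hM : ∀ v, |h v| ≤ M)
    (F : Finset Vx) (hF : ∀ v w, f v ≠ 0 → Sou.Adj v w → w ∈ F) :
    ∑ v ∈ F, ∑ w ∈ F, (if Sou.Adj v w then (f v ^ 2 + f w ^ 2) * (h v - h w) ^ 2 else 0) ≤
      8 * M ^ 2 * ∑ v ∈ F, ∑ w ∈ F, (if Sou.Adj v w then (f v - f w) ^ 2 else 0) := by
  -- Test the equation against `f ^ 2 * h`.
  have hz : ∑ v ∈ F, ∑ w ∈ F, (if Sou.Adj v w then f v ^ 2 * h v * (h v - h w) else 0) = 0 := by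
    refine Finset.sum_eq_zero fun v _ => ?_
    by_cases hv : f v = 0
    · simp [hv]
    · rw [← Finset.sum_filter, ← Finset.mul_sum]
      have : F.filter (Sou.Adj v) = (nbr_finite v).toFinset := by
        ext w
        rw [Finset.mem_filter, Set.Finite.mem_toFinset]
        exact ⟨fun h => h.2, fun h => ⟨hF v w hv h, h⟩⟩
      rw [this, harmonic_sum hh, mul_zero]
  have hz' : ∑ v ∈ F, ∑ w ∈ F, (if Sou.Adj v w then f w ^ 2 * h w * (h w - h v) else 0) = 0 := by
    rw [Finset.sum_comm]
    refine Eq.trans ?_ hz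
    refine Finset.sum_congr rfl fun v _ => Finset.sum_congr rfl fun w _ => ?_
    rw [Sou.adj_comm]
  have hle : ∑ v ∈ F, ∑ w ∈ F, (if Sou.Adj v w then (f v ^ 2 + f w ^ 2) * (h v - h w) ^ 2 else 0) ≤
      ∑ v ∈ F, ∑ w ∈ F, (4 * (if Sou.Adj v w then f v ^ 2 * h v * (h v - h w) else 0) +
        4 * (if Sou.Adj v w then f w ^ 2 * h w * (h w - h v) else 0) +
        8 * M ^ 2 * (if Sou.Adj v w then (f v - f w) ^ 2 else 0)) := by
    refine Finset.sum_le_sum fun v _ => Finset.sum_le_sum fun w _ => ?_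
    split_ifs
    · have := pair_ineq (a := f v) (b := f w) (hM v) (hM w)
      linarith
    · simp
  refine hle.trans (le_of_eq ?_)
  simp only [Finset.sum_add_distrib, ← Finset.mul_sum, hz, hz']
  ring

/-- The main estimate: the width `p = 32 ^ i` of the narrow region gains a factor
`p ^ 2 = 1024 ^ i`, which beats the number of vertices in a shell. -/
theorem liouville_bound {h : Vx → ℝ} {M : ℝ} (hh : Harmonic Sou h) (hM : ∀ v, |h v| ≤ M)
    {u₁ u₂ : Vx} (hpos : 0 ≤ h u₁ - h u₂) {i : ℕ} (hi : 1 ≤ i)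
    (h1 : u₁.shell ≤ 1024 ^ i) (h2 : u₂.shell ≤ 1024 ^ i) :
    2 ^ i * (h u₁ - h u₂) ^ 2 ≤ 128000 * M ^ 2 * i := by
  classical
  set p := 32 ^ i with hp
  set m₀ := 1024 ^ i with hm₀
  have hp1 : 1 ≤ p := Nat.one_le_pow _ _ (by norm_num)
  let t : ℕ → ℕ := fun n => min p (m₀ + 2 * p - n)
  let f : Vx → ℝ := fun v => (t v.shell : ℝ)
  let F : Finset Vx := (shell_le_finite (m₀ + 2 * p)).toFinset
  have hF : ∀ v, v ∈ F ↔ v.shell ≤ m₀ + 2 * p := fun v => by simp [F]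
  have hfF : ∀ v w, f v ≠ 0 → Sou.Adj v w → w ∈ F := by
    intro v w hv hvw
    rw [hF]
    have h3 := shell_adj hvw
    have h4 : t v.shell ≠ 0 := by
      intro h
      exact hv (by simp only [f, h, Nat.cast_zero])
    simp only [t] at h4
    omega
  have hcac := caccioppoli hh hM F hfF
  let S : ℕ → Finset Vx := fun m => F.filter (fun v => v.shell = m)
  have hS : ∀ m, m ≤ m₀ + 2 * p → ∀ v, v ∈ S m ↔ v.shell = m := by
    intro m hm v
    rw [Finset.mem_filter, hF]
    exact ⟨fun h => h.2, fun h => ⟨by omega, h⟩⟩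
  have hdisj : ∀ A : Finset ℕ, Set.PairwiseDisjoint (A : Set ℕ) S := by
    intro A a _ b _ hab
    rw [Function.onFun, Finset.disjoint_left]
    intro v h1 h2
    rw [Finset.mem_filter] at h1 h2
    exact hab (h1.2.symm.trans h2.2)
  -- Lower bound: vertical edges in the shells where `f = p`.
  have hlow : (p : ℝ) ^ 2 * ∑ j ∈ Finset.range p, ∑ v ∈ S (m₀ + j), (h v - h v.par) ^ 2 ≤
      ∑ v ∈ F, ∑ w ∈ F, (if Sou.Adj v w then (f v ^ 2 + f w ^ 2) * (h v - h w) ^ 2 else 0) := by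
    have e1 : ∑ j ∈ Finset.range p, ∑ v ∈ S (m₀ + j), (h v - h v.par) ^ 2 =
        ∑ v ∈ (Finset.range p).biUnion (fun j => S (m₀ + j)), (h v - h v.par) ^ 2 := by
      rw [Finset.sum_biUnion]
      intro a _ b _ hab
      exact hdisj {m₀ + a, m₀ + b} (by simp) (by simp) (by omega)
    rw [e1, Finset.mul_sum]
    have hsubset : (Finset.range p).biUnion (fun j => S (m₀ + j)) ⊆ F := by
      intro v hv
      rw [Finset.mem_biUnion] at hv
      obtain ⟨j, -, hv⟩ := hv
      exact (Finset.mem_filter.1 hv).1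
    have hnn : ∀ v w, 0 ≤ (if Sou.Adj v w then (f v ^ 2 + f w ^ 2) * (h v - h w) ^ 2 else 0) := by
      intro v w
      split_ifs <;> positivity
    refine (Finset.sum_le_sum fun v hv => ?_).trans
      (Finset.sum_le_sum_of_subset_of_nonneg hsubset fun v _ _ =>
        Finset.sum_nonneg fun w _ => hnn v w)
    rw [Finset.mem_biUnion] at hv
    obtain ⟨j, hj, hv⟩ := hv
    rw [Finset.mem_range] at hj
    have hvs := (hS _ (by omega) v).1 hv
    have hpF : v.par ∈ F := by
      rw [hF]
      have := shell_adj (adj_par v)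
      omega
    refine le_trans ?_ (Finset.single_le_sum (fun w _ => hnn v w) hpF)
    rw [if_pos (adj_par v)]
    have hfv : f v = p := by
      simp only [f, t, hvs]
      congr 1
      omega
    rw [hfv]
    gcongr
    have := sq_nonneg (f v.par)
    linarith
  have hlow2 : (p : ℝ) * (h u₁ - h u₂) ^ 2 ≤
      4 * i * ∑ j ∈ Finset.range p, ∑ v ∈ S (m₀ + j), (h v - h v.par) ^ 2 := by
    rw [Finset.mul_sum]
    have : ∑ j ∈ Finset.range p, (h u₁ - h u₂) ^ 2 = (p : ℝ) * (h u₁ - h u₂) ^ 2 := by simp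
    rw [← this]
    refine Finset.sum_le_sum fun j hj => ?_
    rw [Finset.mem_range] at hj
    have hs := stage_eq (i := i) (m := m₀ + j) hi (by omega) (by omega)
    have := gradient_lower hh (narrow_of (i := i) (m := m₀ + j) hi (by omega) (by omega)) hpos
      (by omega) (by omega) (S (m₀ + j)) (hS _ (by omega))
    rwa [hs] at this
  -- Upper bound: `f` varies only in the outer half of the narrow region.
  have hup : ∑ v ∈ F, ∑ w ∈ F, (if Sou.Adj v w then (f v - f w) ^ 2 else 0) ≤
      2000 * ((p + 1) * 512 ^ i) := by
    let B : Finset Vx := (Finset.range (p + 1)).biUnion fun j => S (m₀ + p + j)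
    have hB : B.card ≤ (p + 1) * 512 ^ i := by
      refine Finset.card_biUnion_le.trans ?_
      have : ∑ j ∈ Finset.range (p + 1), 512 ^ i = (p + 1) * 512 ^ i := by simp
      rw [← this]
      refine Finset.sum_le_sum fun j hj => ?_
      rw [Finset.mem_range] at hj
      have hs := stage_eq (i := i) (m := m₀ + p + j) hi (by omega) (by omega)
      have h3 := shell_ncard (narrow_of (i := i) (m := m₀ + p + j) hi (by omega) (by omega))
      rw [hs] at h3
      rw [← Set.ncard_coe_finset]
      have hset : (S (m₀ + p + j) : Set Vx) = {v : Vx | v.shell = m₀ + p + j} :=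
        Set.ext fun v => hS _ (by omega) v
      rwa [hset]
    have hBF : B ⊆ F := by
      intro v hv
      rw [Finset.mem_biUnion] at hv
      obtain ⟨j, -, hv⟩ := hv
      exact (Finset.mem_filter.1 hv).1
    rw [← Finset.sum_subset hBF]
    · have hrow : ∀ v ∈ B, ∑ w ∈ F, (if Sou.Adj v w then (f v - f w) ^ 2 else 0) ≤ 2000 := by
        intro v _
        rw [← Finset.sum_filter]
        have hc : (F.filter (Sou.Adj v)).card ≤ 2000 := by
          refine le_trans ?_ (nbr_ncard v)
          rw [← Set.ncard_coe_finset]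
          refine Set.ncard_le_ncard ?_ (nbr_finite v)
          intro w hw
          exact (Finset.mem_filter.1 hw).2
        have hone : ∀ w ∈ F.filter (Sou.Adj v), (f v - f w) ^ 2 ≤ 1 := by
          intro w hw
          have ha := (Finset.mem_filter.1 hw).2
          have s1 := shell_adj ha
          have s2 := shell_adj ha.symm
          have c1 : t v.shell ≤ t w.shell + 1 := by simp only [t]; omega
          have c2 : t w.shell ≤ t v.shell + 1 := by simp only [t]; omega
          have c1' : f v ≤ f w + 1 := by simp only [f]; exact_mod_cast c1
          have c2' : f w ≤ f v + 1 := by simp only [f]; exact_mod_cast c2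
          rw [sq_le_one_iff_abs_le_one, abs_le]
          constructor <;> linarith
        calc _ ≤ ((F.filter (Sou.Adj v)).card : ℝ) * 1 := by
              rw [← nsmul_eq_mul]; exact Finset.sum_le_card_nsmul _ _ _ hone
          _ ≤ 2000 := by rw [mul_one]; exact_mod_cast hc
      calc _ ≤ (B.card : ℝ) * 2000 := by
            rw [← nsmul_eq_mul]; exact Finset.sum_le_card_nsmul _ _ _ hrow
        _ ≤ ((p + 1) * 512 ^ i) * 2000 := by
            gcongr
            exact_mod_cast hB
        _ = _ := by ring
    · intro v hvF hvB
      refine Finset.sum_eq_zero fun w hwF => ?_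
      split_ifs with ha
      · have s1 := shell_adj ha
        have s3 : v.shell < m₀ + p := by
          by_contra hge
          apply hvB
          rw [hF] at hvF
          rw [Finset.mem_biUnion]
          refine ⟨v.shell - (m₀ + p), Finset.mem_range.2 (by omega), ?_⟩
          exact (hS _ (by omega) v).2 (by omega)
        have : t v.shell = t w.shell := by simp only [t]; omega
        simp only [f, this, sub_self]
        norm_num
      · rfl
  have hMsq : 0 ≤ M ^ 2 := sq_nonneg M
  have hpR : (1 : ℝ) ≤ p := by exact_mod_cast hp1
  have hpp : (p : ℝ) ^ 2 = 512 ^ i * 2 ^ i := by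
    rw [hp]
    push_cast
    rw [← pow_mul, mul_comm, pow_mul, ← mul_pow]
    norm_num
  have key : (p : ℝ) ^ 2 * (p * (h u₁ - h u₂) ^ 2) ≤
      4 * i * (8 * M ^ 2 * (2000 * ((p + 1) * 512 ^ i))) := by
    calc (p : ℝ) ^ 2 * (p * (h u₁ - h u₂) ^ 2) ≤ (p : ℝ) ^ 2 *
          (4 * i * ∑ j ∈ Finset.range p, ∑ v ∈ S (m₀ + j), (h v - h v.par) ^ 2) := by gcongr
      _ = 4 * i * ((p : ℝ) ^ 2 *
          ∑ j ∈ Finset.range p, ∑ v ∈ S (m₀ + j), (h v - h v.par) ^ 2) := by ring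
      _ ≤ 4 * i * (8 * M ^ 2 * ∑ v ∈ F, ∑ w ∈ F, (if Sou.Adj v w then (f v - f w) ^ 2 else 0)) := by
          exact mul_le_mul_of_nonneg_left (hlow.trans hcac) (by positivity)
      _ ≤ _ := by gcongr
  have key2 : (p : ℝ) * 512 ^ i * (2 ^ i * (h u₁ - h u₂) ^ 2) ≤
      (p : ℝ) * 512 ^ i * (128000 * M ^ 2 * i) := by
    calc _ = (p : ℝ) ^ 2 * (p * (h u₁ - h u₂) ^ 2) := by rw [hpp]; ring
      _ ≤ _ := key
      _ ≤ 4 * i * (8 * M ^ 2 * (2000 * ((p + p) * 512 ^ i))) := by gcongr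
      _ = _ := by ring
  exact le_of_mul_le_mul_left key2 (by positivity)

theorem sou_liouville : Liouville Sou := by
  rintro h hh ⟨M, hM⟩
  have main : ∀ u v, ¬ h v < h u := by
    intro u v hlt
    have hω : 0 < (h u - h v) ^ 2 := pow_pos (sub_pos.2 hlt) 2
    obtain ⟨j, hj⟩ := exists_nat_gt (256000 * M ^ 2 / (h u - h v) ^ 2)
    rw [div_lt_iff₀ hω] at hj
    -- With `i = 2 k` one has `2 ^ i ≥ k ^ 2`, so that the two sides compare as `k ^ 2` and `k`.
    set k := j + u.shell + v.shell + 1 with hk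
    have hbig : 2 * k < 1024 ^ (2 * k) := Nat.lt_pow_self (by norm_num)
    have := liouville_bound hh hM (u₁ := u) (u₂ := v) (by linarith) (i := 2 * k) (by omega)
      (by omega) (by omega)
    have hk2 : (k : ℝ) ≤ 2 ^ k := by exact_mod_cast (Nat.lt_two_pow_self (n := k)).le
    have hk4 : (k : ℝ) * k ≤ 2 ^ (2 * k) := by
      rw [two_mul, pow_add]; gcongr
    have hkj : (j : ℝ) ≤ k := by exact_mod_cast (by omega : j ≤ k)
    have hk0 : (0 : ℝ) < k := by exact_mod_cast (by omega : 0 < k)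
    push_cast at this
    have h1 : (k : ℝ) * (k * (h u - h v) ^ 2) ≤ k * (256000 * M ^ 2) := by
      calc (k : ℝ) * (k * (h u - h v) ^ 2) = k * k * (h u - h v) ^ 2 := by ring
        _ ≤ 2 ^ (2 * k) * (h u - h v) ^ 2 := by gcongr
        _ ≤ _ := this
        _ = _ := by ring
    have h2 := le_of_mul_le_mul_left h1 hk0
    have h3 : (j : ℝ) * (h u - h v) ^ 2 ≤ k * (h u - h v) ^ 2 := by gcongr
    linarith
  exact fun u v => le_antisymm (not_lt.1 (main u v)) (not_lt.1 (main v u))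

theorem souvlaki_exists :
    ∃ (V : Type) (G : SimpleGraph V),
      G.Connected ∧ BoundedDegree G ∧
      -- (1) Gromov-hyperbolic
      GromovHyperbolic G ∧
      -- (2) any two geodesic rays eventually coincide …
      (∀ x y : ℕ → V, IsGeodesicRay G x → IsGeodesicRay G y →
        ∃ m m' : ℕ, ∀ i : ℕ, x (m + i) = y (m' + i)) ∧
      -- … in particular, exactly one geodesic ray starts at each vertex
      (∀ v : V, ∃! x : ℕ → V, IsGeodesicRay G x ∧ x 0 = v) ∧
      -- (3) transient
      Transient G ∧
      -- (4) every subtree is recurrent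
      (∀ H : G.Subgraph, H.coe.IsTree → ¬ Transient H.coe) ∧
      -- (5) Liouville
      Liouville G := by
  exact ⟨Vx, Sou, sou_connected, sou_boundedDegree, sou_hyperbolic, rays_coincide, ray_unique,
    sou_transient, subtree_recurrent, sou_liouville⟩

end Paper
end

section
/- There exists a connected graph of bounded degree that is transient, Gromov-hyperbolic, and contains no transient subtree (i.e., every subtree of it is recurrent). -/
/-!
STATEMENT 1: There exists a connected graph of bounded degree that is transient,
Gromov-hyperbolic, and contains no transient subtree (i.e., every subtree of it
is recurrent).
-/

/-!
The example is a tree-like union of dyadic hyperbolic half-planes, truncated to a prescribed depth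
over each point of a root line.

*The graph* (`hypGraph D`). Its vertices are triples `(d, w, m)`: a depth `d`, a word `w` of length
`d` over four letters, and a position `m` on a line attached to `w`. Consecutive positions on a line
are joined, and `(d, w, m)` is joined to its parent, obtained by dropping the last letter of `w` and
halving `m`. The column of `(d, w, m)` is `t = m / 2 ^ d`, the position of its ancestor on the root
line, and only depths up to `max (D (t - 1)) (D t)` are kept. All degrees are at most 11.

*Hyperbolicity.* Taking parents halves horizontal distances, and parents are never truncated.
Therefore shortest paths can be taken, up to bounded error, of the form up, along a line, down
(`exists_meet_of_walk`, `exists_agree_of_meet`), and the Gromov product at the origin is comparable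
to the length for which the geodesics to `x` and `y` fellow-travel, which is a quasi-ultrametric
quantity (`Agree.trans`). This holds for every profile `D`.

*Transience.* A unit flow runs from column `t` to column `t + 1` at depth `D t`, spread evenly over
the `4 ^ D t` lines of that depth, each of which needs `2 ^ D t` steps. It changes depth on the
columns. Its energy is at most a constant times `∑ t, 2 ^ (-D t)` (`hypGraph_transient`).

*Subtrees.* Consider a unit flow on a subtree. The current-carrying branches hanging off the cluster
of the source inside the columns below `s` are pairwise disjoint, and each of them must pass through
every later column `t`. Their number is thus at most the number `N t` of edges entering column `t`,
and by Cauchy–Schwarz the flow spends energy at least `1 / N t` at each `s < t` beyond the column of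
the source (`tree_energy_lower_bound`). If column `t = 16 ^ k` has depth at most `k`, then
`N t ≤ (k + 1) * 4 ^ k ≤ 8 ^ k`, so the energy is at least about `16 ^ k / 8 ^ k` for every `k`, and
it is infinite (`subtree_not_transient`).

The two requirements are compatible because bottlenecks are sparse: `D t` is twice the binary
logarithm of `t + 1`, except near the columns `16 ^ k`, where it is `k` (`exists_profile`).
-/

namespace Paper

variable {V : Type*}

/-! ### Flows on trees: a bottleneck bounds the energy at every earlier cut -/

/-- The spanning subgraph of `T` keeping only the edges with both endpoints in `A`. -/
def inside {W : Type*} (T : SimpleGraph W) (A : Set W) : SimpleGraph W where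
  Adj a b := T.Adj a b ∧ a ∈ A ∧ b ∈ A
  symm := ⟨fun _ _ h => ⟨h.1.symm, h.2.2, h.2.1⟩⟩
  loopless := ⟨fun _ h => h.1.ne rfl⟩

/-- Conservation: the total divergence over a finite set is the flow through its boundary. -/
lemma sum_divg_eq {W : Type*} [DecidableEq W] {θ : W → W → ℝ} (hanti : ∀ u v, θ u v = -θ v u)
    (S A : Finset W) (hAS : A ⊆ S) (hS : ∀ x ∈ A, ∀ y, θ x y ≠ 0 → y ∈ S) :
    ∑ x ∈ A, divg θ x = ∑ x ∈ A, ∑ y ∈ S \ A, θ x y := by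
  have h1 : ∀ x ∈ A, divg θ x = ∑ y ∈ S \ A, θ x y + ∑ y ∈ A, θ x y := by
    intro x hx
    rw [Finset.sum_sdiff hAS]
    refine tsum_eq_sum fun y hy => ?_
    by_contra h
    exact hy (hS x hx y h)
  have h2 : ∑ x ∈ A, ∑ y ∈ A, θ x y = 0 := by
    have h3 : ∑ x ∈ A, ∑ y ∈ A, θ x y = -∑ x ∈ A, ∑ y ∈ A, θ x y := by
      conv_lhs => rw [Finset.sum_comm]
      rw [← Finset.sum_neg_distrib]
      refine Finset.sum_congr rfl fun x _ => ?_
      rw [← Finset.sum_neg_distrib]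
      exact Finset.sum_congr rfl fun y _ => hanti y x
    linarith
  rw [Finset.sum_congr rfl h1, Finset.sum_add_distrib, h2, add_zero]

/-- In a forest, a component of the complement of a connected set `C` is attached to `C` by a
single edge. -/
lemma boundary_edge_unique {W : Type*} {T : SimpleGraph W} (hT : T.IsAcyclic) {C : Set W} {o : W}
    (hC : ∀ x ∈ C, (inside T C).Reachable o x) {u v u' v' : W} (hu : u ∈ C) (hv : v ∉ C)
    (hu' : u' ∈ C) (huv : T.Adj u v) (huv' : T.Adj u' v')
    (hr : (inside T Cᶜ).Reachable v v') : u = u' ∧ v = v' := by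
  by_contra hne
  have hb := SimpleGraph.isAcyclic_iff_forall_adj_isBridge.1 hT huv
  rw [SimpleGraph.isBridge_iff] at hb
  have hin : inside T C ≤ T \ SimpleGraph.fromEdgeSet {s(u, v)} := by
    intro a b hab
    rw [SimpleGraph.sdiff_adj]
    refine ⟨hab.1, fun h => ?_⟩
    have := hab.2
    simp only [SimpleGraph.fromEdgeSet_adj, Set.mem_singleton_iff, Sym2.eq_iff] at h
    grind
  have hout : inside T Cᶜ ≤ T \ SimpleGraph.fromEdgeSet {s(u, v)} := by
    intro a b hab
    rw [SimpleGraph.sdiff_adj]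
    refine ⟨hab.1, fun h => ?_⟩
    have := hab.2
    simp only [SimpleGraph.fromEdgeSet_adj, Set.mem_singleton_iff, Sym2.eq_iff,
      Set.mem_compl_iff] at h this
    grind
  have hedge : (T \ SimpleGraph.fromEdgeSet {s(u, v)}).Adj u' v' := by
    rw [SimpleGraph.sdiff_adj]
    refine ⟨huv', fun h => ?_⟩
    simp only [SimpleGraph.fromEdgeSet_adj, Set.mem_singleton_iff, Sym2.eq_iff] at h
    grind
  exact hb ((((hC u hu).symm.trans (hC u' hu')).mono hin).trans
    (hedge.reachable.trans (hr.symm.mono hout)))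

/-- Let `C` be a finite connected set containing the source of a unit flow on a forest, whose
neighbours all lie in a finite set `D`; `S` is a finite set containing `D` and its neighbours. Every
boundary edge of `C` carrying current leads to a branch that has to leave `D`, and these branches
are disjoint. Hence at most `L.card` boundary edges carry current, where `L` contains the edges
leaving `D`, and Cauchy–Schwarz bounds the energy in the boundary of `C` from below. -/
lemma one_le_card_mul_energy {W : Type*} [DecidableEq W] {T : SimpleGraph W} (hT : T.IsAcyclic)
    {θ : W → W → ℝ} (hθ : IsFlow T θ) {o : W} (ho : divg θ o = 1)
    (hdiv : ∀ v, v ≠ o → divg θ v = 0) (S D C : Finset W) (hCD : C ⊆ D) (hDS : D ⊆ S)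
    (hS : ∀ x ∈ D, ∀ y, T.Adj x y → y ∈ S) (hoC : o ∈ C)
    (hC : ∀ x ∈ C, (inside T (C : Set W)).Reachable o x)
    (hbd : ∀ x ∈ C, ∀ y, T.Adj x y → y ∈ D) (L : Finset (W × W))
    (hL : ∀ x ∈ D, ∀ y, y ∉ D → T.Adj x y → (x, y) ∈ L) :
    1 ≤ (L.card : ℝ) * ∑ p ∈ C ×ˢ (S \ C), θ p.1 p.2 ^ 2 := by
  classical
  have hflow : ∑ p ∈ C ×ˢ (S \ C), θ p.1 p.2 = 1 := by
    rw [Finset.sum_product, ← sum_divg_eq hθ.1 S C (hCD.trans hDS)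
      (fun x hx y h => hS x (hCD hx) y (hθ.2 _ _ h)), Finset.sum_eq_single_of_mem o hoC
      (fun b _ hb => hdiv b hb), ho]
  set E := (C ×ˢ (S \ C)).filter fun p => θ p.1 p.2 ≠ 0 with hE
  have hmemE : ∀ p ∈ E, p.1 ∈ C ∧ p.2 ∉ C ∧ T.Adj p.1 p.2 ∧ θ p.1 p.2 ≠ 0 := by
    intro p hp
    simp only [hE, Finset.mem_filter, Finset.mem_product, Finset.mem_sdiff] at hp
    exact ⟨hp.1.1, hp.1.2.2, hθ.2 _ _ hp.2, hp.2⟩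
  have hkey : ∀ p ∈ E, ∃ q ∈ L, (inside T (C : Set W)ᶜ).Reachable p.2 q.1 := by
    rintro ⟨u, v⟩ hp
    obtain ⟨hu, hv, huv, hne⟩ := hmemE _ hp
    simp only at hu hv huv hne
    by_contra! hcon
    have hvD := hbd u hu v huv
    have hout : ∀ x y, (inside T (C : Set W)ᶜ).Reachable v x → x ∈ D → x ∉ C → T.Adj x y →
        y ∉ C → y ∈ D ∧ (inside T (C : Set W)ᶜ).Reachable v y := by
      intro x y hx hxD hxC hxy hy
      refine ⟨?_, hx.trans (SimpleGraph.Adj.reachable ⟨hxy, by simpa using hxC, by simpa using hy⟩)⟩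
      by_contra hyD
      exact hcon _ (hL x hxD y hyD hxy) hx
    have hsub : ∀ x, (inside T (C : Set W)ᶜ).Reachable v x → x ∈ D ∧ x ∉ C := by
      rintro x ⟨w⟩
      have : ∀ a b, (inside T (C : Set W)ᶜ).Walk a b → (inside T (C : Set W)ᶜ).Reachable v a →
          a ∈ D ∧ a ∉ C → b ∈ D ∧ b ∉ C := by
        intro a b w
        induction w with
        | nil => exact fun _ h => h
        | cons hab _ ih =>
          intro hr ha
          have hb := hab.2.2
          simp only [Set.mem_compl_iff, Finset.mem_coe] at hb
          have := hout _ _ hr ha.1 ha.2 hab.1 hb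
          exact ih this.2 ⟨this.1, hb⟩
      exact this v x w (SimpleGraph.Reachable.refl _) ⟨hvD, hv⟩
    -- the branch beyond `(u, v)` is finite, so it cannot absorb any current
    set K := D.filter fun x => (inside T (C : Set W)ᶜ).Reachable v x with hK
    have hKD : K ⊆ D := Finset.filter_subset _ _
    have hmemK : ∀ x, x ∈ K ↔ (inside T (C : Set W)ᶜ).Reachable v x := fun x => by
      simp only [hK, Finset.mem_filter]
      exact ⟨fun h => h.2, fun h => ⟨(hsub x h).1, h⟩⟩
    have hsum := sum_divg_eq hθ.1 S K (hKD.trans hDS)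
      (fun x hx y h => hS x (hKD hx) y (hθ.2 _ _ h))
    rw [Finset.sum_eq_zero (fun x hx => hdiv x (by
      rintro rfl
      exact (hsub _ ((hmemK _).1 hx)).2 hoC))] at hsum
    rw [← Finset.sum_product', Finset.sum_eq_single_of_mem (v, u)] at hsum
    · exact hne (by rw [hθ.1]; simp only at hsum; linarith)
    · simp only [Finset.mem_product, Finset.mem_sdiff, hmemK]
      exact ⟨SimpleGraph.Reachable.refl _, hDS (hCD hu), fun h => (hsub _ h).2 hu⟩
    · rintro ⟨x, y⟩ hxy hne'
      simp only [Finset.mem_product, Finset.mem_sdiff, hmemK] at hxy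
      by_contra h0
      have hadj := hθ.2 _ _ h0
      obtain ⟨hxD, hxC⟩ := hsub x hxy.1
      have hyC : y ∈ C := by
        by_contra hyC
        exact hxy.2.2 (hout x y hxy.1 hxD hxC hadj hyC).2
      have := boundary_edge_unique hT (C := (C : Set W)) (o := o) hC hu hv hyC huv
        hadj.symm hxy.1
      exact hne' (by rw [this.1, this.2])
  choose! f hfL hf using hkey
  have hcard : E.card ≤ L.card := by
    refine Finset.card_le_card_of_injOn f (fun p hp => hfL p hp) ?_
    rintro p hp q hq hpq
    have hp' := hmemE p hp
    have hq' := hmemE q hq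
    have hr := (hf p hp).trans ((congrArg Prod.fst hpq) ▸ (hf q hq).symm)
    have := boundary_edge_unique hT (C := (C : Set W)) (o := o) hC hp'.1 hp'.2.1 hq'.1
      hp'.2.2.1 hq'.2.2.1 hr
    exact Prod.ext this.1 this.2
  have hsumE : ∑ p ∈ E, θ p.1 p.2 = 1 := by
    rw [← hflow, hE]
    exact Finset.sum_filter_ne_zero _
  calc (1 : ℝ) = (∑ p ∈ E, θ p.1 p.2) ^ 2 := by rw [hsumE]; norm_num
    _ ≤ E.card * ∑ p ∈ E, θ p.1 p.2 ^ 2 := sq_sum_le_card_mul_sum_sq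
    _ ≤ L.card * ∑ p ∈ C ×ˢ (S \ C), θ p.1 p.2 ^ 2 := by
      gcongr
      · exact Finset.filter_subset _ _

/-- If the vertices of a locally finite tree carry a level function `τ` with finite sublevel sets,
changing by at most one along edges, then a unit flow from `o` spends energy at least `1 / L.card`
on each level between `τ o` and `t`, where `L` contains the edges crossing level `t`. -/
lemma tree_energy_lower_bound {W : Type*} {T : SimpleGraph W} (hT : T.IsTree)
    {θ : W → W → ℝ} (hθ : IsFlow T θ) {o : W} (ho : divg θ o = 1)
    (hdiv : ∀ v, v ≠ o → divg θ v = 0) (hsum : Summable fun p : W × W => θ p.1 p.2 ^ 2)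
    (τ : W → ℕ) (hfin : ∀ s, {x | τ x < s}.Finite) (hτ : ∀ x y, T.Adj x y → τ y ≤ τ x + 1)
    (t : ℕ) (L : Finset (W × W))
    (hL : ∀ x y, T.Adj x y → τ x < t → t ≤ τ y → (x, y) ∈ L) :
    (t : ℝ) - τ o - 1 ≤ L.card * ∑' p : W × W, θ p.1 p.2 ^ 2 := by
  classical
  set S := (hfin (t + 1)).toFinset with hSdef
  set D := (hfin t).toFinset with hDdef
  have hmS : ∀ x, x ∈ S ↔ τ x < t + 1 := fun x => by simp [hSdef]
  have hmD : ∀ x, x ∈ D ↔ τ x < t := fun x => by simp [hDdef]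
  set C : ℕ → Finset W := fun s =>
    D.filter fun x => τ x < s ∧ (inside T {x | τ x < s}).Reachable o x with hCdef
  have hmC : ∀ s, s < t → ∀ x, x ∈ C s ↔
      τ x < s ∧ (inside T {x | τ x < s}).Reachable o x := fun s hs x => by
    simp only [hCdef, Finset.mem_filter, hmD]
    exact ⟨fun h => h.2, fun h => ⟨by omega, h⟩⟩
  -- a boundary edge of the `s`-th cluster joins level `s - 1` to level `s`
  have hbdry : ∀ s, s < t → ∀ x ∈ C s, ∀ y, y ∉ C s → T.Adj x y → τ y = s ∧ τ x + 1 = s := by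
    intro s hs x hx y hy hxy
    rw [hmC s hs] at hx hy
    have h1 := hτ x y hxy
    have : ¬ τ y < s := fun h =>
      hy ⟨h, hx.2.trans (SimpleGraph.Adj.reachable ⟨hxy, hx.1, h⟩)⟩
    have := hx.1
    omega
  set I := Finset.Ioo (τ o) t with hI
  have hlevel : ∀ s ∈ I, 1 ≤ (L.card : ℝ) * ∑ p ∈ C s ×ˢ (S \ C s), θ p.1 p.2 ^ 2 := by
    intro s hs
    rw [hI, Finset.mem_Ioo] at hs
    have hoC : o ∈ C s := (hmC s hs.2 o).2 ⟨hs.1, SimpleGraph.Reachable.refl _⟩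
    refine one_le_card_mul_energy hT.isAcyclic hθ ho hdiv S D (C s) (Finset.filter_subset _ _)
      (fun x => by rw [hmS, hmD]; omega) ?_ hoC ?_ ?_ L ?_
    · intro x hx y hxy
      rw [hmD] at hx
      rw [hmS]
      have := hτ x y hxy
      omega
    · intro x hx
      obtain ⟨hxs, ⟨w⟩⟩ := (hmC s hs.2 x).1 hx
      have : ∀ a b, (inside T {x | τ x < s}).Walk a b → a ∈ C s →
          (inside T (C s : Set W)).Reachable a b := by
        intro a b w
        induction w with
        | nil => exact fun _ => SimpleGraph.Reachable.refl _
        | cons hab _ ih =>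
          intro ha
          have hb := (hmC s hs.2 _).2 ⟨hab.2.2, ((hmC s hs.2 _).1 ha).2.trans hab.reachable⟩
          refine SimpleGraph.Reachable.trans (SimpleGraph.Adj.reachable ?_) (ih hb)
          exact ⟨hab.1, by simpa using ha, by simpa using hb⟩
      exact this _ _ w hoC
    · intro x hx y hxy
      rw [hmD]
      have := hτ x y hxy
      have := ((hmC s hs.2 x).1 hx).1
      omega
    · intro x hx y hy hxy
      rw [hmD] at hx hy
      exact hL x y hxy hx (by omega)
  have htotal : ∑ s ∈ I, ∑ p ∈ C s ×ˢ (S \ C s), θ p.1 p.2 ^ 2 ≤ ∑' p : W × W, θ p.1 p.2 ^ 2 := by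
    have h1 : ∀ s ∈ I, ∑ p ∈ C s ×ˢ (S \ C s), θ p.1 p.2 ^ 2 =
        ∑ p ∈ (C s ×ˢ (S \ C s)).filter fun p => θ p.1 p.2 ^ 2 ≠ 0, θ p.1 p.2 ^ 2 := fun s _ =>
      (Finset.sum_filter_ne_zero _).symm
    rw [Finset.sum_congr rfl h1, ← Finset.sum_biUnion]
    · exact hsum.sum_le_tsum _ fun p _ => sq_nonneg _
    · have hlev : ∀ s ∈ I, ∀ p ∈ (C s ×ˢ (S \ C s)).filter fun p => θ p.1 p.2 ^ 2 ≠ 0,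
          τ p.2 = s := by
        intro s hs p hp
        rw [hI, Finset.mem_Ioo] at hs
        simp only [Finset.mem_filter, Finset.mem_product, Finset.mem_sdiff] at hp
        exact (hbdry s hs.2 _ hp.1.1 _ hp.1.2.2 (hθ.2 _ _ fun h => hp.2 (by rw [h]; norm_num))).1
      intro s hs s' hs' hne
      rw [Function.onFun, Finset.disjoint_left]
      intro p hp hp'
      exact hne ((hlev s hs p hp).symm.trans (hlev s' hs' p hp'))
  have hcard : (t : ℝ) - τ o - 1 ≤ I.card := by
    rw [hI, Nat.card_Ioo]
    have : t ≤ (t - τ o - 1) + τ o + 1 := by omega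
    have : (t : ℝ) ≤ ((t - τ o - 1 : ℕ) : ℝ) + τ o + 1 := by exact_mod_cast this
    linarith
  calc (t : ℝ) - τ o - 1 ≤ I.card := hcard
    _ = ∑ s ∈ I, (1 : ℝ) := by simp
    _ ≤ ∑ s ∈ I, (L.card : ℝ) * ∑ p ∈ C s ×ˢ (S \ C s), θ p.1 p.2 ^ 2 := Finset.sum_le_sum hlevel
    _ = (L.card : ℝ) * ∑ s ∈ I, ∑ p ∈ C s ×ˢ (S \ C s), θ p.1 p.2 ^ 2 := by rw [Finset.mul_sum]
    _ ≤ _ := by gcongr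

/-! ### The graph -/

/-- The largest depth allowed in column `t`. For `t = 0` the truncated difference makes this
`D 0`. -/
def maxDepth (D : ℕ → ℕ) (t : ℕ) : ℕ := max (D (t - 1)) (D t)

/-- Vertices `(depth, idx, pos)`: `idx` is a word of length `depth` over a four-letter alphabet,
encoded as a number below `4 ^ depth`, and `pos` is a position on the line attached to that word,
on which one unit of length of the root line is subdivided into `2 ^ depth` steps. Over the column
`t` of the root line only the depths up to `maxDepth D t` are kept. -/
@[ext] structure Vtx (D : ℕ → ℕ) where
  /-- length of the word -/
  depth : ℕ
  /-- the word, as a number -/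
  idx : ℕ
  /-- position on the line over the word -/
  pos : ℕ
  idx_lt : idx < 4 ^ depth
  depth_le : depth ≤ maxDepth D (pos / 2 ^ depth)

variable {D : ℕ → ℕ}

/-- The position on the root line lying above `x`. -/
def Vtx.col (x : Vtx D) : ℕ := x.pos / 2 ^ x.depth

/-- `y` is the successor of `x` on the same line. -/
def HStep (x y : Vtx D) : Prop := y.depth = x.depth ∧ y.idx = x.idx ∧ y.pos = x.pos + 1

/-- `y` is a child of `x`: drop the last letter of the word and halve the position. -/
def VStep (x y : Vtx D) : Prop := y.depth = x.depth + 1 ∧ y.idx / 4 = x.idx ∧ y.pos / 2 = x.pos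

/-- Dyadic hyperbolic half-planes glued together along a four-regular branching, truncated
according to the depth profile `D`. -/
def hypGraph (D : ℕ → ℕ) : SimpleGraph (Vtx D) where
  Adj x y := HStep x y ∨ HStep y x ∨ VStep x y ∨ VStep y x
  symm := ⟨fun x y h => by tauto⟩
  loopless := ⟨fun x h => by unfold HStep VStep at h; omega⟩

lemma VStep.col_eq {x y : Vtx D} (h : VStep x y) : y.col = x.col := by
  obtain ⟨h1, h2, h3⟩ := h
  rw [Vtx.col, Vtx.col, h1, ← h3, pow_succ', Nat.div_div_eq_div_mul]

lemma HStep.col_le {x y : Vtx D} (h : HStep x y) : x.col ≤ y.col ∧ y.col ≤ x.col + 1 := by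
  obtain ⟨h1, h2, h3⟩ := h
  rw [Vtx.col, Vtx.col, h1, h3]
  refine ⟨Nat.div_le_div_right (by omega), ?_⟩
  rw [← Nat.add_div_right _ (by positivity)]
  exact Nat.div_le_div_right (by have := Nat.one_le_two_pow (n := x.depth); omega)

lemma col_le_of_adj {x y : Vtx D} (h : (hypGraph D).Adj x y) : y.col ≤ x.col + 1 := by
  rcases h with h | h | h | h
  · exact h.col_le.2
  · have := h.col_le.1; omega
  · have := h.col_eq; omega
  · have := h.col_eq; omega

lemma neighbors_bound (x : Vtx D) :
    ((hypGraph D).neighborSet x).Finite ∧ ((hypGraph D).neighborSet x).ncard ≤ 11 := by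
  classical
  set f : Vtx D → ℕ × ℕ × ℕ := fun y => (y.depth, y.idx, y.pos) with hf
  have hinj : Function.Injective f := by
    intro y z h
    simp only [hf, Prod.mk.injEq] at h
    exact Vtx.ext h.1 h.2.1 h.2.2
  set F : Finset (ℕ × ℕ × ℕ) :=
    {(x.depth, x.idx, x.pos + 1), (x.depth, x.idx, x.pos - 1),
      (x.depth - 1, x.idx / 4, x.pos / 2)} ∪
    (Finset.range 4 ×ˢ Finset.range 2).image
      fun p => (x.depth + 1, 4 * x.idx + p.1, 2 * x.pos + p.2) with hF
  have hsub : f '' ((hypGraph D).neighborSet x) ⊆ F := by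
    rintro _ ⟨y, hy, rfl⟩
    simp only [hF, hf, Finset.coe_union, Finset.coe_insert, Finset.coe_image,
      Finset.coe_singleton, Finset.coe_product, Set.mem_union, Set.mem_insert_iff,
      Set.mem_singleton_iff, Prod.mk.injEq, Set.mem_image, Prod.exists, Set.mem_prod,
      Finset.coe_range, Set.mem_Iio]
    have hy' : (hypGraph D).Adj x y := hy
    rcases hy' with h | h | h | h
    · unfold HStep at h; omega
    · unfold HStep at h; omega
    · right
      unfold VStep at h
      exact ⟨y.idx % 4, y.pos % 2, by omega, by omega, by omega, by omega⟩
    · unfold VStep at h; omega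
  have hcard : F.card ≤ 11 := by
    refine (Finset.card_union_le _ _).trans ?_
    have h1 := Finset.card_le_three (a := (x.depth, x.idx, x.pos + 1))
      (b := (x.depth, x.idx, x.pos - 1)) (c := (x.depth - 1, x.idx / 4, x.pos / 2))
    have h2 := Finset.card_image_le (s := Finset.range 4 ×ˢ Finset.range 2)
      (f := fun p => (x.depth + 1, 4 * x.idx + p.1, 2 * x.pos + p.2))
    rw [Finset.card_product, Finset.card_range, Finset.card_range] at h2
    omega
  refine ⟨Set.Finite.of_finite_image (F.finite_toSet.subset hsub) hinj.injOn, ?_⟩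
  rw [← Set.ncard_image_of_injective _ hinj]
  refine (Set.ncard_le_ncard hsub F.finite_toSet).trans ?_
  rwa [Set.ncard_coe_finset]

lemma finite_col_lt (s : ℕ) : {x : Vtx D | x.col < s}.Finite := by
  set M := ∑ t ∈ Finset.range s, maxDepth D t with hM
  refine Set.Finite.of_finite_image (f := fun y : Vtx D => (y.depth, y.idx, y.pos))
    (((Finset.range (M + 1)) ×ˢ (Finset.range (4 ^ M)) ×ˢ
      (Finset.range (s * 2 ^ M))).finite_toSet.subset ?_) ?_
  · rintro _ ⟨x, hx, rfl⟩
    have hx : x.col < s := hx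
    have hd : x.depth ≤ M := x.depth_le.trans
      (Finset.single_le_sum (f := fun t => maxDepth D t) (fun _ _ => Nat.zero_le _)
        (Finset.mem_range.2 hx))
    have hp : x.pos < s * 2 ^ x.depth := (Nat.div_lt_iff_lt_mul (by positivity)).1 hx
    simp only [Finset.coe_product, Set.mem_prod, Finset.coe_range, Set.mem_Iio]
    refine ⟨by omega, x.idx_lt.trans_le (Nat.pow_le_pow_right (by norm_num) hd), hp.trans_le ?_⟩
    exact Nat.mul_le_mul_left _ (Nat.pow_le_pow_right (by norm_num) hd)
  · intro y _ z _ h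
    simp only [Prod.mk.injEq] at h
    exact Vtx.ext h.1 h.2.1 h.2.2

/-! ### Distances in the graph -/

/-- The vertex at position `t` of the root line. -/
def rootAt (D : ℕ → ℕ) (t : ℕ) : Vtx D := ⟨0, 0, t, by norm_num, Nat.zero_le _⟩

lemma exists_ancestor (j : ℕ) : ∀ x : Vtx D, j ≤ x.depth → ∃ y : Vtx D, y.depth = x.depth - j ∧
    y.idx = x.idx / 4 ^ j ∧ y.pos = x.pos / 2 ^ j ∧
    ∃ p : (hypGraph D).Walk x y, p.length = j := by
  induction j with
  | zero => exact fun x _ => ⟨x, by simp, by simp, by simp, SimpleGraph.Walk.nil, rfl⟩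
  | succ j ih =>
    intro x hx
    have hd : x.depth = (x.depth - 1) + 1 := by omega
    set y : Vtx D := ⟨x.depth - 1, x.idx / 4, x.pos / 2, by
        have h1 := x.idx_lt
        rw [hd, pow_succ] at h1
        exact Nat.div_lt_of_lt_mul (by omega), by
        have h1 := x.depth_le
        rw [Nat.div_div_eq_div_mul, ← pow_succ', ← hd]
        omega⟩ with hy
    have hadj : (hypGraph D).Adj x y := Or.inr (Or.inr (Or.inr ⟨hd, rfl, rfl⟩))
    obtain ⟨z, h1, h2, h3, p, hp⟩ := ih y (by simp only [hy]; omega)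
    refine ⟨z, ?_, ?_, ?_, SimpleGraph.Walk.cons hadj p, by simp [hp]⟩
    · rw [h1]; simp only [hy]; omega
    · rw [h2]; simp only [hy]; rw [Nat.div_div_eq_div_mul, pow_succ']
    · rw [h3]; simp only [hy]; rw [Nat.div_div_eq_div_mul, pow_succ']

lemma exists_root_walk (s k : ℕ) :
    ∃ p : (hypGraph D).Walk (rootAt D s) (rootAt D (s + k)), p.length = k := by
  induction k with
  | zero => exact ⟨SimpleGraph.Walk.nil, rfl⟩
  | succ k ih =>
    obtain ⟨p, hp⟩ := ih
    have hadj : (hypGraph D).Adj (rootAt D (s + k)) (rootAt D (s + (k + 1))) :=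
      Or.inl ⟨rfl, rfl, rfl⟩
    exact ⟨p.concat hadj, by simp [hp]⟩

lemma exists_walk_root (x : Vtx D) :
    ∃ p : (hypGraph D).Walk x (rootAt D x.col), p.length = x.depth := by
  obtain ⟨y, h1, h2, h3, p, hp⟩ := exists_ancestor x.depth x le_rfl
  have : y = rootAt D x.col := by
    refine Vtx.ext ?_ ?_ ?_
    · rw [h1]; simp [rootAt]
    · rw [h2, Nat.div_eq_of_lt x.idx_lt]; rfl
    · rw [h3]; rfl
  subst this
  exact ⟨p, hp⟩

lemma hypGraph_connected (D : ℕ → ℕ) : (hypGraph D).Connected := by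
  have h : ∀ x : Vtx D, (hypGraph D).Reachable (rootAt D 0) x := by
    intro x
    obtain ⟨p, -⟩ := exists_walk_root x
    obtain ⟨q, -⟩ := exists_root_walk (D := D) 0 x.col
    rw [zero_add] at q
    exact q.reachable.trans p.reachable.symm
  have : Nonempty (Vtx D) := ⟨rootAt D 0⟩
  exact ⟨fun x y => (h x).symm.trans (h y)⟩

/-- The ancestors of `x` and `y` at depth `n` lie on the same line, at positions at most `k`
apart. -/
def Meet (x y : Vtx D) (n k : ℕ) : Prop :=
  n ≤ x.depth ∧ n ≤ y.depth ∧ x.idx / 4 ^ (x.depth - n) = y.idx / 4 ^ (y.depth - n) ∧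
    x.pos / 2 ^ (x.depth - n) ≤ y.pos / 2 ^ (y.depth - n) + k ∧
    y.pos / 2 ^ (y.depth - n) ≤ x.pos / 2 ^ (x.depth - n) + k

lemma div_pow_pred (a b d n : ℕ) (h : n + 1 ≤ d) :
    a / b ^ (d - n) = a / b ^ (d - (n + 1)) / b := by
  rw [Nat.div_div_eq_div_mul, ← pow_succ]
  congr 2
  omega

lemma Meet.pred {x y : Vtx D} {n k : ℕ} (h : Meet x y (n + 1) k) : Meet x y n ((k + 1) / 2) := by
  obtain ⟨h1, h2, h3, h4, h5⟩ := h
  refine ⟨by omega, by omega, ?_, ?_, ?_⟩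
  · rw [div_pow_pred _ _ _ _ h1, div_pow_pred _ _ _ _ h2, h3]
  · rw [div_pow_pred _ _ _ _ h1, div_pow_pred _ _ _ _ h2]; omega
  · rw [div_pow_pred _ _ _ _ h1, div_pow_pred _ _ _ _ h2]; omega

lemma Meet.of_le {x y : Vtx D} {n m : ℕ} (hm : m ≤ n) (h : Meet x y n 1) : Meet x y m 1 := by
  induction n with
  | zero => obtain rfl : m = 0 := by omega
            exact h
  | succ n ih =>
    rcases Nat.lt_or_ge n m with h' | h'
    · obtain rfl : m = n + 1 := by omega
      exact h
    · exact ih h' h.pred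

lemma Meet.symm {x y : Vtx D} {n k : ℕ} (h : Meet x y n k) : Meet y x n k :=
  ⟨h.2.1, h.1, h.2.2.1.symm, h.2.2.2.2, h.2.2.2.1⟩

lemma Meet.trans {x y z : Vtx D} {n k l : ℕ} (h : Meet x y n k) (h' : Meet y z n l) :
    Meet x z n (k + l) := by
  obtain ⟨h1, h2, h3, h4, h5⟩ := h
  obtain ⟨g1, g2, g3, g4, g5⟩ := h'
  exact ⟨h1, g2, h3.trans g3, by omega, by omega⟩

lemma Meet.mono {x y : Vtx D} {n k l : ℕ} (h : Meet x y n k) (hkl : k ≤ l) : Meet x y n l := by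
  obtain ⟨h1, h2, h3, h4, h5⟩ := h
  exact ⟨h1, h2, h3, by omega, by omega⟩

lemma Meet.col_le {x y : Vtx D} {k : ℕ} (h : Meet x y 0 k) : x.col ≤ y.col + k :=
  h.2.2.2.1

lemma meet_self (x : Vtx D) {n : ℕ} (hn : n ≤ x.depth) : Meet x x n 0 :=
  ⟨hn, hn, rfl, le_rfl, le_rfl⟩

lemma meet_of_VStep {x y : Vtx D} (h : VStep x y) {n : ℕ} (hn : n ≤ x.depth) : Meet x y n 0 := by
  obtain ⟨h1, h2, h3⟩ := h
  have e : y.depth - n = (x.depth - n) + 1 := by omega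
  refine ⟨hn, by omega, ?_, ?_, ?_⟩ <;>
    rw [e, pow_succ', ← Nat.div_div_eq_div_mul]
  · rw [h2]
  · rw [h3]; omega
  · rw [h3]; omega

lemma meet_of_HStep {x y : Vtx D} (h : HStep x y) {n : ℕ} (hn : n ≤ x.depth) : Meet x y n 1 := by
  obtain ⟨h1, h2, h3⟩ := h
  have : Meet x y x.depth 1 := by
    refine ⟨le_rfl, by omega, ?_, ?_, ?_⟩ <;> simp [h1, h2, h3]; omega
  exact this.of_le hn

/-- A walk from `x` to `y` is at least as long as the best path of the form up, along one line,
down. The horizontal part is measured on the untruncated line. -/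
lemma exists_meet_of_walk {x y : Vtx D} (p : (hypGraph D).Walk x y) :
    ∃ n k, Meet x y n k ∧ x.depth + y.depth + k ≤ p.length + 2 * n := by
  induction p with
  | nil => exact ⟨_, 0, meet_self _ le_rfl, by simp; omega⟩
  | @cons x x' y hadj p ih =>
    obtain ⟨n, k, hm, hk⟩ := ih
    rw [SimpleGraph.Walk.length_cons]
    have hn := hm.1
    rcases hadj with h | h | h | h
    · exact ⟨n, 1 + k, (meet_of_HStep h (by have := h.1; omega)).trans hm, by have := h.1; omega⟩
    · exact ⟨n, 1 + k, (meet_of_HStep h (by have := h.1; omega)).symm.trans hm,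
        by have := h.1; omega⟩
    · have hd := h.1
      rcases Nat.lt_or_ge x.depth n with h' | h'
      · obtain rfl : n = x.depth + 1 := by omega
        exact ⟨x.depth, (k + 1) / 2, ((meet_of_VStep h le_rfl).trans hm.pred).mono (by omega),
          by omega⟩
      · exact ⟨n, k, ((meet_of_VStep h h').trans hm).mono (by omega), by omega⟩
    · have hd := h.1
      exact ⟨n, k, ((meet_of_VStep h hn).symm.trans hm).mono (by omega), by omega⟩

lemma dist_le_of_meet {x y : Vtx D} {n : ℕ} (h : Meet x y n 1) :
    (hypGraph D).dist x y + 2 * n ≤ x.depth + y.depth + 1 := by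
  obtain ⟨h1, h2, h3, h4, h5⟩ := h
  obtain ⟨a, a1, a2, a3, p, hp⟩ := exists_ancestor (x.depth - n) x (by omega)
  obtain ⟨b, b1, b2, b3, q, hq⟩ := exists_ancestor (y.depth - n) y (by omega)
  have hab : (hypGraph D).dist a b ≤ 1 := by
    by_cases hpos : a.pos = b.pos
    · have : a = b := Vtx.ext (by omega) (by rw [a2, b2, h3]) hpos
      rw [this]; simp
    · have hadj : (hypGraph D).Adj a b := by
        rw [← a3, ← b3] at h4 h5
        rw [← a2, ← b2] at h3
        rcases Nat.lt_or_ge a.pos b.pos with hl | hl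
        · exact Or.inl ⟨by omega, h3.symm, by omega⟩
        · exact Or.inr (Or.inl ⟨by omega, h3, by omega⟩)
      exact (SimpleGraph.dist_eq_one_iff_adj.2 hadj).le
  have t1 := (hypGraph_connected D).dist_triangle (u := x) (v := a) (w := y)
  have t2 := (hypGraph_connected D).dist_triangle (u := a) (v := b) (w := y)
  have d1 := SimpleGraph.dist_le p
  have d2 := SimpleGraph.dist_le q
  rw [SimpleGraph.dist_comm] at d2
  omega

lemma dist_le_of_col_le {x y : Vtx D} (h : x.col ≤ y.col) :
    (hypGraph D).dist x y + x.col ≤ x.depth + y.depth + y.col := by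
  obtain ⟨p, hp⟩ := exists_walk_root x
  obtain ⟨q, hq⟩ := exists_walk_root y
  obtain ⟨r, hr⟩ := exists_root_walk (D := D) x.col (y.col - x.col)
  have e : x.col + (y.col - x.col) = y.col := by omega
  have d3 := hr ▸ SimpleGraph.dist_le r
  rw [e] at d3
  have t1 := (hypGraph_connected D).dist_triangle (u := x) (v := rootAt D x.col) (w := y)
  have t2 := (hypGraph_connected D).dist_triangle (u := rootAt D x.col) (v := rootAt D y.col)
    (w := y)
  have d1 := SimpleGraph.dist_le p
  have d2 := SimpleGraph.dist_le q
  rw [SimpleGraph.dist_comm] at d2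
  omega

lemma dist_root (x : Vtx D) : (hypGraph D).dist x (rootAt D 0) = x.depth + x.col := by
  have hc : (rootAt D 0).col = 0 := by simp [rootAt, Vtx.col]
  have hd : (rootAt D 0).depth = 0 := rfl
  apply le_antisymm
  · have := dist_le_of_col_le (x := rootAt D 0) (y := x) (by omega)
    rw [SimpleGraph.dist_comm] at this
    omega
  · obtain ⟨p, hp⟩ := (hypGraph_connected D).exists_walk_length_eq_dist x (rootAt D 0)
    obtain ⟨n, k, hm, hk⟩ := exists_meet_of_walk p
    obtain rfl : n = 0 := by have := hm.2.1; omega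
    have := hm.col_le
    omega

/-! ### Hyperbolicity -/

/-- The geodesics from the origin to `x` and `y` fellow-travel up to distance `s`: either `s` is
reached on the root line, or the two vertices have close ancestors at depth `n` and
`s ≤ n + min x.col y.col`. -/
def Agree (x y : Vtx D) (s : ℕ) : Prop :=
  (s ≤ x.col ∧ s ≤ y.col) ∨ ∃ n, Meet x y n 1 ∧ s ≤ n + x.col ∧ s ≤ n + y.col

lemma Agree.dist_le {x y : Vtx D} {s : ℕ} (h : Agree x y s) :
    (hypGraph D).dist x y + 2 * s ≤ x.depth + x.col + (y.depth + y.col) + 1 := by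
  rcases h with ⟨h1, h2⟩ | ⟨n, hm, h1, h2⟩
  · rcases le_total x.col y.col with h | h
    · have := dist_le_of_col_le h
      omega
    · have := dist_le_of_col_le h
      rw [SimpleGraph.dist_comm] at this
      omega
  · have := dist_le_of_meet hm
    omega

/-- Going up one level halves horizontal distances, so a horizontal distance `k` can be traded for
close ancestors at a cost of `k + 3`. The smaller constants for `k ≤ 3` make the induction run. -/
lemma exists_agree_of_meet {x y : Vtx D} (n : ℕ) : ∀ k, Meet x y n k →
    ∃ s, Agree x y s ∧ x.depth + x.col + (y.depth + y.col) + 2 * n ≤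
      2 * s + x.depth + y.depth +
        (if k ≤ 1 then 1 else if k = 2 then 3 else if k = 3 then 5 else k + 3) := by
  induction n with
  | zero =>
    intro k hm
    have h1 := hm.col_le
    have h2 := hm.symm.col_le
    refine ⟨min x.col y.col, Or.inl ⟨by omega, by omega⟩, ?_⟩
    split_ifs <;> omega
  | succ n ih =>
    intro k hm
    by_cases hk : k ≤ 1
    · have hm1 := hm.mono hk
      have h1 := (hm1.of_le (Nat.zero_le _)).col_le
      have h2 := (hm1.of_le (Nat.zero_le _)).symm.col_le
      refine ⟨n + 1 + min x.col y.col, Or.inr ⟨n + 1, hm1, by omega, by omega⟩, ?_⟩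
      rw [if_pos hk]
      omega
    · obtain ⟨s, hs, hle⟩ := ih _ hm.pred
      refine ⟨s, hs, ?_⟩
      split_ifs at hle ⊢ <;> omega

lemma exists_agree (x y : Vtx D) : ∃ s, Agree x y s ∧
    x.depth + x.col + (y.depth + y.col) ≤ 2 * s + (hypGraph D).dist x y + 3 := by
  obtain ⟨p, hp⟩ := (hypGraph_connected D).exists_walk_length_eq_dist x y
  obtain ⟨n, k, hm, hk⟩ := exists_meet_of_walk p
  obtain ⟨s, hs, hle⟩ := exists_agree_of_meet n k hm
  refine ⟨s, hs, ?_⟩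
  split_ifs at hle <;> omega

lemma Agree.mono {x y : Vtx D} {s s' : ℕ} (h : Agree x y s) (hs : s' ≤ s) : Agree x y s' := by
  rcases h with ⟨h1, h2⟩ | ⟨n, hm, h1, h2⟩
  · exact Or.inl ⟨by omega, by omega⟩
  · exact Or.inr ⟨n, hm, by omega, by omega⟩

/-- The quasi-ultrametric property of `Agree`. -/
lemma Agree.trans {x y z : Vtx D} {s : ℕ} (h : Agree x y s) (h' : Agree y z s) :
    Agree x z (s - 3) := by
  rcases h with ⟨h1, h2⟩ | ⟨n, hm, h1, h2⟩ <;> rcases h' with ⟨g1, g2⟩ | ⟨n', gm, g1, g2⟩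
  · exact Or.inl ⟨by omega, by omega⟩
  · have := (gm.of_le (Nat.zero_le _)).col_le
    exact Or.inl ⟨by omega, by omega⟩
  · have := (hm.of_le (Nat.zero_le _)).symm.col_le
    exact Or.inl ⟨by omega, by omega⟩
  · have c1 := (hm.of_le (Nat.zero_le _)).col_le
    have c2 := (hm.of_le (Nat.zero_le _)).symm.col_le
    have c3 := (gm.of_le (Nat.zero_le _)).col_le
    have c4 := (gm.of_le (Nat.zero_le _)).symm.col_le
    rcases Nat.eq_zero_or_pos (min n n') with h0 | h0
    · exact Or.inl ⟨by omega, by omega⟩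
    · obtain ⟨m, hmm⟩ : ∃ m, min n n' = m + 1 := ⟨min n n' - 1, by omega⟩
      have m1 := hm.of_le (m := m + 1) (by omega)
      have m2 := gm.of_le (m := m + 1) (by omega)
      refine Or.inr ⟨m, (m1.trans m2).pred, ?_, ?_⟩ <;> omega

/-- The Gromov product at the origin is, up to an additive constant, the largest `s` with
`Agree x y s`. -/
lemma hyperbolic_at_root (x y z : Vtx D) :
    min (GromovProduct (hypGraph D) (rootAt D 0) x z) (GromovProduct (hypGraph D) (rootAt D 0) y z)
      - 5 ≤ GromovProduct (hypGraph D) (rootAt D 0) x y := by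
  obtain ⟨s, hs, h1⟩ := exists_agree x z
  obtain ⟨s', hs', h2⟩ := exists_agree z y
  have h3 := ((hs.mono (min_le_left s s')).trans (hs'.mono (min_le_right s s'))).dist_le
  have hmin : min s s' ≤ min s s' - 3 + 3 := by omega
  rw [SimpleGraph.dist_comm (u := z) (v := y)] at h2
  simp only [GromovProduct, dist_root]
  set m := min s s' - 3
  have h1' : (x.depth : ℝ) + x.col + (z.depth + z.col) ≤ 2 * s + (hypGraph D).dist x z + 3 := by
    exact_mod_cast h1
  have h2' : (z.depth : ℝ) + z.col + (y.depth + y.col) ≤ 2 * s' + (hypGraph D).dist y z + 3 := by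
    exact_mod_cast h2
  have h3' : ((hypGraph D).dist x y : ℝ) + 2 * m ≤ x.depth + x.col + (y.depth + y.col) + 1 := by
    exact_mod_cast h3
  push_cast
  rcases min_le_iff.1 hmin with h | h
  · have h' : (s : ℝ) ≤ m + 3 := by exact_mod_cast h
    have := min_le_left (((x.depth : ℝ) + x.col + (z.depth + z.col) - (hypGraph D).dist x z) / 2)
      (((y.depth : ℝ) + y.col + (z.depth + z.col) - (hypGraph D).dist y z) / 2)
    linarith
  · have h' : (s' : ℝ) ≤ m + 3 := by exact_mod_cast h
    have := min_le_right (((x.depth : ℝ) + x.col + (z.depth + z.col) - (hypGraph D).dist x z) / 2)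
      (((y.depth : ℝ) + y.col + (z.depth + z.col) - (hypGraph D).dist y z) / 2)
    linarith

/-- The four-point condition at one base point implies it at all base points, with twice the
constant. -/
lemma gromovHyperbolic_of_base {W : Type*} {G : SimpleGraph W} (o : W) {δ : ℝ} (hδ : 0 ≤ δ)
    (h : ∀ x y z, min (GromovProduct G o x z) (GromovProduct G o y z) - δ ≤
      GromovProduct G o x y) : GromovHyperbolic G := by
  refine ⟨2 * δ, by positivity, fun w x y z => ?_⟩
  have a1 := h x y z
  have a2 := h x y w
  have a3 := h x z w
  have a4 := h y z w
  have a5 := h x z y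
  have a6 := h y z x
  have a7 := h x w y
  have a8 := h x w z
  have a9 := h y w x
  have a10 := h y w z
  have a11 := h z w x
  have a12 := h z w y
  simp only [GromovProduct, G.dist_comm (u := y) (v := x), G.dist_comm (u := z) (v := x),
    G.dist_comm (u := z) (v := y), G.dist_comm (u := w) (v := x), G.dist_comm (u := w) (v := y),
    G.dist_comm (u := w) (v := z)] at *
  simp only [tsub_le_iff_right, min_le_iff] at *
  grind

/-! ### A unit flow of finite energy -/

/-- Comparison test through a map that is injective on the support. -/
lemma summable_of_injOn_support {A B : Type*} {f : A → ℝ} {g : B → ℝ} (hg : Summable g)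
    (ι : A → B) (hι : Set.InjOn ι (Function.support f)) (h0 : ∀ a, 0 ≤ f a)
    (hfg : ∀ a, f a ≠ 0 → f a ≤ g (ι a)) : Summable f := by
  have hinj : Function.Injective fun a : Function.support f => ι a := fun a b h =>
    Subtype.ext (hι a.2 b.2 h)
  have h1 : Summable fun a : Function.support f => f a :=
    Summable.of_nonneg_of_le (fun a => h0 a) (fun a => hfg a a.2) (hg.comp_injective hinj)
  have h2 := summable_subtype_iff_indicator.1 h1
  rwa [Set.indicator_support] at h2

lemma summable_fiberwise {B K : Type*} [DecidableEq K] (s : B → Finset K) (c : B → ℝ)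
    (hc : ∀ b, 0 ≤ c b) (h : Summable fun b => ((s b).card : ℝ) * c b) :
    Summable fun p : B × K => if p.2 ∈ s p.1 then c p.1 else 0 := by
  have hfib : ∀ b, HasSum (fun k => if k ∈ s b then c b else 0) (((s b).card : ℝ) * c b) := by
    intro b
    have : HasSum (fun k => if k ∈ s b then c b else 0) (∑ k ∈ s b, if k ∈ s b then c b else 0) :=
      hasSum_sum_of_ne_finset_zero (fun k hk => if_neg hk)
    rwa [Finset.sum_congr rfl (fun k hk => if_pos hk), Finset.sum_const, nsmul_eq_mul] at this
  rw [summable_prod_of_nonneg]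
  · exact ⟨fun b => (hfib b).summable, by simpa only [(hfib _).tsum_eq] using h⟩
  · intro p
    dsimp only
    split_ifs
    · exact hc _
    · exact le_rfl

/-- Current along the line at depth `d`, from position `m` to `m + 1`, before spreading over the
`4 ^ d` lines of that depth: the flow runs at depth `D t` between the columns `t` and `t + 1`. -/
noncomputable def hCur (D : ℕ → ℕ) (d m : ℕ) : ℝ := if D (m / 2 ^ d) = d then 1 else 0

/-- Current from depth `d`, position `m`, to depth `d + 1`, position `2 * m`. It moves the flow from
depth `D (t - 1)` to depth `D t` on the column `t`. -/
noncomputable def vCur (D : ℕ → ℕ) (d m : ℕ) : ℝ :=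
  if 2 ^ d ∣ m then
    (if D (m / 2 ^ d - 1) ≤ d then 1 else 0) - (if D (m / 2 ^ d) ≤ d then 1 else 0)
  else 0

open Classical in
/-- The horizontal currents, spread evenly. -/
noncomputable def hFlow (x y : Vtx D) : ℝ :=
  if HStep x y then hCur D x.depth x.pos * (1 / 4) ^ x.depth else 0

open Classical in
/-- The vertical currents, spread evenly; only the children with even position are used. -/
noncomputable def vFlow (x y : Vtx D) : ℝ :=
  if VStep x y ∧ y.pos = 2 * x.pos then vCur D x.depth x.pos * (1 / 4) ^ (x.depth + 1) else 0

/-- The unit flow from the origin to infinity. -/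
noncomputable def unitFlow (x y : Vtx D) : ℝ := hFlow x y + vFlow x y - hFlow y x - vFlow y x

lemma unitFlow_isFlow : IsFlow (hypGraph D) (unitFlow (D := D)) := by
  refine ⟨fun u v => by unfold unitFlow; ring, fun u v h => ?_⟩
  by_contra hadj
  apply h
  have : ¬ (HStep u v ∨ HStep v u ∨ VStep u v ∨ VStep v u) := hadj
  push Not at this
  simp [unitFlow, hFlow, vFlow, this]

/-- The unit current satisfies Kirchhoff's law in the quotient half-plane. -/
lemma kirchhoff (hD : D 0 = 0) (d m : ℕ) :
    hCur D d m + vCur D d m - (if m = 0 then 0 else hCur D d (m - 1)) -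
      (if d = 0 ∨ ¬ 2 ∣ m then 0 else vCur D (d - 1) (m / 2)) =
      if d = 0 ∧ m = 0 then 1 else 0 := by
  have hpos : 0 < 2 ^ d := by positivity
  by_cases hdvd : 2 ^ d ∣ m
  · obtain ⟨t, rfl⟩ := hdvd
    have hdiv : 2 ^ d * t / 2 ^ d = t := Nat.mul_div_cancel_left _ hpos
    have hprev : t ≠ 0 → (2 ^ d * t - 1) / 2 ^ d = t - 1 := by
      intro ht
      obtain ⟨t, rfl⟩ := Nat.exists_eq_succ_of_ne_zero ht
      have : 2 ^ d * (t + 1) - 1 = (2 ^ d - 1) + 2 ^ d * t := by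
        have : 2 ^ d * (t + 1) = 2 ^ d * t + 2 ^ d := by ring
        omega
      rw [Nat.succ_eq_add_one, this, Nat.add_mul_div_left _ _ hpos,
        Nat.div_eq_of_lt (by omega)]
      omega
    have hzero : 2 ^ d * t = 0 ↔ t = 0 := by simp
    have hup : (if d = 0 ∨ ¬ 2 ∣ 2 ^ d * t then 0 else vCur D (d - 1) (2 ^ d * t / 2)) =
        (if D (t - 1) < d then (1 : ℝ) else 0) - (if D t < d then 1 else 0) := by
      rcases d with _ | d
      · simp
      · have h2 : 2 ^ (d + 1) * t = 2 * (2 ^ d * t) := by ring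
        rw [if_neg (by rw [h2]; simp), h2, Nat.mul_div_cancel_left _ (by norm_num),
          Nat.add_sub_cancel, vCur, if_pos (Dvd.intro _ rfl),
          Nat.mul_div_cancel_left _ (by positivity)]
        simp only [Nat.lt_succ_iff]
    rw [hup, hCur, hCur, vCur, if_pos (Dvd.intro _ rfl), hdiv]
    simp only [hzero]
    rcases Nat.eq_zero_or_pos t with rfl | ht
    · simp only [hD]
      rcases d with _ | d <;> simp
    · have ht0 : t ≠ 0 := by omega
      simp only [ht0, if_false, and_false, hprev ht0]
      split_ifs <;> first | (exfalso; omega) | norm_num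
  · have hm : m ≠ 0 := by rintro rfl; exact hdvd (dvd_zero _)
    have hd : d ≠ 0 := by rintro rfl; exact hdvd (by simp)
    have hdiv : (m - 1) / 2 ^ d = m / 2 ^ d := by
      obtain ⟨m, rfl⟩ := Nat.exists_eq_succ_of_ne_zero hm
      rw [Nat.succ_eq_add_one, Nat.succ_div, if_neg hdvd]
      simp
    have hup : (if d = 0 ∨ ¬ 2 ∣ m then 0 else vCur D (d - 1) (m / 2)) = 0 := by
      split_ifs with h
      · rfl
      · push Not at h
        rw [vCur, if_neg]
        intro h'
        apply hdvd
        obtain ⟨q, hq⟩ := h'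
        have hdd : d = (d - 1) + 1 := by omega
        rw [hdd, pow_succ]
        refine ⟨q, ?_⟩
        have := h.2
        have : m = 2 * (m / 2) := by omega
        rw [this, hq]
        ring
    rw [hup, hCur, hCur, vCur, if_neg hdvd, hdiv, if_neg hm]
    simp [hm]

lemma hasSum_single_ite {A : Type*} {P : A → Prop} [DecidablePred P] (c : A → ℝ) (a : A) (ha : P a)
    (huniq : ∀ b, P b → b = a) : HasSum (fun b => if P b then c b else 0) (c a) := by
  have := hasSum_single (f := fun b => if P b then c b else 0) a fun b hb =>
    if_neg fun h => hb (huniq b h)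
  rwa [if_pos ha] at this

lemma hasSum_hFlow_out (x : Vtx D) :
    HasSum (fun y => hFlow x y) (hCur D x.depth x.pos * (1 / 4) ^ x.depth) := by
  classical
  by_cases h : hCur D x.depth x.pos = 0
  · simp [hFlow, h, hasSum_zero]
  · have hd : D (x.pos / 2 ^ x.depth) = x.depth := by
      by_contra h'
      exact h (if_neg h')
    -- the successor of `x` lies in column `t` or `t + 1`, and `D t = x.depth`
    set y : Vtx D := ⟨x.depth, x.idx, x.pos + 1, x.idx_lt, by
      rw [Nat.succ_div, maxDepth]
      split_ifs
      · rw [Nat.add_sub_cancel, hd]; exact le_max_left _ _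
      · rw [add_zero, hd]; exact le_max_right _ _⟩ with hy
    unfold hFlow
    refine hasSum_single_ite (fun _ => hCur D x.depth x.pos * (1 / 4) ^ x.depth) y ⟨rfl, rfl, rfl⟩ ?_
    rintro z ⟨h1, h2, h3⟩
    exact Vtx.ext h1 h2 h3

lemma hasSum_hFlow_in (x : Vtx D) : HasSum (fun y => hFlow y x)
    ((if x.pos = 0 then 0 else hCur D x.depth (x.pos - 1)) * (1 / 4) ^ x.depth) := by
  classical
  by_cases h : (if x.pos = 0 then 0 else hCur D x.depth (x.pos - 1)) = 0
  · rw [h, zero_mul]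
    have : (fun y => hFlow y x) = fun _ => 0 := by
      funext y
      unfold hFlow
      split_ifs with hs
      · obtain ⟨h1, h2, h3⟩ := hs
        rw [if_neg (by omega), h3, Nat.add_sub_cancel, h1] at h
        rw [h, zero_mul]
      · rfl
    rw [this]
    exact hasSum_zero
  · have h0 : x.pos ≠ 0 := fun h0 => h (if_pos h0)
    rw [if_neg h0] at h ⊢
    have hd : D ((x.pos - 1) / 2 ^ x.depth) = x.depth := by
      by_contra h'
      exact h (if_neg h')
    obtain ⟨y, hy1, hy2, hy3⟩ :
        ∃ y : Vtx D, y.depth = x.depth ∧ y.idx = x.idx ∧ y.pos = x.pos - 1 :=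
      ⟨⟨x.depth, x.idx, x.pos - 1, x.idx_lt, by rw [maxDepth, hd]; exact le_max_right _ _⟩,
        rfl, rfl, rfl⟩
    have := hasSum_single_ite (P := fun y => HStep y x)
      (fun y => hCur D y.depth y.pos * (1 / 4) ^ y.depth) y
      ⟨by omega, by omega, by omega⟩ (by
        rintro z ⟨h1, h2, h3⟩
        exact Vtx.ext (by omega) (by omega) (by omega))
    unfold hFlow
    rw [← hy1, ← hy3]
    exact this

lemma hasSum_vFlow_in (x : Vtx D) : HasSum (fun y => vFlow y x)
    ((if x.depth = 0 ∨ ¬ 2 ∣ x.pos then 0 else vCur D (x.depth - 1) (x.pos / 2)) *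
      (1 / 4) ^ x.depth) := by
  classical
  by_cases h : x.depth = 0 ∨ ¬ 2 ∣ x.pos
  · rw [if_pos h, zero_mul]
    have : (fun y => vFlow y x) = fun _ => 0 := by
      funext y
      unfold vFlow
      refine if_neg ?_
      rintro ⟨⟨h1, h2, h3⟩, h4⟩
      omega
    rw [this]
    exact hasSum_zero
  · rw [if_neg h]
    push Not at h
    obtain ⟨y, h1, h2, h3, -⟩ := exists_ancestor 1 x (by omega)
    rw [pow_one] at h2 h3
    have e : x.depth = y.depth + 1 := by omega
    have := hasSum_single_ite (P := fun y => VStep y x ∧ x.pos = 2 * y.pos)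
      (fun y => vCur D y.depth y.pos * (1 / 4) ^ (y.depth + 1)) y
      ⟨⟨by omega, by omega, by omega⟩, by omega⟩ (by
        rintro z ⟨⟨g1, g2, g3⟩, g4⟩
        exact Vtx.ext (by omega) (by omega) (by omega))
    unfold vFlow
    rw [← h1, ← h3, e]
    exact this

lemma hasSum_vFlow_out (x : Vtx D) :
    HasSum (fun y => vFlow x y) (vCur D x.depth x.pos * (1 / 4) ^ x.depth) := by
  classical
  by_cases h : vCur D x.depth x.pos = 0
  · simp [vFlow, h, hasSum_zero]
  · have hdvd : 2 ^ x.depth ∣ x.pos := by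
      by_contra h'
      exact h (if_neg h')
    have hmax : x.depth + 1 ≤ maxDepth D (x.pos / 2 ^ x.depth) := by
      by_contra h'
      rw [maxDepth, not_le, Nat.lt_succ_iff, max_le_iff] at h'
      apply h
      rw [vCur, if_pos hdvd, if_pos h'.1, if_pos h'.2, sub_self]
    set child : Fin 4 → Vtx D := fun j => ⟨x.depth + 1, 4 * x.idx + j, 2 * x.pos, by
        have h1 := x.idx_lt
        have h2 := j.2
        rw [pow_succ]
        omega, by
        rw [pow_succ', Nat.mul_div_mul_left _ _ (by norm_num)]
        exact hmax⟩ with hchild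
    have hinj : Function.Injective child := by
      intro i j hij
      have := congrArg Vtx.idx hij
      simp only [hchild] at this
      exact Fin.ext (by omega)
    have hs : HasSum (fun y => vFlow x y) (∑ y ∈ Finset.univ.map ⟨child, hinj⟩, vFlow x y) :=
      hasSum_sum_of_ne_finset_zero (by
        intro y hy
        refine if_neg ?_
        rintro ⟨⟨h1, h2, h3⟩, h4⟩
        apply hy
        rw [Finset.mem_map]
        refine ⟨⟨y.idx % 4, by omega⟩, Finset.mem_univ _, ?_⟩
        refine Vtx.ext h1.symm ?_ h4.symm
        simp only [hchild, Function.Embedding.coeFn_mk]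
        omega)
    have hval : ∀ j, vFlow x (child j) = vCur D x.depth x.pos * (1 / 4) ^ (x.depth + 1) := by
      intro j
      refine if_pos ⟨⟨rfl, ?_, ?_⟩, rfl⟩
      · simp only [hchild]; omega
      · simp only [hchild]; omega
    rw [Finset.sum_map] at hs
    simp only [Function.Embedding.coeFn_mk, hval, Finset.sum_const, Finset.card_univ,
      Fintype.card_fin, nsmul_eq_mul] at hs
    convert hs using 1
    rw [pow_succ]
    push_cast
    ring

open Classical in
lemma divg_unitFlow (hD : D 0 = 0) (x : Vtx D) :
    divg unitFlow x = if x = rootAt D 0 then 1 else 0 := by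
  have h := (((hasSum_hFlow_out x).add (hasSum_vFlow_out x)).sub (hasSum_hFlow_in x)).sub
    (hasSum_vFlow_in x)
  rw [← add_mul, ← sub_mul, ← sub_mul, kirchhoff hD] at h
  have h' : divg unitFlow x = _ := h.tsum_eq
  rw [h']
  have hiff : x = rootAt D 0 ↔ x.depth = 0 ∧ x.pos = 0 := by
    constructor
    · rintro rfl
      exact ⟨rfl, rfl⟩
    · rintro ⟨h1, h2⟩
      have := x.idx_lt
      rw [h1] at this
      exact Vtx.ext h1 (by change x.idx = 0; omega) h2
  by_cases hx : x.depth = 0 ∧ x.pos = 0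
  · rw [if_pos hx, if_pos (hiff.2 hx), hx.1]; norm_num
  · rw [if_neg hx, if_neg (fun h => hx (hiff.1 h)), zero_mul]

lemma summable_hFlow_sq (hsum : Summable fun t => (1 / 2 : ℝ) ^ D t) :
    Summable fun p : Vtx D × Vtx D => hFlow p.1 p.2 ^ 2 := by
  -- column `t` contributes `4 ^ D t * 2 ^ D t` edges, each carrying the current `(1 / 4) ^ D t`
  have hg := summable_fiberwise
    (fun t => Finset.range (4 ^ D t) ×ˢ Finset.range (2 ^ D t)) (fun t => (1 / 16 : ℝ) ^ D t)
    (fun t => by positivity) (by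
      refine hsum.congr fun t => ?_
      rw [Finset.card_product, Finset.card_range, Finset.card_range]
      push_cast
      rw [← mul_pow, ← mul_pow]
      norm_num)
  have hsupp : ∀ p : Vtx D × Vtx D, hFlow p.1 p.2 ^ 2 ≠ 0 →
      HStep p.1 p.2 ∧ D p.1.col = p.1.depth ∧ hFlow p.1 p.2 = (1 / 4) ^ p.1.depth := by
    intro p hp
    unfold hFlow hCur at hp ⊢
    split_ifs at hp ⊢ with h1 h2
    · exact ⟨h1, h2, one_mul _⟩
    · simp at hp
    · simp at hp
  refine summable_of_injOn_support hg
    (fun p => (p.1.col, (p.1.idx, p.1.pos % 2 ^ p.1.depth))) ?_ (fun p => sq_nonneg _) ?_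
  · rintro ⟨x, y⟩ hp ⟨x', y'⟩ hp' heq
    obtain ⟨⟨a1, a2, a3⟩, a4, -⟩ := hsupp _ hp
    obtain ⟨⟨b1, b2, b3⟩, b4, -⟩ := hsupp _ hp'
    simp only [Prod.mk.injEq] at heq a1 a2 a3 a4 b1 b2 b3 b4
    obtain ⟨e1, e2, e3⟩ := heq
    have e4 : x.depth = x'.depth := by rw [← a4, ← b4, e1]
    have e5 : x.pos = x'.pos := by
      rw [← Nat.div_add_mod x.pos (2 ^ x.depth), ← Nat.div_add_mod x'.pos (2 ^ x'.depth), e3]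
      have : x.pos / 2 ^ x.depth = x'.pos / 2 ^ x'.depth := e1
      rw [this, e4]
    rw [Prod.mk.injEq]
    exact ⟨Vtx.ext e4 e2 e5, Vtx.ext (by omega) (by omega) (by omega)⟩
  · intro p hp
    obtain ⟨-, h2, h3⟩ := hsupp _ hp
    simp only
    rw [if_pos, h2, h3, ← pow_mul, mul_comm, pow_mul]
    · norm_num
    · rw [h2, Finset.mem_product, Finset.mem_range, Finset.mem_range]
      exact ⟨p.1.idx_lt, Nat.mod_lt _ (by positivity)⟩

lemma summable_vFlow_sq (hsum : Summable fun t => (1 / 2 : ℝ) ^ D t) :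
    Summable fun p : Vtx D × Vtx D => vFlow p.1 p.2 ^ 2 := by
  set μ : ℕ → ℕ := fun t => min (D (t - 1)) (D t) with hμ
  have hμsum : Summable fun t => (1 / 2 : ℝ) ^ μ t := by
    have h1 : Summable fun t => (1 / 2 : ℝ) ^ D (t - 1) := by
      rw [← summable_nat_add_iff 1]
      simpa using hsum
    refine Summable.of_nonneg_of_le (fun t => by positivity) (fun t => ?_) (h1.add hsum)
    simp only [hμ]
    rcases min_choice (D (t - 1)) (D t) with h | h <;> rw [h]
    · exact le_add_of_nonneg_right (by positivity)
    · exact le_add_of_nonneg_left (by positivity)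
  -- on column `t` only depths `d ≥ μ t` carry current, and there `4⁻ᵈ ≤ 2⁻ᵈ * 2 ^ (-μ t)`
  have hgeom : Summable fun d : ℕ => (1 / 2 : ℝ) ^ d :=
    summable_geometric_of_lt_one (by norm_num) (by norm_num)
  have hprod := hμsum.mul_of_nonneg hgeom (fun t => by positivity) (fun t => by positivity)
  have hg := summable_fiberwise (B := ℕ × ℕ) (fun b => Finset.range (4 ^ (b.2 + 1)))
    (fun b => if μ b.1 ≤ b.2 then (1 / 16 : ℝ) ^ (b.2 + 1) else 0)
    (fun b => by split_ifs <;> positivity) (by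
      refine Summable.of_nonneg_of_le (fun b => ?_) (fun b => ?_) hprod
      · split_ifs <;> positivity
      · split_ifs with h
        · rw [Finset.card_range]
          push_cast
          rw [← mul_pow]
          calc (4 * (1 / 16) : ℝ) ^ (b.2 + 1) = (1 / 4) ^ (b.2 + 1) := by norm_num
            _ ≤ (1 / 4) ^ b.2 := pow_le_pow_of_le_one (by norm_num) (by norm_num) (by omega)
            _ = (1 / 2) ^ b.2 * (1 / 2) ^ b.2 := by rw [← mul_pow]; norm_num
            _ ≤ (1 / 2) ^ μ b.1 * (1 / 2) ^ b.2 := by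
              gcongr ?_ * _
              exact pow_le_pow_of_le_one (by norm_num) (by norm_num) h
        · simp only [mul_zero]; positivity)
  have hsupp : ∀ p : Vtx D × Vtx D, vFlow p.1 p.2 ^ 2 ≠ 0 →
      VStep p.1 p.2 ∧ p.2.pos = 2 * p.1.pos ∧ 2 ^ p.1.depth ∣ p.1.pos ∧
      μ p.1.col ≤ p.1.depth ∧ vFlow p.1 p.2 ^ 2 ≤ (1 / 16) ^ (p.1.depth + 1) := by
    intro p hp
    have h16 : (1 / 16 : ℝ) ^ (p.1.depth + 1) = ((1 / 4) ^ (p.1.depth + 1)) ^ 2 := by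
      rw [← pow_mul, mul_comm _ 2, pow_mul]; norm_num
    rw [h16]
    unfold vFlow at hp ⊢
    by_cases h1 : VStep p.1 p.2 ∧ p.2.pos = 2 * p.1.pos
    · rw [if_pos h1] at hp ⊢
      have hv : vCur D p.1.depth p.1.pos ≠ 0 := by
        intro h; rw [h] at hp; simp at hp
      have hdvd : 2 ^ p.1.depth ∣ p.1.pos := by
        by_contra h; exact hv (if_neg h)
      rw [vCur, if_pos hdvd] at hv
      refine ⟨h1.1, h1.2, hdvd, ?_, ?_⟩
      · by_contra h
        simp only [hμ, Vtx.col, not_le, lt_min_iff] at h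
        rw [if_neg (by omega), if_neg (by omega)] at hv
        simp at hv
      · rw [mul_pow]
        refine mul_le_of_le_one_left (by positivity) ?_
        rw [vCur, if_pos hdvd]
        split_ifs <;> norm_num
    · rw [if_neg h1] at hp
      simp at hp
  refine summable_of_injOn_support hg (fun p => ((p.1.col, p.1.depth), p.2.idx)) ?_
    (fun p => sq_nonneg _) ?_
  · rintro ⟨x, y⟩ hp ⟨x', y'⟩ hp' heq
    obtain ⟨⟨a1, a2, a3⟩, a4, a5, -, -⟩ := hsupp _ hp
    obtain ⟨⟨b1, b2, b3⟩, b4, b5, -, -⟩ := hsupp _ hp'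
    simp only [Prod.mk.injEq] at heq a1 a2 a3 a4 a5 b1 b2 b3 b4 b5
    obtain ⟨⟨e1, e2⟩, e3⟩ := heq
    have e4 : x.pos = x'.pos := by
      have : x.pos / 2 ^ x.depth = x'.pos / 2 ^ x'.depth := e1
      rw [← Nat.div_mul_cancel a5, ← Nat.div_mul_cancel b5, this, e2]
    rw [Prod.mk.injEq]
    exact ⟨Vtx.ext e2 (by omega) e4, Vtx.ext (by omega) e3 (by omega)⟩
  · intro p hp
    obtain ⟨h1, -, -, h4, h5⟩ := hsupp _ hp
    simp only
    rw [if_pos, if_pos h4]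
    · exact h5
    · rw [Finset.mem_range, ← h1.1]
      exact p.2.idx_lt

lemma summable_swap {A : Type*} {f : A → A → ℝ} (h : Summable fun p : A × A => f p.1 p.2) :
    Summable fun p : A × A => f p.2 p.1 :=
  h.comp_injective Prod.swap_injective

/-- Only the depth profile matters for transience: `∑ 2 ^ (-D t) < ∞` suffices. -/
lemma hypGraph_transient (hD : D 0 = 0) (hsum : Summable fun t => (1 / 2 : ℝ) ^ D t) :
    Transient (hypGraph D) := by
  refine ⟨rootAt D 0, unitFlow, unitFlow_isFlow, ?_, fun v hv => ?_, ?_⟩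
  · rw [divg_unitFlow hD, if_pos rfl]
  · rw [divg_unitFlow hD, if_neg hv]
  · have h1 := summable_hFlow_sq hsum
    have h2 := summable_vFlow_sq hsum
    have h1' : Summable fun p : Vtx D × Vtx D => hFlow p.2 p.1 ^ 2 :=
      summable_swap (f := fun x y => hFlow x y ^ 2) h1
    have h2' : Summable fun p : Vtx D × Vtx D => vFlow p.2 p.1 ^ 2 :=
      summable_swap (f := fun x y => vFlow x y ^ 2) h2
    refine Summable.of_nonneg_of_le (fun p => sq_nonneg _) (fun p => ?_)
      ((((h1.add h2).add h1').add h2').mul_left 4)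
    unfold unitFlow
    set a := hFlow p.1 p.2
    set b := vFlow p.1 p.2
    set c := hFlow p.2 p.1
    set d := vFlow p.2 p.1
    nlinarith [sq_nonneg (a - b), sq_nonneg (a + c), sq_nonneg (a + d), sq_nonneg (b + c),
      sq_nonneg (b + d), sq_nonneg (c - d)]

/-! ### Subtrees -/

/-- If column `t` has depth at most `k`, at most `(k + 1) * 4 ^ k` edges enter it from the left. -/
lemma crossing_card_le {H : (hypGraph D).Subgraph} {t k : ℕ} (ht : maxDepth D t ≤ k) :
    ∃ L : Finset (H.verts × H.verts), L.card ≤ (k + 1) * 4 ^ k ∧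
      ∀ x y : H.verts, H.coe.Adj x y → x.1.col < t → t ≤ y.1.col → (x, y) ∈ L := by
  classical
  set A : Set (H.verts × H.verts) :=
    {p | H.coe.Adj p.1 p.2 ∧ p.1.1.col < t ∧ t ≤ p.2.1.col} with hA
  set f : H.verts × H.verts → ℕ × ℕ := fun p => (p.2.1.depth, p.2.1.idx) with hf
  have hstep : ∀ p ∈ A, HStep p.1.1 p.2.1 ∧ p.2.1.pos = t * 2 ^ p.2.1.depth ∧
      p.2.1.depth ≤ k := by
    rintro ⟨⟨x, hx⟩, ⟨y, hy⟩⟩ ⟨hadj, h1, h2⟩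
    simp only at h1 h2 ⊢
    have hadj' : (hypGraph D).Adj x y := H.adj_sub hadj
    have hstep : HStep x y := by
      rcases hadj' with h | h | h | h
      · exact h
      · have := h.col_le.1; omega
      · have := h.col_eq; omega
      · have := h.col_eq; omega
    have hcol : y.col = t := by have := hstep.col_le.2; omega
    refine ⟨hstep, ?_, ?_⟩
    · obtain ⟨g1, g2, g3⟩ := hstep
      have a1 : x.pos < t * 2 ^ x.depth := (Nat.div_lt_iff_lt_mul (by positivity)).1 h1
      have a2 : t * 2 ^ y.depth ≤ y.pos := (Nat.le_div_iff_mul_le (by positivity)).1 h2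
      rw [g1] at a2 ⊢
      omega
    · have := y.depth_le
      have e : y.pos / 2 ^ y.depth = t := hcol
      rw [e] at this
      omega
  have hinj : Set.InjOn f A := by
    rintro ⟨⟨x, hx⟩, ⟨y, hy⟩⟩ hp ⟨⟨x', hx'⟩, ⟨y', hy'⟩⟩ hp' heq
    obtain ⟨⟨a1, a2, a3⟩, a4, -⟩ := hstep _ hp
    obtain ⟨⟨b1, b2, b3⟩, b4, -⟩ := hstep _ hp'
    simp only [hf, Prod.mk.injEq] at heq a1 a2 a3 a4 b1 b2 b3 b4
    have e : y.pos = y'.pos := by rw [a4, b4, heq.1]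
    simp only [Prod.mk.injEq, Subtype.mk.injEq]
    exact ⟨Vtx.ext (by omega) (by omega) (by omega), Vtx.ext heq.1 heq.2 e⟩
  have hmaps : Set.MapsTo f A (Finset.range (k + 1) ×ˢ Finset.range (4 ^ k) : Finset (ℕ × ℕ)) := by
    intro p hp
    obtain ⟨-, -, h⟩ := hstep p hp
    simp only [hf, Finset.coe_product, Finset.coe_range, Set.mem_prod, Set.mem_Iio]
    exact ⟨by omega, p.2.1.idx_lt.trans_le (Nat.pow_le_pow_right (by norm_num) h)⟩
  have hfin : A.Finite := Set.Finite.of_injOn hmaps hinj (Finset.finite_toSet _)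
  refine ⟨hfin.toFinset, ?_, fun x y h1 h2 h3 => by
    rw [Set.Finite.mem_toFinset]; exact ⟨h1, h2, h3⟩⟩
  have := Finset.card_le_card_of_injOn (s := hfin.toFinset)
    (t := Finset.range (k + 1) ×ˢ Finset.range (4 ^ k)) f
    (by rw [Set.Finite.coe_toFinset]; exact hmaps) (by rw [Set.Finite.coe_toFinset]; exact hinj)
  rwa [Finset.card_product, Finset.card_range, Finset.card_range] at this

/-- Bottlenecks of depth `k` at the columns `16 ^ k` force the energy of a flow on a subtree up to
column `16 ^ k` to be at least of order `16 ^ k / ((k + 1) * 4 ^ k)`, which is unbounded. -/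
lemma subtree_not_transient (hD : ∀ k, maxDepth D (16 ^ k) ≤ k) (H : (hypGraph D).Subgraph)
    (hH : H.coe.IsTree) : ¬ Transient H.coe := by
  rintro ⟨o, θ, hθ, ho, hdiv, hsum⟩
  set E := ∑' p : H.verts × H.verts, θ p.1 p.2 ^ 2 with hE
  have hE0 : 0 ≤ E := tsum_nonneg fun p => sq_nonneg _
  have hbound : ∀ k : ℕ, (2 : ℝ) ^ k ≤ E + o.1.col + 1 := by
    intro k
    obtain ⟨L, hcard, hL⟩ := crossing_card_le (H := H) (hD k)
    have h := tree_energy_lower_bound hH hθ ho hdiv hsum (fun x => x.1.col)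
      (fun s => (finite_col_lt (D := D) s).preimage Subtype.val_injective.injOn)
      (fun x y hxy => col_le_of_adj (H.adj_sub hxy)) (16 ^ k) L hL
    have hc : (L.card : ℝ) ≤ 8 ^ k := by
      have h2 : k + 1 ≤ 2 ^ k := Nat.lt_two_pow_self
      have : L.card ≤ 8 ^ k := by
        calc L.card ≤ (k + 1) * 4 ^ k := hcard
          _ ≤ 2 ^ k * 4 ^ k := Nat.mul_le_mul_right _ h2
          _ = 8 ^ k := by rw [← mul_pow]; norm_num
      exact_mod_cast this
    have h8 : (1 : ℝ) ≤ 8 ^ k := one_le_pow₀ (by norm_num)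
    have h16 : (16 : ℝ) ^ k = 8 ^ k * 2 ^ k := by rw [← mul_pow]; norm_num
    push_cast at h
    have h3 : (L.card : ℝ) * E ≤ 8 ^ k * E := mul_le_mul_of_nonneg_right hc hE0
    have h4 : (o.1.col : ℝ) + 1 ≤ 8 ^ k * (o.1.col + 1) :=
      le_mul_of_one_le_left (by positivity) h8
    refine le_of_mul_le_mul_left ?_ (lt_of_lt_of_le one_pos h8)
    rw [← h16]
    linarith
  obtain ⟨k, hk⟩ := pow_unbounded_of_one_lt (E + o.1.col + 1) (one_lt_two (α := ℝ))
  exact absurd (hbound k) (not_le.2 hk)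

/-- A depth profile with `∑ 2 ^ (-D t) < ∞` that drops to `k` around the columns `16 ^ k`. -/
lemma exists_profile : ∃ D : ℕ → ℕ, D 0 = 0 ∧ (Summable fun t => (1 / 2 : ℝ) ^ D t) ∧
    ∀ k, maxDepth D (16 ^ k) ≤ k := by
  classical
  have hlog : ∀ k : ℕ, Nat.log 16 (16 ^ k + 1) = k := by
    intro k
    refine Nat.log_eq_of_pow_le_of_lt_pow (by omega) ?_
    have : 1 ≤ 16 ^ k := Nat.one_le_pow _ _ (by norm_num)
    rw [pow_succ]
    omega
  have hlog' : ∀ k : ℕ, Nat.log 16 (16 ^ k - 1 + 1) = k := by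
    intro k
    rw [Nat.sub_add_cancel (Nat.one_le_pow _ _ (by norm_num)), Nat.log_pow (by norm_num)]
  set P : ℕ → Prop := fun t => ∃ k, t = 16 ^ k with hP
  set Q : ℕ → Prop := fun t => ∃ k, t = 16 ^ k - 1 with hQ
  set D : ℕ → ℕ := fun t => if P t ∨ Q t then Nat.log 16 (t + 1) else 2 * Nat.log 2 (t + 1)
    with hDdef
  have hgeom : Summable fun d : ℕ => (1 / 2 : ℝ) ^ d :=
    summable_geometric_of_lt_one (by norm_num) (by norm_num)
  have hspecial : ∀ R : ℕ → Prop, (∀ s t, R s → R t → Nat.log 16 (s + 1) = Nat.log 16 (t + 1) →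
      s = t) → Summable fun t => if R t then (1 / 2 : ℝ) ^ Nat.log 16 (t + 1) else 0 := by
    intro R hR
    refine summable_of_injOn_support hgeom (fun t => Nat.log 16 (t + 1)) ?_ ?_ ?_
    · intro s hs t ht h
      refine hR s t ?_ ?_ h
      · by_contra h'; exact hs (if_neg h')
      · by_contra h'; exact ht (if_neg h')
    · intro t
      split_ifs <;> positivity
    · intro t _
      split_ifs
      · exact le_rfl
      · positivity
  have hPs := hspecial P (by
    rintro _ _ ⟨k, rfl⟩ ⟨l, rfl⟩ h
    rw [hlog, hlog] at h
    rw [h])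
  have hQs := hspecial Q (by
    rintro _ _ ⟨k, rfl⟩ ⟨l, rfl⟩ h
    rw [hlog', hlog'] at h
    rw [h])
  have hmain : Summable fun t : ℕ => 4 * (1 / ((t + 1 : ℕ) : ℝ) ^ 2) :=
    ((summable_nat_add_iff 1).2 (Real.summable_one_div_nat_pow.2 one_lt_two)).mul_left 4
  refine ⟨D, ?_, ?_, ?_⟩
  · simp [hDdef]
  · refine Summable.of_nonneg_of_le (fun t => by positivity) (fun t => ?_) ((hPs.add hQs).add hmain)
    have hm0 : (0 : ℝ) ≤ 4 * (1 / ((t + 1 : ℕ) : ℝ) ^ 2) := by positivity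
    have hl0 : (0 : ℝ) ≤ (1 / 2 : ℝ) ^ Nat.log 16 (t + 1) := by positivity
    simp only [hDdef]
    by_cases h1 : P t
    · rw [if_pos (Or.inl h1), if_pos h1]
      have : (0 : ℝ) ≤ if Q t then (1 / 2 : ℝ) ^ Nat.log 16 (t + 1) else 0 := by
        split_ifs <;> positivity
      linarith
    · by_cases h2 : Q t
      · rw [if_pos (Or.inr h2), if_neg h1, if_pos h2]
        linarith
      · rw [if_neg (by tauto), if_neg h1, if_neg h2, zero_add, zero_add]
        have hlt : t + 1 < 2 ^ (Nat.log 2 (t + 1) + 1) := Nat.lt_pow_succ_log_self (by norm_num) _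
        have hlt' : ((t + 1 : ℕ) : ℝ) ≤ 2 * 2 ^ Nat.log 2 (t + 1) := by
          rw [← pow_succ']
          exact_mod_cast hlt.le
        rw [mul_comm 2, pow_mul, one_div_pow, div_pow, one_pow, mul_one_div,
          div_le_div_iff₀ (by positivity) (by positivity), one_mul]
        calc ((t + 1 : ℕ) : ℝ) ^ 2 ≤ (2 * 2 ^ Nat.log 2 (t + 1)) ^ 2 := by gcongr
          _ = 4 * (2 ^ Nat.log 2 (t + 1)) ^ 2 := by ring
  · intro k
    have h1 : D (16 ^ k) = k := by
      simp only [hDdef]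
      rw [if_pos (Or.inl ⟨k, rfl⟩), hlog]
    have h2 : D (16 ^ k - 1) = k := by
      simp only [hDdef]
      rw [if_pos (Or.inr ⟨k, rfl⟩), hlog']
    rw [maxDepth, h1, h2, max_self]

theorem exists_transient_hyperbolic_no_transient_subtree :
    ∃ (V : Type) (G : SimpleGraph V),
      G.Connected ∧ BoundedDegree G ∧
      Transient G ∧
      GromovHyperbolic G ∧
      -- every subtree (connected acyclic subgraph, as a graph in its own right)
      -- is recurrent
      (∀ H : G.Subgraph, H.coe.IsTree → ¬ Transient H.coe) := by
  obtain ⟨D, hD0, hsum, hneck⟩ := exists_profile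
  exact ⟨Vtx D, hypGraph D, hypGraph_connected D, ⟨11, neighbors_bound⟩,
    hypGraph_transient hD0 hsum,
    gromovHyperbolic_of_base (rootAt D 0) (by norm_num) hyperbolic_at_root,
    subtree_not_transient hneck⟩

end Paper
end
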